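/- arXiv:2403.06270 — 6 statements merged into one kernel-verified Lean document; each statement's English description precedes it below -/
import Mathlib

section
/- Let f_1,…,f_ℓ, g ∈ k⟨x_1,…,x_d⟩ be nonzero. Then the following are equivalent: (i) for every n ≥ 1 and every X ∈ M_n(k)^d, if det f_j(X) = 0 for all j = 1,…,ℓ then det g(X) = 0; (ii) there exist an index j ∈ {1,…,ℓ} and factorizations f_j = u·p_1⋯p_m and g = u'·q_1⋯q_s, where u, u' ∈ k are nonzero scalars and the p_i and q_t are irreducible elements of k⟨x_1,…,x_d⟩, such that for every i ∈ {1,…,m} there exists t ∈ {1,…,s} with p_i stably associated to q_t. -/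
/-- Evaluation of a noncommutative polynomial at a tuple of `n × n` matrices. -/
noncomputable def ncEval {k : Type*} [CommSemiring k] {d n : ℕ}
    (X : Fin d → Matrix (Fin n) (Fin n) k) (f : FreeAlgebra k (Fin d)) :
    Matrix (Fin n) (Fin n) k :=
  FreeAlgebra.lift k X f

/-- `f` and `g` are stably associated if `diag(f,1) = P ⬝ diag(g,1) ⬝ Q` for some
invertible `2 × 2` matrices `P, Q` over the free algebra. -/
def StablyAssociated {k : Type*} [CommSemiring k] {d : ℕ}
    (f g : FreeAlgebra k (Fin d)) : Prop :=
  ∃ P Q : Matrix (Fin 2) (Fin 2) (FreeAlgebra k (Fin d)),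
    IsUnit P ∧ IsUnit Q ∧
      Matrix.diagonal ![f, 1] = P * Matrix.diagonal ![g, 1] * Q

/-!
An irreducible polynomial `p` is homotopy equivalent to a linear matrix pencil `A₀ + ∑ x, Aₓ x`
whose coefficients form a stable representation of a Kronecker quiver, and this representation
determines `p` up to stable association. The value `p(X)` is singular exactly when
`A₀ ⊗ 1 + ∑ x, Aₓ ⊗ X x` is.

Start from a point at which none of the pencils attached to `p, q₁, …, q_s` is singular. There,
inverting the pencils turns the stable representations into simple modules over a free algebra, and
these modules are isomorphic only if the corresponding polynomials are stably associated. If `p` is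
not stably associated to any `q_t`, the density theorem yields an `r` acting as `1` on the module of
`p` and as `0` on those of the `q_t`. Composing a linearization of `1 - r` with the starting point
gives a larger point at which `p` is singular and all `q_t` are invertible.

Direct sums of points reduce several `f_j` to a single one. A nonsingular value of a nonzero
polynomial is found among weighted adjacency matrices of a cyclic quiver: on a cycle longer than
the polynomial, the path with a prescribed label is determined by its starting vertex.
-/

namespace DetNullstellensatz

open FreeAlgebra Matrix Module

section Coefficients

open Finset

variable {R X : Type*} [CommSemiring R]

/-- The coefficient of the word `w` in the noncommutative polynomial `f`. -/
noncomputable def coeff (f : FreeAlgebra R X) (w : List X) : R :=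
  (equivMonoidAlgebraFreeMonoid f).coeff (FreeMonoid.ofList w)

@[ext]
lemma coeff_ext {f g : FreeAlgebra R X} (h : ∀ w, coeff f w = coeff g w) : f = g := by
  apply (equivMonoidAlgebraFreeMonoid (R := R) (X := X)).injective
  ext w
  exact h (FreeMonoid.toList w)

@[simp]
lemma coeff_zero (w : List X) : coeff (0 : FreeAlgebra R X) w = 0 := by simp [coeff]

@[simp]
lemma coeff_add (f g : FreeAlgebra R X) (w : List X) :
    coeff (f + g) w = coeff f w + coeff g w := by simp [coeff]

@[simp]
lemma coeff_smul (a : R) (f : FreeAlgebra R X) (w : List X) :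
    coeff (a • f) w = a * coeff f w := by simp [coeff]

lemma coeff_sum {ι : Type*} (s : Finset ι) (f : ι → FreeAlgebra R X) (w : List X) :
    coeff (∑ i ∈ s, f i) w = ∑ i ∈ s, coeff (f i) w :=
  map_sum ({ toFun := (coeff · w), map_zero' := coeff_zero w, map_add' := (coeff_add · · w) } :
    FreeAlgebra R X →+ R) f s

@[simp]
lemma coeff_one_nil : coeff (1 : FreeAlgebra R X) [] = 1 := by
  simp [coeff, MonoidAlgebra.one_def]

lemma coeff_one_of_ne_nil {w : List X} (hw : w ≠ []) : coeff (1 : FreeAlgebra R X) w = 0 := by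
  classical
  rw [coeff, map_one, MonoidAlgebra.one_def, MonoidAlgebra.coeff_single,
    Finsupp.single_eq_of_ne]
  exact fun h => hw (congrArg FreeMonoid.toList h)

lemma coeff_mul (f g : FreeAlgebra R X) (w : List X) :
    coeff (f * g) w = ∑ i ∈ range (w.length + 1), coeff f (w.take i) * coeff g (w.drop i) := by
  classical
  let split (i : ℕ) : FreeMonoid X × FreeMonoid X :=
    (FreeMonoid.ofList (w.take i), FreeMonoid.ofList (w.drop i))
  have mem_split (p : FreeMonoid X × FreeMonoid X) :
      p ∈ (range (w.length + 1)).image split ↔ p.1 * p.2 = FreeMonoid.ofList w := by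
    simp only [mem_image, mem_range]
    constructor
    · rintro ⟨i, -, rfl⟩
      simp only [split, ← FreeMonoid.ofList_append, List.take_append_drop]
    · intro h
      have h' : p.1.toList ++ p.2.toList = w := congrArg FreeMonoid.toList h
      exact ⟨p.1.toList.length, by simp [← h'], by simp [split, ← h']⟩
  have split_injOn : Set.InjOn split (range (w.length + 1)) := by
    intro i hi j hj hij
    have := congrArg (fun p => p.1.toList.length) hij
    simp only [coe_range, Set.mem_Iio] at hi hj
    simp only [split, FreeMonoid.toList_ofList, List.length_take] at this
    omega
  rw [coeff, map_mul, MonoidAlgebra.coeff_mul_antidiag _ _ _ _ (mem_split _),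
    sum_image split_injOn]
  rfl

/-- The finite set of words occurring in a noncommutative polynomial. -/
noncomputable def words (f : FreeAlgebra R X) : Finset (List X) :=
  (equivMonoidAlgebraFreeMonoid f).coeff.support.map FreeMonoid.toList.toEmbedding

lemma mem_words {f : FreeAlgebra R X} {w : List X} : w ∈ words f ↔ coeff f w ≠ 0 := by
  simp only [words, mem_map_equiv, Finsupp.mem_support_iff, coeff]
  rfl

lemma lift_eq_sum_words {S : Type*} [Semiring S] [Algebra R S] (T : X → S)
    (f : FreeAlgebra R X) :
    FreeAlgebra.lift R T f = ∑ w ∈ words f, coeff f w • (w.map T).prod := by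
  have lift_eq : FreeAlgebra.lift R T =
      (MonoidAlgebra.lift R S (FreeMonoid X) (FreeMonoid.lift T)).comp
        (equivMonoidAlgebraFreeMonoid (R := R) (X := X)).toAlgHom := by
    ext x
    simp [equivMonoidAlgebraFreeMonoid]
  rw [lift_eq, words, sum_map]
  simp [MonoidAlgebra.lift_apply, Finsupp.sum, coeff, FreeMonoid.lift_apply]

/-- The right transduction of `f` by `w`: keep the words of `f` ending in `w`, and delete that
ending. -/
noncomputable def transduce (w : List X) (f : FreeAlgebra R X) : FreeAlgebra R X :=
  equivMonoidAlgebraFreeMonoid.symm <| MonoidAlgebra.ofCoeff <|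
    (equivMonoidAlgebraFreeMonoid f).coeff.comapDomain (· * FreeMonoid.ofList w)
      (mul_left_injective _).injOn

@[simp]
lemma coeff_transduce (w : List X) (f : FreeAlgebra R X) (v : List X) :
    coeff (transduce w f) v = coeff f (v ++ w) := by
  simp [coeff, transduce]

end Coefficients

section Size

open Finset

variable {R X : Type*} [CommSemiring R]

/-- The degree plus one, with value `0` at the zero polynomial. Unlike the degree, it makes
inequalities between degrees hold without separate treatment of `0`. -/
noncomputable def size (f : FreeAlgebra R X) : ℕ :=
  (words f).sup fun w => w.length + 1

lemma size_le_iff {f : FreeAlgebra R X} {n : ℕ} :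
    size f ≤ n ↔ ∀ w, n ≤ w.length → coeff f w = 0 := by
  simp only [size, Finset.sup_le_iff, mem_words, Nat.add_one_le_iff]
  exact forall_congr' fun w => by rw [← not_imp_not, not_lt, not_not]

lemma coeff_eq_zero_of_size_le {f : FreeAlgebra R X} {w : List X} (h : size f ≤ w.length) :
    coeff f w = 0 :=
  size_le_iff.1 le_rfl w h

lemma size_eq_zero {f : FreeAlgebra R X} : size f = 0 ↔ f = 0 := by
  rw [← Nat.le_zero, size_le_iff]
  exact ⟨fun h => coeff_ext fun w => by simp [h w], fun h => by simp [h]⟩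

lemma size_pos {f : FreeAlgebra R X} : 0 < size f ↔ f ≠ 0 := by
  rw [Nat.pos_iff_ne_zero, Ne, size_eq_zero]

lemma exists_coeff_ne_zero {f : FreeAlgebra R X} (hf : f ≠ 0) :
    ∃ w, coeff f w ≠ 0 ∧ size f = w.length + 1 := by
  by_contra! h
  have hlt : size f ≤ size f - 1 := size_le_iff.2 fun w hw => by
    by_contra hcoeff
    have := mt coeff_eq_zero_of_size_le hcoeff
    exact h w hcoeff (by omega)
  have := size_pos.2 hf
  omega

lemma coeff_mul_eq_zero_of_size_add_le {f g : FreeAlgebra R X} {w : List X}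
    (h : size f + size g ≤ w.length + 1) : coeff (f * g) w = 0 := by
  rw [coeff_mul]
  refine sum_eq_zero fun i hi => ?_
  rw [mem_range] at hi
  by_cases hf : size f ≤ i
  · rw [coeff_eq_zero_of_size_le (f := f) (by simp; omega), zero_mul]
  · rw [coeff_eq_zero_of_size_le (f := g) (by simp; omega), mul_zero]

lemma coeff_mul_append_of_size_eq {f g : FreeAlgebra R X} {u v : List X}
    (hu : size f = u.length + 1) (hv : size g = v.length + 1) :
    coeff (f * g) (u ++ v) = coeff f u * coeff g v := by
  rw [coeff_mul, sum_eq_single_of_mem u.length (by simp)]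
  · simp
  · intro i hi hne
    rw [mem_range, List.length_append] at hi
    rcases lt_or_gt_of_ne hne with h | h
    · rw [coeff_eq_zero_of_size_le (f := g) (by simp; omega), mul_zero]
    · rw [coeff_eq_zero_of_size_le (f := f) (by simp; omega), zero_mul]

lemma size_mul [NoZeroDivisors R] {f g : FreeAlgebra R X} (hf : f ≠ 0) (hg : g ≠ 0) :
    size (f * g) + 1 = size f + size g := by
  obtain ⟨u, hu, hsu⟩ := exists_coeff_ne_zero hf
  obtain ⟨v, hv, hsv⟩ := exists_coeff_ne_zero hg
  have hle : size (f * g) ≤ size f + size g - 1 :=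
    size_le_iff.2 fun w hw => coeff_mul_eq_zero_of_size_add_le (by omega)
  have hlt : ¬ size (f * g) ≤ (u ++ v).length := fun h =>
    mul_ne_zero hu hv (by rw [← coeff_mul_append_of_size_eq hsu hsv, coeff_eq_zero_of_size_le h])
  rw [List.length_append] at hlt
  omega

lemma size_transduce_le (w : List X) (f : FreeAlgebra R X) :
    size (transduce w f) ≤ size f - w.length :=
  size_le_iff.2 fun v hv => by
    rw [coeff_transduce, coeff_eq_zero_of_size_le]
    rw [List.length_append]
    omega

lemma coeff_mul_transduce {f g : FreeAlgebra R X} {v w : List X} (h : size f ≤ v.length + 1) :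
    coeff (f * transduce w g) v = coeff (f * g) (v ++ w) := by
  rw [coeff_mul, coeff_mul, List.length_append,
    add_right_comm, sum_range_add _ (v.length + 1)]
  have tail_eq_zero : ∀ i ∈ range w.length, coeff f ((v ++ w).take (v.length + 1 + i)) *
      coeff g ((v ++ w).drop (v.length + 1 + i)) = 0 := fun i hi => by
    rw [mem_range] at hi
    rw [coeff_eq_zero_of_size_le (f := f) (by simp; omega), zero_mul]
  rw [sum_eq_zero tail_eq_zero, add_zero]
  refine sum_congr rfl fun i hi => ?_
  rw [mem_range] at hi
  rw [coeff_transduce, List.take_append_of_le_length (by omega),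
    List.drop_append_of_le_length (by omega)]

lemma coeff_mul_transduce_of_size_add_le {f g : FreeAlgebra R X} {v w : List X}
    (h : size f + size g ≤ v.length + w.length + 1) :
    coeff (f * transduce w g) v = coeff (f * g) (v ++ w) := by
  rw [coeff_mul_eq_zero_of_size_add_le (f := f) (g := g) (by rwa [List.length_append])]
  by_cases hz : transduce w g = 0
  · rw [hz, mul_zero, coeff_zero]
  · have := size_pos.2 hz
    have := size_transduce_le w g
    exact coeff_mul_eq_zero_of_size_add_le (by omega)

end Size

section Factorization

open Finset

variable {k X : Type*} [Field k]

lemma eq_algebraMap_of_size_le_one {f : FreeAlgebra k X} (h : size f ≤ 1) :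
    f = algebraMap k _ (coeff f []) := by
  rw [Algebra.algebraMap_eq_smul_one]
  ext w
  rcases eq_or_ne w [] with rfl | hw
  · simp
  · rw [size_le_iff.1 h w (List.length_pos_iff.2 hw), coeff_smul, coeff_one_of_ne_nil hw, mul_zero]

lemma isUnit_iff_size_eq_one {f : FreeAlgebra k X} : IsUnit f ↔ size f = 1 := by
  constructor
  · rintro ⟨u, rfl⟩
    have hmul := size_mul u.ne_zero u⁻¹.ne_zero
    have hone : size (1 : FreeAlgebra k X) ≤ 1 :=
      size_le_iff.2 fun w hw => coeff_one_of_ne_nil (List.length_pos_iff.1 hw)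
    have := size_pos.2 u.ne_zero
    have := size_pos.2 u⁻¹.ne_zero
    rw [u.mul_inv] at hmul
    omega
  · intro h
    have hf := eq_algebraMap_of_size_le_one h.le
    have hcoeff : coeff f [] ≠ 0 := by
      intro h0
      rw [h0, map_zero] at hf
      exact size_pos.1 (by omega) hf
    rw [hf]
    exact (IsUnit.mk0 _ hcoeff).map (algebraMap k (FreeAlgebra k X))

theorem exists_irreducible_factorization (f : FreeAlgebra k X) (hf : f ≠ 0) :
    ∃ (u : k) (ps : List (FreeAlgebra k X)), u ≠ 0 ∧ (∀ p ∈ ps, Irreducible p) ∧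
      f = algebraMap k _ u * ps.prod := by
  induction hn : size f using Nat.strong_induction_on generalizing f with
  | _ n ih =>
    subst hn
    by_cases hunit : IsUnit f
    · have h := eq_algebraMap_of_size_le_one (isUnit_iff_size_eq_one.1 hunit).le
      refine ⟨coeff f [], [], fun h0 => hf ?_, by simp, by simpa using h⟩
      rw [h, h0, map_zero]
    by_cases hirr : Irreducible f
    · exact ⟨1, [f], one_ne_zero, by simpa using hirr, by simp⟩
    obtain ⟨a, b, rfl, ha, hb⟩ : ∃ a b, f = a * b ∧ ¬ IsUnit a ∧ ¬ IsUnit b := by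
      simpa [irreducible_iff, hunit] using hirr
    have ha0 := left_ne_zero_of_mul hf
    have hb0 := right_ne_zero_of_mul hf
    have := size_mul ha0 hb0
    have := size_pos.2 ha0
    have := size_pos.2 hb0
    rw [isUnit_iff_size_eq_one] at ha hb
    obtain ⟨u, ps, hu, hps, rfl⟩ := ih (size a) (by omega) a ha0 rfl
    obtain ⟨v, qs, hv, hqs, rfl⟩ := ih (size b) (by omega) b hb0 rfl
    refine ⟨u * v, ps ++ qs, mul_ne_zero hu hv, ?_, ?_⟩
    · simpa only [List.mem_append, or_imp, forall_and] using ⟨hps, hqs⟩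
    · rw [List.prod_append, map_mul, mul_assoc, mul_assoc, ← mul_assoc ps.prod,
        ← Algebra.commutes v ps.prod, mul_assoc]

-- Cohn's weak algorithm: a dependence forces one entry to be reducible modulo the others.
theorem exists_size_sum_mul_lt {n : Type*} [Fintype n] {c d : n → FreeAlgebra k X}
    (hcd : ∑ j, c j * d j = 1) :
    ∃ i, IsUnit (c i) ∨
      ∃ h : n → FreeAlgebra k X, IsUnit (h i) ∧ size (∑ j, c j * h j) < size (c i) := by
  obtain ⟨j₀, -, hj₀⟩ := exists_ne_zero_of_sum_ne_zero (hcd.trans_ne one_ne_zero)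
  obtain ⟨i, -, hmax⟩ := exists_max_image univ
    (fun j => toLex (size (c j * d j), size (c j))) ⟨j₀, mem_univ _⟩
  simp only [mem_univ, true_imp_iff, Prod.Lex.toLex_le_toLex] at hmax
  have hcdi : c i * d i ≠ 0 := by
    rw [← size_pos] at hj₀ ⊢
    have := hmax j₀
    omega
  have hdi := right_ne_zero_of_mul hcdi
  have hsize := size_mul (left_ne_zero_of_mul hcdi) hdi
  have hci := size_pos.2 (left_ne_zero_of_mul hcdi)
  refine ⟨i, or_iff_not_imp_left.2 fun hunit => ?_⟩
  rw [isUnit_iff_size_eq_one] at hunit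
  obtain ⟨w, hw, hsw⟩ := exists_coeff_ne_zero hdi
  refine ⟨fun j => transduce w (d j), ?_, ?_⟩
  · have hle := size_transduce_le w (d i)
    have hpos : 0 < size (transduce w (d i)) := size_pos.2 fun h0 => hw <| by
      rw [← List.nil_append w, ← coeff_transduce, h0, coeff_zero]
    have hone : size (transduce w (d i)) = 1 := by omega
    exact isUnit_iff_size_eq_one.2 hone
  · refine (size_le_iff.2 fun v hv => ?_).trans_lt (Nat.sub_one_lt_of_lt hci)
    have hvpos : 0 < v.length := by omega
    have hvw : v ++ w ≠ [] := List.append_ne_nil_of_left_ne_nil (List.length_pos_iff.1 hvpos) w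
    rw [← coeff_one_of_ne_nil hvw, ← hcd, coeff_sum, coeff_sum]
    refine sum_congr rfl fun j _ => ?_
    rcases eq_or_ne (c j * d j) 0 with h0 | h0
    · rcases mul_eq_zero.1 h0 with h | h
      · simp [h]
      · simp [h, show transduce w (0 : FreeAlgebra k X) = 0 from coeff_ext (by simp)]
    have := size_mul (left_ne_zero_of_mul h0) (right_ne_zero_of_mul h0)
    rcases hmax j with hlt | ⟨-, hle⟩
    · exact coeff_mul_transduce_of_size_add_le (by omega)
    · exact coeff_mul_transduce (by omega)

end Factorization

section Homotopy

variable {R : Type*} [Ring R] {m n l : Type*} [Fintype m] [Fintype n] [Fintype l]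
  {A : Matrix m m R} {B : Matrix n n R} {C : Matrix l l R}

/-- Regard a square matrix as a two-term complex. The pair `(a, b)` is then a chain map from `B`
to `A`, the pair `(a', b')` a chain map from `A` to `B`, and their composite on `A` is homotopic
to the identity. -/
def IsHomotopyRetraction [DecidableEq m] (A : Matrix m m R)
    (B : Matrix n n R) (a b : Matrix m n R) (a' b' : Matrix n m R) : Prop :=
  a * B = A * b ∧ a' * A = B * b' ∧ ∃ s, a * a' + A * s = 1 ∧ b * b' + s * A = 1

/-- Homotopy equivalence of square matrices, regarded as two-term complexes. Over a domain, two
nonzero `1 × 1` matrices are homotopy equivalent exactly when they are stably associated. -/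
def HomotopyEquivalent [DecidableEq m] [DecidableEq n] (A : Matrix m m R)
    (B : Matrix n n R) : Prop :=
  ∃ a b a' b', IsHomotopyRetraction A B a b a' b' ∧ IsHomotopyRetraction B A a' b' a b

namespace IsHomotopyRetraction

variable [DecidableEq m] {a b : Matrix m n R} {a' b' : Matrix n m R}

lemma trans [DecidableEq n] {c d : Matrix n l R} {c' d' : Matrix l n R}
    (h : IsHomotopyRetraction A B a b a' b')
    (h' : IsHomotopyRetraction B C c d c' d') :
    IsHomotopyRetraction A C (a * c) (b * d) (c' * a') (d' * b') := by
  obtain ⟨hab, hab', s, hs, hs'⟩ := h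
  obtain ⟨hcd, hcd', t, ht, ht'⟩ := h'
  refine ⟨?_, ?_, s + b * t * a', ?_, ?_⟩
  · rw [Matrix.mul_assoc, hcd, ← Matrix.mul_assoc, hab, Matrix.mul_assoc]
  · rw [Matrix.mul_assoc, hab', ← Matrix.mul_assoc, hcd', Matrix.mul_assoc]
  · calc a * c * (c' * a') + A * (s + b * t * a')
        = a * c * (c' * a') + (A * s + A * b * t * a') := by
          simp only [Matrix.mul_add, Matrix.mul_assoc]
      _ = a * (c * c' + B * t) * a' + A * s := by
          rw [← hab]; simp only [Matrix.mul_add, Matrix.add_mul, Matrix.mul_assoc]; abel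
      _ = 1 := by rw [ht, Matrix.mul_one, hs]
  · calc b * d * (d' * b') + (s + b * t * a') * A
        = b * d * (d' * b') + (s * A + b * t * (a' * A)) := by
          simp only [Matrix.add_mul, Matrix.mul_assoc]
      _ = b * (d * d' + t * B) * b' + s * A := by
          rw [hab']; simp only [Matrix.mul_add, Matrix.add_mul, Matrix.mul_assoc]; abel
      _ = 1 := by rw [ht', Matrix.mul_one, hs']

lemma isUnit [DecidableEq n] (h : IsHomotopyRetraction A B a b a' b') (hB : IsUnit B) :
    IsUnit A := by
  obtain ⟨hab, hab', s, hs, hs'⟩ := h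
  obtain ⟨B, rfl⟩ := hB
  refine isUnit_iff_exists.2 ⟨b * (↑B⁻¹ : Matrix n n R) * a' + s, ?_, ?_⟩
  · rw [Matrix.mul_add, ← Matrix.mul_assoc, ← Matrix.mul_assoc, ← hab, Matrix.mul_assoc a,
      Units.mul_inv, Matrix.mul_one, hs]
  · rw [Matrix.add_mul, Matrix.mul_assoc, hab', Matrix.mul_assoc, ← Matrix.mul_assoc _ _ b',
      Units.inv_mul, Matrix.one_mul, hs']

lemma map {S : Type*} [Ring S] (φ : R →+* S) (h : IsHomotopyRetraction A B a b a' b') :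
    IsHomotopyRetraction (A.map φ) (B.map φ) (a.map φ) (b.map φ) (a'.map φ) (b'.map φ) := by
  obtain ⟨hab, hab', s, hs, hs'⟩ := h
  have map_one : (1 : Matrix m m R).map φ = 1 := Matrix.map_one φ φ.map_zero φ.map_one
  refine ⟨?_, ?_, s.map φ, ?_, ?_⟩
  · rw [← Matrix.map_mul, hab, Matrix.map_mul]
  · rw [← Matrix.map_mul, hab', Matrix.map_mul]
  · rw [← Matrix.map_mul, ← Matrix.map_mul, ← Matrix.map_add φ φ.map_add, hs, map_one]
  · rw [← Matrix.map_mul, ← Matrix.map_mul, ← Matrix.map_add φ φ.map_add, hs', map_one]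

end IsHomotopyRetraction

variable [DecidableEq m] [DecidableEq n]

namespace HomotopyEquivalent

lemma refl (A : Matrix m m R) : HomotopyEquivalent A A :=
  ⟨1, 1, 1, 1, ⟨by simp, by simp, 0, by simp⟩, by simp, by simp, 0, by simp⟩

lemma symm (h : HomotopyEquivalent A B) : HomotopyEquivalent B A :=
  let ⟨a, b, a', b', hAB, hBA⟩ := h
  ⟨a', b', a, b, hBA, hAB⟩

lemma trans [DecidableEq l] (h : HomotopyEquivalent A B) (h' : HomotopyEquivalent B C) :
    HomotopyEquivalent A C :=
  let ⟨_, _, _, _, hAB, hBA⟩ := h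
  let ⟨_, _, _, _, hBC, hCB⟩ := h'
  ⟨_, _, _, _, hAB.trans hBC, hCB.trans hBA⟩

lemma isUnit_iff (h : HomotopyEquivalent A B) : IsUnit A ↔ IsUnit B :=
  let ⟨_, _, _, _, hAB, hBA⟩ := h
  ⟨hBA.isUnit, hAB.isUnit⟩

lemma map {S : Type*} [Ring S] (φ : R →+* S) (h : HomotopyEquivalent A B) :
    HomotopyEquivalent (A.map φ) (B.map φ) :=
  let ⟨_, _, _, _, hAB, hBA⟩ := h
  ⟨_, _, _, _, hAB.map φ, hBA.map φ⟩

end HomotopyEquivalent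

lemma homotopyEquivalent_mul_mul {P : Matrix m n R} {P' : Matrix n m R} {Q : Matrix n m R}
    {Q' : Matrix m n R} (hP : P * P' = 1) (hP' : P' * P = 1) (hQ : Q * Q' = 1) (hQ' : Q' * Q = 1)
    (B : Matrix n n R) : HomotopyEquivalent (P * B * Q) B :=
  ⟨P, Q', P', Q,
    ⟨by simp [Matrix.mul_assoc, hQ], by simp [← Matrix.mul_assoc, hP'], 0,
      by simp [hP], by simp [hQ']⟩,
    ⟨by simp [← Matrix.mul_assoc, hP'], by simp [Matrix.mul_assoc, hQ], 0,
      by simp [hP'], by simp [hQ]⟩⟩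

lemma homotopyEquivalent_submatrix (e : m ≃ n) (B : Matrix n n R) :
    HomotopyEquivalent (B.submatrix e e) B := by
  let P : Matrix m n R := (1 : Matrix n n R).submatrix e (Equiv.refl n)
  let P' : Matrix n m R := (1 : Matrix n n R).submatrix (Equiv.refl n) e
  have hPP' : P * P' = 1 := by
    rw [submatrix_mul_equiv, Matrix.mul_one, submatrix_one_equiv]
  have hP'P : P' * P = 1 := by
    rw [submatrix_mul_equiv, Matrix.mul_one, submatrix_one_equiv]
  have hPBP' : P * B * P' = B.submatrix e e := by
    have hPB : P * B.submatrix (Equiv.refl n) (Equiv.refl n) = B.submatrix e (Equiv.refl n) := by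
      rw [submatrix_mul_equiv, Matrix.one_mul]
    rw [← Matrix.mul_one B, ← submatrix_mul_equiv B 1 e (Equiv.refl n) e, ← hPB]
    simp [P']
  rw [← hPBP']
  exact homotopyEquivalent_mul_mul hPP' hP'P hP'P hPP' B

lemma homotopyEquivalent_one_add_mul_comm (A : Matrix m n R) (B : Matrix n m R) :
    HomotopyEquivalent (1 + A * B) (1 + B * A) :=
  ⟨A, A, -B, -B,
    ⟨by simp [Matrix.mul_add, Matrix.add_mul, Matrix.mul_assoc, add_comm],
      by simp [Matrix.mul_add, Matrix.add_mul, Matrix.mul_assoc, add_comm], 1, by simp, by simp⟩,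
    ⟨by simp [Matrix.mul_add, Matrix.add_mul, Matrix.mul_assoc, add_comm],
      by simp [Matrix.mul_add, Matrix.add_mul, Matrix.mul_assoc, add_comm], 1, by simp, by simp⟩⟩

lemma homotopyEquivalent_fromBlocks (A : Matrix m m R) (B : Matrix m n R) (C : Matrix n m R)
    (D : (Matrix n n R)ˣ) :
    HomotopyEquivalent (A - B * (↑D⁻¹ : Matrix n n R) * C) (fromBlocks A B C D) := by
  have hD : (D : Matrix n n R) * (↑D⁻¹ : Matrix n n R) = 1 := D.mul_inv
  have hD' : (↑D⁻¹ : Matrix n n R) * (D : Matrix n n R) = 1 := D.inv_mul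
  generalize (↑D⁻¹ : Matrix n n R) = D' at *
  have hDC : (D : Matrix n n R) * (D' * C) = C := by rw [← Matrix.mul_assoc, hD, Matrix.one_mul]
  refine ⟨fromCols 1 (-(B * D')), fromCols 1 0, fromRows 1 0, fromRows 1 (-(D' * C)),
    ⟨?_, ?_, 0, ?_, ?_⟩, ⟨?_, ?_, fromBlocks 0 0 0 D', ?_, ?_⟩⟩
  case refine_8 =>
    rw [fromRows_mul_fromCols, fromBlocks_multiply, fromBlocks_add]
    simp [hD']
  all_goals
    simp [fromCols_mul_fromBlocks, fromBlocks_mul_fromRows, fromCols_mul_fromRows, mul_fromCols,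
      fromRows_mul, fromBlocks_multiply, fromBlocks_add, Matrix.mul_assoc, sub_eq_add_neg,
      hD, hD', hDC]

lemma homotopyEquivalent_fromBlocks_zero₂₁_left (A : Matrix m m R) (B : Matrix m n R)
    {D : Matrix n n R} (hD : IsUnit D) : HomotopyEquivalent (fromBlocks A B 0 D) A := by
  obtain ⟨D, rfl⟩ := hD
  simpa using (homotopyEquivalent_fromBlocks A B 0 D).symm

lemma homotopyEquivalent_fromBlocks_zero₂₁_right {A : Matrix m m R} (B : Matrix m n R)
    (D : Matrix n n R) (hA : IsUnit A) : HomotopyEquivalent (fromBlocks A B 0 D) D := by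
  obtain ⟨A, rfl⟩ := hA
  have := (homotopyEquivalent_submatrix (Equiv.sumComm m n) (fromBlocks D 0 B A)).trans
    (homotopyEquivalent_fromBlocks D 0 B A).symm
  simpa using this

end Homotopy

section OneByOne

variable {R : Type*} [Ring R]

/-- An element of a ring as a `1 × 1` matrix. -/
def oneByOne : R ≃+* Matrix (Fin 1) (Fin 1) R := uniqueRingEquiv.symm

lemma oneByOne_apply (p : R) (i j : Fin 1) : oneByOne p i j = p := rfl

lemma map_oneByOne {S : Type*} [Ring S] (φ : R →+* S) (p : R) :
    (oneByOne p).map φ = oneByOne (φ p) := rfl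

lemma isUnit_oneByOne {p : R} : IsUnit (oneByOne p) ↔ IsUnit p :=
  MulEquiv.isUnit_map oneByOne

lemma homotopyEquivalent_diagonal_one (p : R) :
    HomotopyEquivalent (diagonal ![p, 1]) (oneByOne p) := by
  let e : Fin 2 ≃ Fin 1 ⊕ Fin 1 := (finSumFinEquiv (m := 1) (n := 1)).symm
  have diagonal_eq : diagonal ![p, 1] = (fromBlocks (oneByOne p) 0 0 1).submatrix e e := by
    ext i j
    fin_cases i <;> fin_cases j <;> rfl
  rw [diagonal_eq]
  exact (homotopyEquivalent_submatrix e _).trans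
    (homotopyEquivalent_fromBlocks_zero₂₁_left _ _ isUnit_one)

end OneByOne

section StableAssociation

variable {R : Type*} [CommRing R] {d : ℕ} {p q : FreeAlgebra R (Fin d)}

lemma _root_.StablyAssociated.homotopyEquivalent (h : StablyAssociated p q) :
    HomotopyEquivalent (oneByOne p) (oneByOne q) := by
  obtain ⟨_, _, ⟨P, rfl⟩, ⟨Q, rfl⟩, h⟩ := h
  have diagonal_equiv :=
    homotopyEquivalent_mul_mul P.mul_inv P.inv_mul Q.mul_inv Q.inv_mul (diagonal ![q, 1])
  rw [← h] at diagonal_equiv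
  exact (homotopyEquivalent_diagonal_one p).symm.trans
    (diagonal_equiv.trans (homotopyEquivalent_diagonal_one q))

lemma stablyAssociated_of_homotopyEquivalent [NoZeroDivisors R] (hp : p ≠ 0) (hq : q ≠ 0)
    (h : HomotopyEquivalent (oneByOne p) (oneByOne q)) : StablyAssociated p q := by
  obtain ⟨a, b, a', b', ⟨hab, hab', s, hs, hs'⟩, ⟨-, -, t, ht, ht'⟩⟩ := h
  obtain ⟨a, rfl⟩ := oneByOne.surjective a
  obtain ⟨b, rfl⟩ := oneByOne.surjective b
  obtain ⟨a', rfl⟩ := oneByOne.surjective a'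
  obtain ⟨b', rfl⟩ := oneByOne.surjective b'
  obtain ⟨s, rfl⟩ := oneByOne.surjective s
  obtain ⟨t, rfl⟩ := oneByOne.surjective t
  simp only [← map_mul, ← map_add, ← map_one oneByOne, oneByOne.injective.eq_iff]
    at hab hab' hs hs' ht ht'
  have hbs : b' * s = t * a' := mul_left_cancel₀ hq <| by
    calc q * (b' * s) = a' * (p * s) := by rw [← mul_assoc, ← hab', mul_assoc]
      _ = (1 - a' * a) * a' := by rw [eq_sub_of_add_eq' hs]; noncomm_ring
      _ = q * (t * a') := by rw [← eq_sub_of_add_eq' ht, mul_assoc]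
  have hsa : s * a = b * t := mul_left_cancel₀ hp <| by
    calc p * (s * a) = (1 - a * a') * a := by rw [← mul_assoc, eq_sub_of_add_eq' hs]
      _ = a * (q * t) := by rw [eq_sub_of_add_eq' ht]; noncomm_ring
      _ = p * (b * t) := by rw [← mul_assoc, hab, mul_assoc]
  have hP : IsUnit !![a, p; -t, b'] := by
    refine isUnit_iff_exists.2 ⟨!![a', -q; s, b], ?_, ?_⟩
    · rw [mul_fin_two, one_fin_two, hs, mul_neg, hab, neg_mul, hbs, neg_mul_neg, add_comm (t * q),
        ht', neg_add_cancel, neg_add_cancel]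
    · rw [mul_fin_two, one_fin_two, neg_mul_neg, ht, hab', neg_mul, add_neg_cancel, hsa, mul_neg,
        add_neg_cancel, add_comm (s * p), hs']
  have hdiag (x : FreeAlgebra R (Fin d)) : diagonal ![x, 1] = !![x, 0; 0, 1] := by
    ext i j
    fin_cases i <;> fin_cases j <;> rfl
  have hQ : IsUnit !![b', -1; 1 - b * b', b] :=
    isUnit_iff_exists.2 ⟨!![b, 1; b' * b - 1, b'], by
      constructor <;> rw [mul_fin_two, one_fin_two] <;> congr! <;> noncomm_ring⟩
  refine ⟨_, _, hP, hQ, ?_⟩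
  rw [hdiag, hdiag, mul_fin_two, mul_fin_two]
  congr! 4
  · simp only [mul_zero, add_zero, mul_one, zero_add, hab]
    noncomm_ring
  · simp [hab]
  · calc (0 : FreeAlgebra R (Fin d))
      _ = (1 - (b' * b + t * q)) * b' := by rw [ht', sub_self, zero_mul]
      _ = _ := by noncomm_ring
  · simpa [add_comm] using ht'.symm

end StableAssociation

section RankOne

variable {R n : Type*} [Ring R] [Fintype n] [DecidableEq n]

lemma isUnit_one_add_vecMulVec {u v : n → R} :
    IsUnit (1 + vecMulVec u v) ↔ IsUnit (1 + v ⬝ᵥ u) := by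
  rw [vecMulVec_eq (Fin 1), (homotopyEquivalent_one_add_mul_comm _ _).isUnit_iff, ← isUnit_oneByOne]
  refine iff_of_eq (congrArg IsUnit ?_)
  ext i j
  simp [oneByOne_apply, Matrix.mul_apply, dotProduct, Subsingleton.elim i j]

lemma isUnit_updateRow_one {i : n} {c : n → R} (hc : IsUnit (c i)) :
    IsUnit ((1 : Matrix n n R).updateRow i c) := by
  have h : (1 : Matrix n n R).updateRow i c
      = 1 + vecMulVec (Pi.single i 1) (c - Pi.single i 1) := by
    ext a b
    rcases eq_or_ne a i with rfl | ha
    · simp [vecMulVec_apply, Matrix.one_apply, Pi.single_apply, eq_comm]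
    · simp [vecMulVec_apply, ha]
  rw [h, isUnit_one_add_vecMulVec]
  simpa using hc

lemma isUnit_updateCol_one {i : n} {h : n → R} (hi : IsUnit (h i)) :
    IsUnit ((1 : Matrix n n R).updateCol i h) := by
  have h' : (1 : Matrix n n R).updateCol i h
      = 1 + vecMulVec (h - Pi.single i 1) (Pi.single i 1) := by
    ext a b
    rcases eq_or_ne b i with rfl | hb
    · simp [vecMulVec_apply, Matrix.one_apply, Pi.single_apply]
    · simp [vecMulVec_apply, hb]
  rw [h', isUnit_one_add_vecMulVec]
  simpa using hi

end RankOne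

section Hermite

open Finset

variable {k X n : Type*} [Field k] [Fintype n] [DecidableEq n]

theorem exists_units_vecMul_eq_single {c d : n → FreeAlgebra k X} (hcd : c ⬝ᵥ d = 1) :
    ∃ (i : n) (U : (Matrix n n (FreeAlgebra k X))ˣ),
      c ᵥ* (U : Matrix n n (FreeAlgebra k X)) = Pi.single i 1 := by
  induction hs : ∑ j, size (c j) using Nat.strong_induction_on generalizing c d with
  | _ s ih =>
    subst hs
    obtain ⟨i, hunit | ⟨h, hi, hlt⟩⟩ := exists_size_sum_mul_lt hcd
    · obtain ⟨V, hV⟩ := isUnit_updateRow_one hunit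
      refine ⟨i, V⁻¹, ?_⟩
      have hc : c = Pi.single i 1 ᵥ* (V : Matrix n n (FreeAlgebra k X)) := by
        rw [hV, single_one_vecMul]
        exact updateRow_self.symm
      rw [hc, vecMul_vecMul, V.mul_inv, vecMul_one]
    · obtain ⟨V, hV⟩ := isUnit_updateCol_one hi
      have hcV : c ᵥ* (V : Matrix n n (FreeAlgebra k X)) =
          Function.update c i (∑ j, c j * h j) := by
        rw [hV, vecMul_updateCol, vecMul_one]
        rfl
      have hdot : (c ᵥ* (V : Matrix n n (FreeAlgebra k X))) ⬝ᵥ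
          ((↑V⁻¹ : Matrix n n (FreeAlgebra k X)) *ᵥ d) = 1 := by
        rw [← dotProduct_mulVec, mulVec_mulVec, V.mul_inv, one_mulVec, hcd]
      have hsum : ∑ j, size ((c ᵥ* (V : Matrix n n (FreeAlgebra k X))) j) < ∑ j, size (c j) := by
        refine sum_lt_sum (fun j _ => ?_) ⟨i, mem_univ _, ?_⟩
        · rw [hcV, Function.update_apply]
          split_ifs with hj
          · exact hj ▸ hlt.le
          · rfl
        · rwa [hcV, Function.update_self]
      obtain ⟨i', U, hU⟩ := ih _ hsum hdot rfl
      exact ⟨i', V * U, by rw [Units.val_mul, ← vecMul_vecMul, hU]⟩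

end Hermite

section SplitKernel

variable {R : Type*} [Ring R] {l m n r s : Type*} [Fintype l] [Fintype n] [Fintype r]
  [DecidableEq l] [DecidableEq n] [DecidableEq r]

/-- The columns of `K` form a basis of the kernel of the split surjection `C`, where matrices act
on column vectors from the left. -/
def IsSplitKernel (C : Matrix l n R) (K : Matrix n r R) : Prop :=
  C * K = 0 ∧ ∃ (E : Matrix n l R) (Λ : Matrix r n R), C * E = 1 ∧ Λ * K = 1 ∧ E * C + K * Λ = 1

lemma isSplitKernel_one (e : l ⊕ r ≃ n) :
    IsSplitKernel ((1 : Matrix n n R).submatrix (e ∘ Sum.inl) id)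
      ((1 : Matrix n n R).submatrix id (e ∘ Sum.inr)) := by
  refine ⟨?_, (1 : Matrix n n R).submatrix id (e ∘ Sum.inl),
    (1 : Matrix n n R).submatrix (e ∘ Sum.inr) id, ?_, ?_, ?_⟩
  · rw [← submatrix_mul _ _ _ _ _ Function.bijective_id]
    ext i j
    simp
  · rw [← submatrix_mul _ _ _ _ _ Function.bijective_id, Matrix.mul_one,
      submatrix_one _ (e.injective.comp Sum.inl_injective)]
  · rw [← submatrix_mul _ _ _ _ _ Function.bijective_id, Matrix.mul_one,
      submatrix_one _ (e.injective.comp Sum.inr_injective)]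
  · ext i j
    obtain ⟨i, rfl⟩ := e.surjective i
    obtain ⟨j, rfl⟩ := e.surjective j
    cases i <;> cases j <;> simp [Matrix.mul_apply, Matrix.one_apply]

namespace IsSplitKernel

variable {C : Matrix l n R} {K : Matrix n r R}

lemma mul_units (h : IsSplitKernel C K) (U : (Matrix n n R)ˣ) :
    IsSplitKernel (C * (↑U⁻¹ : Matrix n n R)) ((U : Matrix n n R) * K) := by
  obtain ⟨hCK, E, Λ, hCE, hΛK, hsum⟩ := h
  refine ⟨?_, (U : Matrix n n R) * E, Λ * (↑U⁻¹ : Matrix n n R), ?_, ?_, ?_⟩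
  · rw [Matrix.mul_assoc, ← Matrix.mul_assoc _ _ K, U.inv_mul, Matrix.one_mul, hCK]
  · rw [Matrix.mul_assoc, ← Matrix.mul_assoc _ _ E, U.inv_mul, Matrix.one_mul, hCE]
  · rw [Matrix.mul_assoc, ← Matrix.mul_assoc _ _ K, U.inv_mul, Matrix.one_mul, hΛK]
  · calc (U : Matrix n n R) * E * (C * (↑U⁻¹ : Matrix n n R)) +
          (U : Matrix n n R) * K * (Λ * (↑U⁻¹ : Matrix n n R))
        = (U : Matrix n n R) * (E * C + K * Λ) * (↑U⁻¹ : Matrix n n R) := by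
          simp only [Matrix.mul_add, Matrix.add_mul, Matrix.mul_assoc]
      _ = 1 := by rw [hsum, Matrix.mul_one, U.mul_inv]

lemma of_submatrix_equiv [Fintype m] [DecidableEq m] {e : m ≃ l}
    (h : IsSplitKernel (C.submatrix e id) K) : IsSplitKernel C K := by
  obtain ⟨hCK, E, Λ, hCE, hΛK, hsum⟩ := h
  refine ⟨?_, E.submatrix id e.symm, Λ, ?_, hΛK, ?_⟩
  · ext i j
    simpa [Matrix.mul_apply] using congrFun₂ hCK (e.symm i) j
  · ext i j
    simpa [Matrix.mul_apply, Matrix.one_apply] using congrFun₂ hCE (e.symm i) (e.symm j)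
  · rw [← hsum]
    congr 1
    ext i j
    simp only [Matrix.mul_apply, submatrix_apply, id]
    exact Fintype.sum_equiv e.symm _ _ fun x => by rw [e.apply_symm_apply]

lemma fromRows [Fintype m] [DecidableEq m] [Fintype s] [DecidableEq s] {C' : Matrix m n R}
    {K' : Matrix r s R} (h : IsSplitKernel C K) (h' : IsSplitKernel (C' * K) K') :
    IsSplitKernel (fromRows C C') (K * K') := by
  obtain ⟨hCK, E, Λ, hCE, hΛK, hsum⟩ := h
  obtain ⟨hCK', E', Λ', hCE', hΛK', hsum'⟩ := h'
  refine ⟨?_, fromCols (E - K * E' * C' * E) (K * E'), Λ' * Λ, ?_, ?_, ?_⟩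
  · rw [fromRows_mul, ← Matrix.mul_assoc, hCK, Matrix.zero_mul, ← Matrix.mul_assoc, hCK',
      fromRows_zero]
  · rw [fromRows_mul_fromCols, ← fromBlocks_one]
    congr 1
    · simp only [Matrix.mul_sub, ← Matrix.mul_assoc, hCK, hCE, Matrix.zero_mul, sub_zero]
    · rw [← Matrix.mul_assoc, hCK, Matrix.zero_mul]
    · simp only [Matrix.mul_sub, ← Matrix.mul_assoc, hCE', Matrix.one_mul, sub_self]
    · rw [← Matrix.mul_assoc, hCE']
  · rw [Matrix.mul_assoc, ← Matrix.mul_assoc Λ, hΛK, Matrix.one_mul, hΛK']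
  · rw [fromCols_mul_fromRows]
    calc (E - K * E' * C' * E) * C + K * E' * C' + K * K' * (Λ' * Λ)
        = E * C + K * E' * C' * (1 - E * C) + K * (K' * Λ') * Λ := by
          simp only [Matrix.sub_mul, Matrix.mul_sub, Matrix.mul_one, Matrix.mul_assoc]
          abel
      _ = E * C + K * (E' * (C' * K) + K' * Λ') * Λ := by
          rw [← eq_sub_of_add_eq' hsum]
          simp only [Matrix.mul_add, Matrix.add_mul, Matrix.mul_assoc, add_assoc]
      _ = 1 := by rw [hsum', Matrix.mul_one, hsum]

lemma exists_mul_eq (h : IsSplitKernel C K) {Y : Matrix n m R} (hY : C * Y = 0) :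
    ∃ V : Matrix r m R, K * V = Y := by
  obtain ⟨-, E, Λ, -, -, hsum⟩ := h
  exact ⟨Λ * Y, by rw [← Matrix.mul_assoc, eq_sub_of_add_eq' hsum, Matrix.sub_mul,
    Matrix.mul_assoc, hY, Matrix.mul_zero, Matrix.one_mul, sub_zero]⟩

end IsSplitKernel

end SplitKernel

section KernelRank

variable {k X n : Type*} [Field k] [Fintype n] [DecidableEq n]

lemma exists_isSplitKernel_row {c : Matrix (Fin 1) n (FreeAlgebra k X)}
    {e : Matrix n (Fin 1) (FreeAlgebra k X)} (hce : c * e = 1) :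
    ∃ (b : ℕ) (K : Matrix n (Fin b) (FreeAlgebra k X)),
      Fintype.card n = 1 + b ∧ IsSplitKernel c K := by
  have hdot : c 0 ⬝ᵥ (fun j => e j 0) = 1 := congrFun₂ hce 0 0
  obtain ⟨i, U, hU⟩ := exists_units_vecMul_eq_single hdot
  obtain ⟨b, hb⟩ := Nat.exists_eq_add_of_le (Fintype.card_pos_iff.2 ⟨i⟩)
  let f₀ : Fin 1 ⊕ Fin b ≃ n := finSumFinEquiv.trans (Fintype.equivFinOfCardEq hb).symm
  let f := f₀.trans (Equiv.swap (f₀ (.inl 0)) i)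
  have hcU : c * (U : Matrix n n (FreeAlgebra k X)) =
      (1 : Matrix n n (FreeAlgebra k X)).submatrix (f ∘ Sum.inl) id := by
    ext1 a j
    obtain rfl := Subsingleton.elim 0 a
    have hfi : f (.inl 0) = i := by simp [f]
    rw [submatrix_apply, Function.comp_apply, hfi, id, one_eq_pi_single, ← hU]
    rfl
  have := (isSplitKernel_one (R := FreeAlgebra k X) f).mul_units U
  rw [← hcU, Matrix.mul_assoc, U.mul_inv, Matrix.mul_one] at this
  exact ⟨b, _, hb, this⟩

lemma exists_isSplitKernel_fin {a : ℕ} {C : Matrix (Fin a) n (FreeAlgebra k X)}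
    {E : Matrix n (Fin a) (FreeAlgebra k X)} (hCE : C * E = 1) :
    ∃ (b : ℕ) (K : Matrix n (Fin b) (FreeAlgebra k X)),
      Fintype.card n = a + b ∧ IsSplitKernel C K := by
  induction a with
  | zero =>
    let f : Fin 0 ⊕ Fin (Fintype.card n) ≃ n :=
      (Equiv.emptySum _ _).trans (Fintype.equivFin n).symm
    rw [show C = (1 : Matrix n n (FreeAlgebra k X)).submatrix (f ∘ Sum.inl) id from
      Subsingleton.elim _ _]
    exact ⟨_, _, (zero_add _).symm, isSplitKernel_one f⟩
  | succ a ih =>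
    let C' := C.submatrix (finSumFinEquiv (m := a) (n := 1)) id
    let E' := E.submatrix id (finSumFinEquiv (m := a) (n := 1))
    have hCE' : fromRows C'.toRows₁ C'.toRows₂ * fromCols E'.toCols₁ E'.toCols₂ = 1 := by
      rw [fromRows_toRows, fromCols_toCols, ← submatrix_mul _ _ _ _ _ Function.bijective_id, hCE,
        submatrix_one_equiv]
    rw [fromRows_mul_fromCols, ← fromBlocks_one, fromBlocks_inj] at hCE'
    obtain ⟨h₁₁, h₁₂, -, h₂₂⟩ := hCE'
    obtain ⟨b, K, hb, hK⟩ := ih h₁₁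
    obtain ⟨V, hV⟩ := hK.exists_mul_eq h₁₂
    have hrow : C'.toRows₂ * K * V = 1 := by rw [Matrix.mul_assoc, hV, h₂₂]
    obtain ⟨b', K', hb', hK'⟩ := exists_isSplitKernel_row hrow
    have hKK' := hK.fromRows hK'
    rw [fromRows_toRows] at hKK'
    rw [Fintype.card_fin] at hb'
    exact ⟨b', K * K', by omega, hKK'.of_submatrix_equiv⟩

theorem exists_isSplitKernel {m : Type*} [Fintype m] [DecidableEq m]
    {C : Matrix m n (FreeAlgebra k X)} {E : Matrix n m (FreeAlgebra k X)} (hCE : C * E = 1) :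
    ∃ (b : ℕ) (K : Matrix n (Fin b) (FreeAlgebra k X)),
      Fintype.card n = Fintype.card m + b ∧ IsSplitKernel C K := by
  let e := (Fintype.equivFin m).symm
  have hCE' : C.submatrix e id * E.submatrix id e = 1 := by
    rw [← submatrix_mul _ _ _ _ _ Function.bijective_id, hCE, submatrix_one_equiv]
  obtain ⟨b, K, hb, hK⟩ := exists_isSplitKernel_fin hCE'
  exact ⟨b, K, hb, hK.of_submatrix_equiv⟩

instance : IsDedekindFiniteMonoid (Matrix n n (FreeAlgebra k X)) := by
  refine ⟨fun {C E} hCE => ?_⟩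
  obtain ⟨b, K, hb, hK⟩ := exists_isSplitKernel hCE
  obtain rfl : b = 0 := by omega
  obtain ⟨V, hV⟩ := hK.exists_mul_eq (Y := 1 - E * C) (by
    rw [Matrix.mul_sub, ← Matrix.mul_assoc, hCE, Matrix.mul_one, Matrix.one_mul, sub_self])
  rw [← sub_eq_zero, ← neg_sub, ← hV]
  ext1 i j
  simp

end KernelRank

section Atom

variable {k X n : Type*} [Field k] [Fintype n] [DecidableEq n]

-- A factorization `C * D` of a matrix equivalent to `p` induces one of `p`: the kernel of
-- `fromCols a' C` has rank one, and the top entry of its basis vector divides `p`.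
theorem isUnit_or_isUnit_of_homotopyEquivalent_oneByOne {p : FreeAlgebra k X} (hp : Irreducible p)
    {C D : Matrix n n (FreeAlgebra k X)} (h : HomotopyEquivalent (oneByOne p) (C * D)) :
    IsUnit C ∨ IsUnit D := by
  obtain ⟨a, b, a', b', ⟨hab, hab', -⟩, -, -, t, ht, ht'⟩ := h
  have hsplit : fromCols a' C * fromRows a (D * t) = 1 := by
    rw [fromCols_mul_fromRows, ← Matrix.mul_assoc, ht]
  obtain ⟨r, K, hr, hK⟩ := exists_isSplitKernel hsplit
  obtain rfl : r = 1 := by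
    rw [Fintype.card_sum, Fintype.card_fin] at hr
    omega
  obtain ⟨v, hv⟩ := hK.exists_mul_eq (Y := fromRows (oneByOne p) (-(D * b'))) (by
    rw [fromCols_mul_fromRows, Matrix.mul_neg, ← Matrix.mul_assoc, hab', add_neg_cancel])
  obtain ⟨hK0, -, Λ, -, hΛK, -⟩ := hK
  obtain ⟨u, hu⟩ := oneByOne.surjective K.toRows₁
  obtain ⟨v, rfl⟩ := oneByOne.surjective v
  have hp_eq : p = u * v := by
    rw [← fromRows_toRows K, ← hu, fromRows_mul, fromRows_inj.eq_iff] at hv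
    exact oneByOne.injective (by rw [map_mul, hv.1])
  rcases hp.isUnit_or_isUnit hp_eq with hunit | hunit
  · left
    obtain ⟨u', hu', -⟩ := isUnit_iff_exists.1 hunit
    rw [← fromRows_toRows K, ← hu, fromCols_mul_fromRows] at hK0
    have ha' : a' = C * -(K.toRows₂ * oneByOne u') := by
      calc a' = a' * oneByOne u * oneByOne u' := by
            rw [Matrix.mul_assoc, ← map_mul, hu', map_one, Matrix.mul_one]
        _ = C * -(K.toRows₂ * oneByOne u') := by
            rw [eq_neg_of_add_eq_zero_left hK0, Matrix.mul_neg, Matrix.neg_mul, Matrix.mul_assoc]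
    refine IsUnit.of_mul_eq_one (-(K.toRows₂ * oneByOne u') * a + D * t) ?_
    rw [Matrix.mul_add, ← Matrix.mul_assoc, ← ha', ← Matrix.mul_assoc, ht]
  · right
    obtain ⟨v', -, hv'⟩ := isUnit_iff_exists.1 hunit
    have hb : b = oneByOne v' * Λ * fromRows (a * C) (D * t * C - 1) * D := by
      calc b = oneByOne v' * (Λ * (K * oneByOne v)) * b := by
            rw [← Matrix.mul_assoc Λ, hΛK, Matrix.one_mul, ← map_mul, hv', map_one, Matrix.one_mul]
        _ = oneByOne v' * Λ * fromRows (oneByOne p * b) (-(D * (b' * b))) := by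
            rw [hv, ← Matrix.mul_assoc, Matrix.mul_assoc, fromRows_mul, Matrix.neg_mul,
              Matrix.mul_assoc D]
        _ = oneByOne v' * Λ * fromRows (a * C) (D * t * C - 1) * D := by
            rw [← hab, eq_sub_of_add_eq ht', Matrix.mul_assoc _ _ D, fromRows_mul]
            simp only [Matrix.mul_sub, Matrix.sub_mul, Matrix.mul_assoc, Matrix.mul_one,
              Matrix.one_mul, neg_sub]
    refine IsUnit.of_mul_eq_one_right
      (b' * (oneByOne v' * Λ * fromRows (a * C) (D * t * C - 1)) + t * C) ?_
    rw [Matrix.add_mul, Matrix.mul_assoc b', ← hb, Matrix.mul_assoc, ht']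

end Atom

section Transduction

variable {R X : Type*} [CommSemiring R]

lemma coeff_algebraMap_of_ne_nil (a : R) {w : List X} (hw : w ≠ []) :
    coeff (algebraMap R (FreeAlgebra R X) a) w = 0 := by
  rw [Algebra.algebraMap_eq_smul_one, coeff_smul, coeff_one_of_ne_nil hw, mul_zero]

lemma size_algebraMap_le (a : R) : size (algebraMap R (FreeAlgebra R X) a) ≤ 1 :=
  size_le_iff.2 fun _ hw => coeff_algebraMap_of_ne_nil a (List.length_pos_iff.1 hw)

lemma coeff_mul_ι (f : FreeAlgebra R X) (x : X) (w : List X) :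
    coeff (f * ι R x) w = (equivMonoidAlgebraFreeMonoid f *
      MonoidAlgebra.single (FreeMonoid.of x) 1).coeff (FreeMonoid.ofList w) := by
  rw [coeff, map_mul]
  simp [equivMonoidAlgebraFreeMonoid]

lemma coeff_mul_ι_nil (f : FreeAlgebra R X) (x : X) : coeff (f * ι R x) [] = 0 := by
  rw [coeff_mul_ι, MonoidAlgebra.coeff_mul_single_of_forall_mul_ne]
  exact fun v h => List.append_ne_nil_of_right_ne_nil v.toList (List.cons_ne_nil x [])
    (congrArg FreeMonoid.toList h)

lemma coeff_mul_ι_concat [DecidableEq X] (f : FreeAlgebra R X) (x y : X) (w : List X) :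
    coeff (f * ι R x) (w ++ [y]) = if x = y then coeff f w else 0 := by
  rw [coeff_mul_ι, FreeMonoid.ofList_append]
  split_ifs with h
  · rw [h, ← mul_one (coeff f w)]
    exact MonoidAlgebra.coeff_mul_single_mul ..
  · refine MonoidAlgebra.coeff_mul_single_of_forall_mul_ne _ _ fun v hv => h ?_
    have hv' : v.toList ++ [x] = w ++ [y] := congrArg FreeMonoid.toList hv
    exact (List.append_singleton_inj.1 hv').2

lemma size_ι_le (x : X) : size (ι R x) ≤ 2 := by
  classical
  refine size_le_iff.2 fun w hw => ?_
  rcases List.eq_nil_or_concat w with rfl | ⟨v, y, rfl⟩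
  · simp at hw
  · have hv : v ≠ [] := by
      rintro rfl
      simp at hw
    rw [← one_mul (ι R x), List.concat_eq_append, coeff_mul_ι_concat, coeff_one_of_ne_nil hv,
      ite_self]

lemma eq_algebraMap_add_sum_transduce_mul_ι [Fintype X] (f : FreeAlgebra R X) :
    f = algebraMap R _ (coeff f []) + ∑ x, transduce [x] f * ι R x := by
  classical
  ext w
  rcases List.eq_nil_or_concat w with rfl | ⟨w, y, rfl⟩
  · simp [coeff_sum, coeff_mul_ι_nil, Algebra.algebraMap_eq_smul_one]
  · simp [coeff_sum, coeff_mul_ι_concat, coeff_algebraMap_of_ne_nil]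

end Transduction

section Pencil

open Finset

variable {R X l m n o : Type*} [CommSemiring R] [Fintype X]

/-- The linear matrix pencil `A₀ + ∑ x, Aₓ x`, whose constant term `A₀` is indexed by `none`. -/
noncomputable def pencil (A : Option X → Matrix m n R) : Matrix m n (FreeAlgebra R X) :=
  ∑ y, (A y).map (· • y.elim 1 (ι R))

lemma pencil_apply (A : Option X → Matrix m n R) (i : m) (j : n) :
    pencil A i j = ∑ y, A y i j • y.elim 1 (ι R) := by
  simp [pencil, Matrix.sum_apply]

lemma map_pencil {S : Type*} [Semiring S] [Algebra R S] (T : X → S) (A : Option X → Matrix m n R) :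
    (pencil A).map (lift R T) = ∑ y, (A y).map (· • y.elim 1 T) := by
  ext i j
  simp only [Matrix.map_apply, pencil_apply, Matrix.sum_apply, map_sum, map_smul]
  exact sum_congr rfl fun y _ => by cases y <;> simp

lemma pencil_mul_mul [Fintype m] [Fintype n] (P : Matrix l m R) (A : Option X → Matrix m n R)
    (Q : Matrix n o R) :
    pencil (fun y => P * A y * Q) =
      (P.map (algebraMap R _) : Matrix l m (FreeAlgebra R X)) * pencil A *
        (Q.map (algebraMap R _) : Matrix n o (FreeAlgebra R X)) := by
  rw [pencil, pencil, Matrix.mul_sum, Matrix.sum_mul]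
  refine sum_congr rfl fun y _ => ?_
  ext1 i j
  simp only [Matrix.mul_apply, Matrix.map_apply, sum_mul, sum_smul, Algebra.algebraMap_eq_smul_one,
    smul_mul_assoc, mul_smul_comm, one_mul, mul_one, smul_sum, smul_smul]
  exact sum_congr rfl fun _ _ => sum_congr rfl fun _ _ =>
    congrArg (· • y.elim 1 (ι R)) (by ring)

lemma pencil_fromBlocks (A : Option X → Matrix l n R) (B : Option X → Matrix l o R)
    (C : Option X → Matrix m n R) (D : Option X → Matrix m o R) :
    pencil (fun y => fromBlocks (A y) (B y) (C y) (D y)) =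
      fromBlocks (pencil A) (pencil B) (pencil C) (pencil D) := by
  ext1 i j
  cases i <;> cases j <;> simp [pencil_apply]

lemma pencil_zero : pencil (0 : Option X → Matrix m n R) = 0 := by
  ext1 i j
  simp [pencil_apply]

end Pencil

section Linearization

variable {k X : Type*} [Field k] [Fintype X]

lemma exists_eq_pencil {m n : Type*} {M : Matrix m n (FreeAlgebra k X)}
    (hM : ∀ i j, size (M i j) ≤ 2) : ∃ A : Option X → Matrix m n k, M = pencil A := by
  refine ⟨fun y => of fun i j => coeff (M i j) y.toList, ?_⟩
  ext1 i j
  have h (x : X) : transduce [x] (M i j) = algebraMap k _ (coeff (M i j) [x]) := by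
    have hsize : size (transduce [x] (M i j)) ≤ 1 := by
      have := size_transduce_le [x] (M i j)
      have := hM i j
      rw [List.length_singleton] at *
      omega
    rw [eq_algebraMap_of_size_le_one hsize, coeff_transduce, List.nil_append]
  rw [pencil_apply, Fintype.sum_option]
  conv_lhs => rw [eq_algebraMap_add_sum_transduce_mul_ι (M i j)]
  simp [h, Algebra.algebraMap_eq_smul_one]

lemma exists_homotopyEquivalent_pencil_of_size_le (s : ℕ) {n : ℕ}
    {M : Matrix (Fin n) (Fin n) (FreeAlgebra k X)} (hM : ∀ i j, size (M i j) ≤ s + 2) :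
    ∃ (N : ℕ) (A : Option X → Matrix (Fin N) (Fin N) k), HomotopyEquivalent M (pencil A) := by
  classical
  induction s generalizing n with
  | zero =>
    obtain ⟨A, rfl⟩ := exists_eq_pencil hM
    exact ⟨n, A, .refl _⟩
  | succ s ih =>
    let M₀ := M.map fun f => algebraMap k (FreeAlgebra k X) (coeff f [])
    let B : Matrix (Fin n) (Fin n × X) (FreeAlgebra k X) := of fun i q => transduce [q.2] (M i q.1)
    let C : Matrix (Fin n × X) (Fin n) (FreeAlgebra k X) := 
      of fun q j => if q.1 = j then ι k q.2 else 0
    let D : (Matrix (Fin n × X) (Fin n × X) (FreeAlgebra k X))ˣ := -1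
    have hMC : M = M₀ - B * (↑D⁻¹ : Matrix (Fin n × X) (Fin n × X) (FreeAlgebra k X)) * C := by
      ext1 i j
      conv_lhs => rw [eq_algebraMap_add_sum_transduce_mul_ι (M i j)]
      simp [M₀, B, C, D, Matrix.mul_apply, Fintype.sum_prod_type]
    let e := Fintype.equivFin (Fin n ⊕ Fin n × X)
    have hsize (i j) : size (fromBlocks M₀ B C D i j) ≤ s + 2 := by
      rcases i with i | ⟨i, x⟩ <;> rcases j with j | ⟨j, y⟩
      · exact (size_algebraMap_le _).trans (by omega)
      · have hle := size_transduce_le [y] (M i j)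
        rw [List.length_singleton] at hle
        exact hle.trans (Nat.sub_le_of_le_add (hM i j))
      · simp only [fromBlocks_apply₂₁, C, of_apply]
        split_ifs
        · exact (size_ι_le x).trans (by omega)
        · simp [size_eq_zero.2]
      · have hentry : fromBlocks M₀ B C D (.inr (i, x)) (.inr (j, y)) =
            algebraMap k _ ((-1 : Matrix (Fin n × X) (Fin n × X) k) (i, x) (j, y)) := by
          simp [D, one_apply, apply_ite]
        exact hentry ▸ (size_algebraMap_le _).trans (by omega)
    obtain ⟨N, A, hA⟩ := ih (M := (fromBlocks M₀ B C D).submatrix e.symm e.symm)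
      fun i j => hsize _ _
    refine ⟨N, A, .trans ?_ ((homotopyEquivalent_submatrix _ _).symm.trans hA)⟩
    rw [hMC]
    exact homotopyEquivalent_fromBlocks M₀ B C D

end Linearization

section AdaptedBases

variable {k E : Type*} [Field k] [AddCommGroup E] [Module k E] [FiniteDimensional k E]

lemma exists_basis_inl_mem {u v : ℕ} (hE : finrank k E = u + v) {U : Submodule k E}
    (hU : finrank k U = u) : ∃ b : Basis (Fin u ⊕ Fin v) k E, ∀ i, b (.inl i) ∈ U := by
  have hquot : finrank k (E ⧸ U) = v := by
    have := U.finrank_quotient_add_finrank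
    omega
  exact ⟨(finBasisOfFinrankEq k U hU).sumQuot (finBasisOfFinrankEq k _ hquot), by simp⟩

lemma exists_basis_repr_inr_eq_zero {u v : ℕ} (hE : finrank k E = u + v) {W : Submodule k E}
    (hW : finrank k W ≤ u) :
    ∃ b : Basis (Fin u ⊕ Fin v) k E, ∀ x ∈ W, ∀ j, b.repr x (.inr j) = 0 := by
  obtain ⟨t, rfl⟩ := Nat.exists_eq_add_of_le hW
  have hquot : finrank k (E ⧸ W) = t + v := by
    have := W.finrank_quotient_add_finrank
    omega
  let e : Fin (finrank k W) ⊕ Fin (t + v) ≃ Fin (finrank k W + t) ⊕ Fin v :=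
    ((Equiv.sumCongr (.refl _) finSumFinEquiv.symm).trans (Equiv.sumAssoc ..).symm).trans
      (Equiv.sumCongr finSumFinEquiv (.refl _))
  refine ⟨((finBasis k W).sumQuot (finBasisOfFinrankEq k _ hquot)).reindex e, fun x hx j => ?_⟩
  rw [Basis.repr_reindex_apply]
  exact Basis.sumQuot_repr_inr_of_mem _ _ x hx _

end AdaptedBases

/-- Stability of a representation of the Kronecker quiver: every proper nonzero subspace of `E` is
sent by the maps `A y` jointly to a subspace of larger dimension. -/
def IsStable {k Y E F : Type*} [Field k] [AddCommGroup E] [Module k E] [AddCommGroup F] [Module k F]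
    (A : Y → E →ₗ[k] F) : Prop :=
  ∀ U : Submodule k E, finrank k (⨆ y, U.map (A y) : Submodule k F) ≤ finrank k U → U = ⊥ ∨ U = ⊤

section StableLinearization

variable {k X : Type*} [Field k] [Fintype X]

lemma exists_homotopyEquivalent_pencil (p : FreeAlgebra k X) :
    ∃ (N : ℕ) (A : Option X → Matrix (Fin N) (Fin N) k),
      HomotopyEquivalent (oneByOne p) (pencil A) :=
  exists_homotopyEquivalent_pencil_of_size_le (size p) fun _ _ => Nat.le_add_right (size p) 2

lemma map_algebraMap_mul_eq_one {R S m n : Type*} [CommSemiring R] [Semiring S] [Algebra R S]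
    [Fintype n] [DecidableEq m] {P : Matrix m n R} {P' : Matrix n m R} (h : P * P' = 1) :
    (P.map (algebraMap R S) : Matrix m n S) * P'.map (algebraMap R S) = 1 := by
  rw [← Matrix.map_mul, h, Matrix.map_one _ (map_zero _) (map_one _)]

lemma homotopyEquivalent_pencil_mul_mul {m n : Type*} [Fintype m] [DecidableEq m] [Fintype n]
    [DecidableEq n] {P : Matrix n m k} {P' : Matrix m n k} {Q : Matrix m n k} {Q' : Matrix n m k}
    (hP : P * P' = 1) (hP' : P' * P = 1) (hQ : Q * Q' = 1) (hQ' : Q' * Q = 1)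
    (A : Option X → Matrix m m k) :
    HomotopyEquivalent (pencil fun y => P * A y * Q) (pencil A) := by
  rw [pencil_mul_mul]
  exact homotopyEquivalent_mul_mul (map_algebraMap_mul_eq_one hP) (map_algebraMap_mul_eq_one hP')
    (map_algebraMap_mul_eq_one hQ) (map_algebraMap_mul_eq_one hQ') (pencil A)

lemma homotopyEquivalent_pencil_toMatrix {m n : Type*} [Fintype m] [DecidableEq m] [Fintype n]
    [DecidableEq n] (A : Option X → Matrix m m k) (b c : Basis n k (m → k)) :
    HomotopyEquivalent (pencil fun y => LinearMap.toMatrix b c (toLin' (A y))) (pencil A) := by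
  let s := Pi.basisFun k m
  have hA (y) : LinearMap.toMatrix b c (toLin' (A y)) = c.toMatrix s * A y * s.toMatrix b := by
    rw [← basis_toMatrix_mul_linearMap_toMatrix_mul_basis_toMatrix b s c s]
    exact congr_arg (c.toMatrix s * · * s.toMatrix b) (LinearMap.toMatrix'_toLin' (A y))
  simp only [hA]
  exact homotopyEquivalent_pencil_mul_mul (c.toMatrix_mul_toMatrix_flip s)
    (s.toMatrix_mul_toMatrix_flip c) (s.toMatrix_mul_toMatrix_flip b)
    (b.toMatrix_mul_toMatrix_flip s) A

lemma exists_homotopyEquivalent_pencil_fromBlocks {n u v : ℕ}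
    (A : Option X → Matrix (Fin n) (Fin n) k) {U : Submodule k (Fin n → k)} (hn : n = u + v)
    (hU : finrank k U = u)
    (hA : finrank k (⨆ y, U.map (toLin' (A y)) : Submodule k (Fin n → k)) ≤ u) :
    ∃ (A' : Option X → Matrix (Fin u) (Fin u) k) (B : Option X → Matrix (Fin u) (Fin v) k)
      (D : Option X → Matrix (Fin v) (Fin v) k),
      HomotopyEquivalent (pencil A) (fromBlocks (pencil A') (pencil B) 0 (pencil D)) := by
  rw [← finrank_fin_fun k (n := n)] at hn
  obtain ⟨b, hb⟩ := exists_basis_inl_mem hn hU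
  obtain ⟨c, hc⟩ := exists_basis_repr_inr_eq_zero hn hA
  let M y := LinearMap.toMatrix b c (toLin' (A y))
  have hM (y) : (M y).toBlocks₂₁ = 0 := by
    ext i j
    simp only [M, toBlocks₂₁, of_apply, LinearMap.toMatrix_apply, Matrix.zero_apply]
    exact hc _ (Submodule.mem_iSup_of_mem y (Submodule.mem_map_of_mem (hb j))) i
  refine ⟨fun y => (M y).toBlocks₁₁, fun y => (M y).toBlocks₁₂, fun y => (M y).toBlocks₂₂, ?_⟩
  rw [← pencil_zero, ← pencil_fromBlocks]
  convert (homotopyEquivalent_pencil_toMatrix A b c).symm using 3 with y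
  rw [Pi.zero_apply, ← hM y]
  exact fromBlocks_toBlocks (M y)

lemma homotopyEquivalent_or_of_fromBlocks_zero₂₁ {m n : Type*} [Fintype m] [DecidableEq m]
    [Fintype n] [DecidableEq n] {X : Type*} {p : FreeAlgebra k X} (hp : Irreducible p)
    {A : Matrix m m (FreeAlgebra k X)} {B : Matrix m n (FreeAlgebra k X)}
    {D : Matrix n n (FreeAlgebra k X)}
    (h : HomotopyEquivalent (oneByOne p) (fromBlocks A B 0 D)) :
    HomotopyEquivalent (oneByOne p) A ∨ HomotopyEquivalent (oneByOne p) D := by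
  have hfac : fromBlocks A B 0 D = fromBlocks 1 0 0 D * fromBlocks A B 0 1 := by
    simp [fromBlocks_multiply]
  rcases isUnit_or_isUnit_of_homotopyEquivalent_oneByOne hp (hfac ▸ h) with hunit | hunit
  · rw [(homotopyEquivalent_fromBlocks_zero₂₁_right 0 D isUnit_one).isUnit_iff] at hunit
    exact .inl (h.trans (homotopyEquivalent_fromBlocks_zero₂₁_left A B hunit))
  · rw [(homotopyEquivalent_fromBlocks_zero₂₁_left A B isUnit_one).isUnit_iff] at hunit
    exact .inr (h.trans (homotopyEquivalent_fromBlocks_zero₂₁_right B D hunit))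

theorem exists_isStable_homotopyEquivalent_pencil {p : FreeAlgebra k X} (hp : Irreducible p) :
    ∃ (n : ℕ) (A : Option X → Matrix (Fin n) (Fin n) k),
      IsStable (fun y => toLin' (A y)) ∧ HomotopyEquivalent (oneByOne p) (pencil A) := by
  classical
  let n := Nat.find (exists_homotopyEquivalent_pencil p)
  obtain ⟨A, hA⟩ := Nat.find_spec (exists_homotopyEquivalent_pencil p)
  have hmin {m : ℕ} (hm : m < n) (B : Option X → Matrix (Fin m) (Fin m) k) :
      ¬ HomotopyEquivalent (oneByOne p) (pencil B) := fun h =>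
    Nat.find_min (exists_homotopyEquivalent_pencil p) hm ⟨B, h⟩
  refine ⟨n, A, fun U hU => ?_, hA⟩
  by_contra! hne
  have hpos : 0 < finrank k U := Submodule.one_le_finrank_iff.2 hne.1
  have hlt := Submodule.finrank_lt hne.2
  rw [finrank_fin_fun] at hlt
  obtain ⟨v, hv⟩ := Nat.exists_eq_add_of_le hlt.le
  obtain ⟨A', B, D, hblocks⟩ := exists_homotopyEquivalent_pencil_fromBlocks A hv rfl hU
  rcases homotopyEquivalent_or_of_fromBlocks_zero₂₁ hp (hA.trans hblocks) with h | h
  · exact hmin hlt A' h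
  · exact hmin (by omega) D h

end StableLinearization

section Density

open Finset

variable {R τ : Type*} [Ring R] {M : τ → Type*}
  [∀ t, AddCommGroup (M t)] [∀ t, Module R (M t)]

lemma single_comp_proj_comm [Finite τ] [DecidableEq τ] {t₀ : τ}
    (hto : ∀ t ≠ t₀, ∀ φ : M t₀ →ₗ[R] M t, φ = 0) (hfrom : ∀ t ≠ t₀, ∀ φ : M t →ₗ[R] M t₀, φ = 0)
    (φ : End R (∀ t, M t)) :
    φ ∘ₗ .single R M t₀ ∘ₗ .proj t₀ = .single R M t₀ ∘ₗ .proj t₀ ∘ₗ φ := by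
  ext t x s
  by_cases ht : t = t₀ <;> by_cases hs : s = t₀
  · subst hs ht
    simp
  · subst ht
    simpa [Pi.single_eq_of_ne hs] using
      congr($(hto s hs (.proj s ∘ₗ φ ∘ₗ .single R M t)) x)
  · subst hs
    simpa [Pi.single_eq_of_ne (Ne.symm ht)] using
      congr($(hfrom t ht (.proj s ∘ₗ φ ∘ₗ .single R M t)) x).symm
  · simp [Pi.single_eq_of_ne hs, Pi.single_eq_of_ne (Ne.symm ht)]

theorem exists_smul_eq_self_and_smul_eq_zero [Finite τ] [∀ t, IsSimpleModule R (M t)] {t₀ : τ}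
    (hne : ∀ t ≠ t₀, IsEmpty (M t₀ ≃ₗ[R] M t)) (s : ∀ t, Finset (M t)) :
    ∃ r : R, (∀ x ∈ s t₀, r • x = x) ∧ ∀ t ≠ t₀, ∀ x ∈ s t, r • x = 0 := by
  classical
  have hto (t) (ht : t ≠ t₀) (φ : M t₀ →ₗ[R] M t) : φ = 0 :=
    φ.bijective_or_eq_zero.resolve_left fun h => (hne t ht).false (.ofBijective φ h)
  have hfrom (t) (ht : t ≠ t₀) (φ : M t →ₗ[R] M t₀) : φ = 0 :=
    φ.bijective_or_eq_zero.resolve_left fun h => (hne t ht).false (LinearEquiv.ofBijective φ h).symm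
  let e : End (End R (∀ t, M t)) (∀ t, M t) :=
    { toFun := fun m => Pi.single t₀ (m t₀)
      map_add' := fun m m' => Pi.single_add t₀ (m t₀) (m' t₀)
      map_smul' := fun φ m => congr($(single_comp_proj_comm hto hfrom φ) m).symm }
  have := Fintype.ofFinite τ
  obtain ⟨r, hdens⟩ :=
    jacobson_density e (univ.biUnion fun t => (s t).image (Pi.single t : M t → ∀ t, M t))
  have hr (t) (x) (hx : x ∈ s t) : (Pi.single t₀ (Pi.single t x t₀) : ∀ t, M t) t = r • x := by
    rw [← congr_arg (r • ·) (Pi.single_eq_same (M := M) t x)]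
    exact congr_fun (hdens _ (mem_biUnion.2 ⟨t, mem_univ t, Finset.mem_image_of_mem _ hx⟩)) t
  refine ⟨r, fun x hx => ?_, fun t ht x hx => ?_⟩
  · simpa using (hr t₀ x hx).symm
  · simpa [Pi.single_eq_of_ne ht] using (hr t x hx).symm

end Density

/-- The space `V` regarded as a module over the free algebra, the generator `y` acting as `T y`. -/
def TupleModule {k Y V : Type*} [CommRing k] [AddCommGroup V] [Module k V] (_T : Y → End k V) :
    Type _ := V

namespace TupleModule

section CommRing

variable {k Y V W : Type*} [CommRing k] [AddCommGroup V] [Module k V] [AddCommGroup W] [Module k W]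

noncomputable instance (T : Y → End k V) : AddCommGroup (TupleModule T) :=
  inferInstanceAs (AddCommGroup V)

noncomputable instance (T : Y → End k V) : Module k (TupleModule T) :=
  inferInstanceAs (Module k V)

noncomputable instance (T : Y → End k V) : Module (FreeAlgebra k Y) (TupleModule T) :=
  .compHom V (FreeAlgebra.lift k T).toRingHom

/-- The identity map between `V` and the module structure put on it. -/
def equiv (T : Y → End k V) : V ≃ₗ[k] TupleModule T :=
  .refl k V

lemma smul_equiv (T : Y → End k V) (r : FreeAlgebra k Y) (v : V) :
    r • equiv T v = equiv T (FreeAlgebra.lift k T r v) :=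
  rfl

lemma ι_smul_equiv (T : Y → End k V) (y : Y) (v : V) :
    FreeAlgebra.ι k y • equiv T v = equiv T (T y v) := by
  rw [smul_equiv, FreeAlgebra.lift_ι_apply]

instance (T : Y → End k V) : IsScalarTower k (FreeAlgebra k Y) (TupleModule T) where
  smul_assoc c r v := by
    obtain ⟨v, rfl⟩ := (equiv T).surjective v
    rw [smul_equiv, smul_equiv, map_smul, LinearMap.smul_apply, map_smul]

lemma isSimpleModule [Nontrivial V] {T : Y → End k V}
    (h : ∀ U : Submodule k V, (∀ y, ∀ u ∈ U, T y u ∈ U) → U = ⊥ ∨ U = ⊤) :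
    IsSimpleModule (FreeAlgebra k Y) (TupleModule T) := by
  have : Nontrivial (TupleModule T) := inferInstanceAs (Nontrivial V)
  refine isSimpleModule_iff _ _ |>.2 ⟨fun W => ?_⟩
  rw [← Submodule.restrictScalars_eq_bot_iff k, ← Submodule.restrictScalars_eq_top_iff k]
  exact h (W.restrictScalars k) fun y u hu =>
    (ι_smul_equiv T y u) ▸ W.smul_mem (FreeAlgebra.ι k y) hu

lemma exists_intertwining {T : Y → End k V} {S : Y → End k W}
    (Φ : TupleModule T ≃ₗ[FreeAlgebra k Y] TupleModule S) :
    ∃ φ : V ≃ₗ[k] W, ∀ y v, φ (T y v) = S y (φ v) := by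
  refine ⟨equiv T ≪≫ₗ Φ.restrictScalars k ≪≫ₗ (equiv S).symm, fun y v => ?_⟩
  apply (equiv S).injective
  rw [← ι_smul_equiv]
  simp only [LinearEquiv.trans_apply, LinearEquiv.apply_symm_apply,
    LinearEquiv.restrictScalars_apply]
  rw [← ι_smul_equiv, map_smul]

end CommRing

theorem exists_lift_eq_one_and_eq_zero {k Y τ : Type*} [Field k] [Finite τ] {V : τ → Type*}
    [∀ t, AddCommGroup (V t)] [∀ t, Module k (V t)] [∀ t, FiniteDimensional k (V t)]
    (T : ∀ t, Y → End k (V t)) [∀ t, IsSimpleModule (FreeAlgebra k Y) (TupleModule (T t))] {t₀ : τ}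
    (hne : ∀ t ≠ t₀, IsEmpty (TupleModule (T t₀) ≃ₗ[FreeAlgebra k Y] TupleModule (T t))) :
    ∃ r : FreeAlgebra k Y, FreeAlgebra.lift k (T t₀) r = 1 ∧
      ∀ t ≠ t₀, FreeAlgebra.lift k (T t) r = 0 := by
  classical
  have := Fintype.ofFinite τ
  obtain ⟨r, hone, hzero⟩ := exists_smul_eq_self_and_smul_eq_zero
    (M := fun t => TupleModule (T t)) hne
    fun t => Finset.univ.image (equiv (T t) ∘ finBasis k (V t))
  refine ⟨r, (finBasis k (V t₀)).ext fun i => ?_, fun t ht => (finBasis k (V t)).ext fun i => ?_⟩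
  · exact hone _ (Finset.mem_image_of_mem _ (Finset.mem_univ i))
  · exact hzero t ht _ (Finset.mem_image_of_mem _ (Finset.mem_univ i))

end TupleModule

/-- The value of the Kronecker representation `A` at the tuple of matrices `X`: the map
`∑ o, X o ⊗ A o`, where `k^N ⊗ E` is encoded as `N → E`. -/
def ampliation {k κ N E F : Type*} [CommRing k] [Fintype κ] [Fintype N] [AddCommGroup E]
    [Module k E] [AddCommGroup F] [Module k F] (A : κ → E →ₗ[k] F) (X : κ → Matrix N N k) :
    (N → E) →ₗ[k] (N → F) :=
  .pi fun a => ∑ o, ∑ b, X o a b • A o ∘ₗ .proj b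

section Ampliation

variable {k κ N E F : Type*} [CommRing k] [Fintype κ] [Fintype N] [AddCommGroup E] [Module k E]
  [AddCommGroup F] [Module k F]

lemma ampliation_apply (A : κ → E →ₗ[k] F) (X : κ → Matrix N N k) (v : N → E) (a : N) :
    ampliation A X v a = ∑ o, ∑ b, X o a b • A o (v b) := by
  simp [ampliation]

lemma apply_eq_zero_of_injective_ampliation {A : κ → E →ₗ[k] F} {X : κ → Matrix N N k}
    [Nonempty N] (hX : Function.Injective (ampliation A X)) {x : E} (hx : ∀ o, A o x = 0) :
    x = 0 := by
  have : ampliation A X (fun _ => x) = 0 := by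
    ext a
    simp [ampliation_apply, hx]
  exact congr_fun ((map_eq_zero_iff _ hX).1 this) (Classical.arbitrary N)

lemma iSup_range_eq_top_of_surjective_ampliation {A : κ → E →ₗ[k] F} {X : κ → Matrix N N k}
    [Nonempty N] (hX : Function.Surjective (ampliation A X)) :
    ⨆ o, LinearMap.range (A o) = ⊤ := by
  refine eq_top_iff.2 fun w _ => ?_
  obtain ⟨v, hv⟩ := hX fun _ => w
  rw [← congr_fun hv (Classical.arbitrary N), ampliation_apply]
  exact Submodule.sum_mem _ fun o _ => Submodule.sum_mem _ fun b _ => Submodule.smul_mem _ _ <|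
    Submodule.mem_iSup_of_mem o (LinearMap.mem_range_self _ _)

lemma bijective_ampliation_toLin'_comm {m n : Type*} [Fintype m] [DecidableEq m] [Fintype n]
    [DecidableEq n] (A : κ → Matrix m m k) (B : κ → Matrix n n k) :
    Function.Bijective (ampliation (fun o => toLin' (A o)) B) ↔
      Function.Bijective (ampliation (fun o => toLin' (B o)) A) := by
  have hswap : ⇑(ampliation (fun o => toLin' (A o)) B) ∘ Function.swap =
      Function.swap ∘ ampliation (fun o => toLin' (B o)) A := by
    funext v j i
    simp only [Function.comp_apply, Function.swap, ampliation_apply, Finset.sum_apply,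
      Pi.smul_apply, toLin'_apply, mulVec, dotProduct, smul_eq_mul, Finset.mul_sum]
    refine Finset.sum_congr rfl fun o _ => ?_
    rw [Finset.sum_comm]
    exact Finset.sum_congr rfl fun _ _ => Finset.sum_congr rfl fun _ _ => mul_left_comm ..
  rw [← Function.Bijective.of_comp_iff _ Function.swap_bijective, hswap,
    Function.Bijective.of_comp_iff' Function.swap_bijective]

end Ampliation

section NormalizedMaps

variable {k κ N E F : Type*} [CommRing k] [Fintype κ] [Fintype N] [DecidableEq N] [AddCommGroup E]
  [Module k E] [AddCommGroup F] [Module k F] {A : κ → E →ₗ[k] F} {X : κ → Matrix N N k}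

/-- The endomorphisms `(∑ o, X o ⊗ A o)⁻¹ ∘ (E_{ab} ⊗ A o)` of `k^N ⊗ E`, indexed by the triples
`(o, a, b)`, where `E_{ab}` is a matrix unit. -/
noncomputable def normalizedMaps (hX : Function.Bijective (ampliation A X)) (y : κ × N × N) :
    End k (N → E) :=
  (LinearEquiv.ofBijective _ hX).symm ∘ₗ .single k (fun _ => F) y.2.1 ∘ₗ A y.1 ∘ₗ .proj y.2.2

lemma ampliation_normalizedMaps (hX : Function.Bijective (ampliation A X)) (o : κ) (a b : N)
    (v : N → E) :
    ampliation A X (normalizedMaps hX (o, a, b) v) = Pi.single a (A o (v b)) :=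
  (LinearEquiv.ofBijective _ hX).apply_symm_apply _

end NormalizedMaps

section Simple

lemma finrank_pi_univ {k N E : Type*} [Field k] [Fintype N] [AddCommGroup E] [Module k E]
    [FiniteDimensional k E] (W : Submodule k E) :
    finrank k (Submodule.pi Set.univ fun _ : N => W) = Fintype.card N * finrank k W := by
  let e : (Submodule.pi Set.univ fun _ : N => W) ≃ₗ[k] (N → W) :=
    { toFun := fun v a => ⟨v.1 a, v.2 a trivial⟩
      map_add' := fun _ _ => rfl
      map_smul' := fun _ _ => rfl
      invFun := fun w => ⟨fun a => w a, fun a _ => (w a).2⟩ }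
  rw [e.finrank_eq, finrank_pi_fintype, Finset.sum_const, Finset.card_univ, smul_eq_mul]

variable {k κ N E F : Type*} [Field k] [Fintype κ] [Fintype N] [DecidableEq N] [AddCommGroup E]
  [Module k E] [AddCommGroup F] [Module k F] {A : κ → E →ₗ[k] F} {X : κ → Matrix N N k}

lemma pi_iSup_map_le_map_ampliation (hX : Function.Bijective (ampliation A X))
    {U : Submodule k (N → E)} (hU : ∀ y, ∀ u ∈ U, normalizedMaps hX y u ∈ U) :
    (Submodule.pi Set.univ fun _ => ⨆ o, (⨆ b, U.map (.proj b)).map (A o)) ≤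
      U.map (ampliation A X) := by
  have hsingle (a : N) :
      ⨆ o, (⨆ b, U.map (.proj b)).map (A o) ≤
        (U.map (ampliation A X)).comap (.single k (fun _ => F) a) := by
    refine iSup_le fun o => Submodule.map_le_iff_le_comap.2 <|
      iSup_le fun b => Submodule.map_le_iff_le_comap.2 fun u hu => ?_
    exact ⟨_, hU (o, a, b) u hu, ampliation_normalizedMaps hX o a b u⟩
  intro w hw
  rw [← Finset.univ_sum_single w]
  exact Submodule.sum_mem _ fun a _ => hsingle a (hw a trivial)

theorem isSimpleModule_normalizedMaps [Nonempty N] [Nontrivial E] [FiniteDimensional k E]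
    [FiniteDimensional k F] (hA : IsStable A) (hX : Function.Bijective (ampliation A X)) :
    IsSimpleModule (FreeAlgebra k (κ × N × N)) (TupleModule (normalizedMaps hX)) := by
  refine TupleModule.isSimpleModule fun U hU => ?_
  let U₁ : Submodule k E := ⨆ b : N, U.map (.proj b)
  let U₂ : Submodule k F := ⨆ o, U₁.map (A o)
  have hle₁ : U ≤ Submodule.pi Set.univ fun _ => U₁ := fun u hu b _ =>
    Submodule.mem_iSup_of_mem b (Submodule.mem_map_of_mem hu)
  have hle₂ : (Submodule.pi Set.univ fun _ => U₂) ≤ U.map (ampliation A X) :=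
    pi_iSup_map_le_map_ampliation hX hU
  have hmap : finrank k (U.map (ampliation A X)) = finrank k U :=
    (U.equivMapOfInjective _ hX.injective).finrank_eq.symm
  have hfinrank : finrank k U₂ ≤ finrank k U₁ := by
    refine Nat.le_of_mul_le_mul_left ?_ (Fintype.card_pos (α := N))
    rw [← finrank_pi_univ, ← finrank_pi_univ]
    exact (Submodule.finrank_mono hle₂).trans (hmap.trans_le (Submodule.finrank_mono hle₁))
  rcases hA U₁ hfinrank with hbot | htop
  · refine .inl <| (Submodule.eq_bot_iff _).2 fun u hu => funext fun b => ?_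
    exact (Submodule.mem_bot k).1 (hbot ▸ hle₁ hu b trivial)
  · have hU₂ : U₂ = ⊤ := by
      simp only [U₂, htop, Submodule.map_top]
      exact iSup_range_eq_top_of_surjective_ampliation hX.surjective
    rw [hU₂, Submodule.pi_top, top_le_iff] at hle₂
    rw [hle₂] at hmap
    exact .inr <| Submodule.map_injective_of_injective hX.injective <| by
      rw [hle₂, Submodule.map_top, LinearMap.range_eq_top.2 hX.surjective]

end Simple

section EvaluationOfLinearization

variable {k X n : Type*} [CommRing k] [Fintype X] [Fintype n] [DecidableEq n]
  {p : FreeAlgebra k X} {A : Option X → Matrix n n k}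

theorem isUnit_lift_iff_bijective_ampliation {V : Type*} [AddCommGroup V] [Module k V]
    (h : HomotopyEquivalent (oneByOne p) (pencil A)) (T : X → End k V) :
    IsUnit (lift k T p) ↔
      Function.Bijective (ampliation (fun y : Option X => y.elim 1 T) A) := by
  have hmap := (h.map (lift k T : FreeAlgebra k X →+* End k V)).isUnit_iff
  rw [map_oneByOne, isUnit_oneByOne] at hmap
  have hA : (endVecRingEquivMatrixEnd n k V).symm ((pencil A).map (lift k T)) =
      ampliation (fun y : Option X => y.elim 1 T) A := by
    refine LinearMap.ext fun v => funext fun a => ?_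
    rw [map_pencil, ampliation_apply, Finset.sum_comm]
    change ∑ b, (∑ y, (A y).map (· • y.elim 1 T) : Matrix n n (End k V)) a b (v b) = _
    simp only [Matrix.sum_apply, Matrix.map_apply, LinearMap.sum_apply, LinearMap.smul_apply]
  exact hmap.trans <| by
    rw [← MulEquiv.isUnit_map (endVecRingEquivMatrixEnd n k V).symm, ← End.isUnit_iff, ← hA]
    rfl

theorem isUnit_lift_matrix_iff_bijective_ampliation {N : Type*} [Fintype N] [DecidableEq N]
    (h : HomotopyEquivalent (oneByOne p) (pencil A)) (T : X → Matrix N N k) :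
    IsUnit (lift k T p) ↔
      Function.Bijective
        (ampliation (fun y => toLin' (A y)) fun y : Option X => y.elim 1 T) := by
  have hlift : toLinAlgEquiv' (lift k T p) = lift k (fun x => toLin' (T x)) p :=
    DFunLike.congr_fun (hom_ext (f := (toLinAlgEquiv' : Matrix N N k ≃ₐ[k] _).toAlgHom.comp
      (lift k T)) (g := lift k fun x => toLin' (T x)) <| by ext; simp) p
  have helim : (fun y : Option X => toLin' (y.elim 1 T)) =
      fun y => y.elim 1 fun x => toLin' (T x) := by
    funext y
    cases y
    · exact toLin'_one
    · rfl
  rw [bijective_ampliation_toLin'_comm, helim, ← isUnit_lift_iff_bijective_ampliation h, ← hlift,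
    MulEquiv.isUnit_map]

end EvaluationOfLinearization

section Intertwining

variable {k κ N E F E' F' : Type*} [CommRing k] [DecidableEq N]
  [AddCommGroup E] [Module k E] [AddCommGroup F] [Module k F]
  [AddCommGroup E'] [Module k E'] [AddCommGroup F'] [Module k F']

lemma eq_single_of_forall_ne {v : N → E} {z : N} (hv : ∀ b ≠ z, v b = 0) :
    v = Pi.single z (v z) := by
  ext b
  obtain rfl | hb := eq_or_ne b z
  · simp
  · simp [hb, hv b hb]

lemma exists_linearEquiv_apply_single (e : (N → E) ≃ₗ[k] (N → E')) {z : N}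
    (he : ∀ b ≠ z, ∀ x, e (Pi.single z x) b = 0)
    (he' : ∀ b ≠ z, ∀ x, e.symm (Pi.single z x) b = 0) :
    ∃ φ : E ≃ₗ[k] E', ∀ x, e (Pi.single z x) = Pi.single z (φ x) := by
  have hsingle (x : E) := eq_single_of_forall_ne fun b hb => he b hb x
  have hsingle' (x : E') := eq_single_of_forall_ne fun b hb => he' b hb x
  let φ : E →ₗ[k] E' := .proj z ∘ₗ e.toLinearMap ∘ₗ .single k (fun _ => E) z
  let φ' : E' →ₗ[k] E := .proj z ∘ₗ e.symm.toLinearMap ∘ₗ .single k (fun _ => E') z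
  refine ⟨.ofLinearMap φ φ' ?_ ?_, hsingle⟩
  · ext x
    simp [φ, φ', ← hsingle']
  · ext x
    simp [φ, φ', ← hsingle]

variable [Fintype κ] [Fintype N] {A : κ → E →ₗ[k] F} {B : κ → E' →ₗ[k] F'}
  {X : κ → Matrix N N k} {e : (N → E) →ₗ[k] (N → E')} {Ψ : (N → F) →ₗ[k] (N → F')}

lemma apply_single_eq_zero_of_injective_ampliation [Nonempty N]
    (hX : Function.Injective (ampliation B X))
    (h : ∀ o a b v, Ψ (Pi.single a (A o (v b))) = Pi.single a (B o (e v b)))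
    {b z : N} (hb : b ≠ z) (x : E) : e (Pi.single z x) b = 0 :=
  apply_eq_zero_of_injective_ampliation hX fun o => by
    simpa [hb] using (congr_fun (h o b b (Pi.single z x)) b).symm

lemma apply_single_eq_zero_of_surjective_ampliation [Nonempty N]
    (hX : Function.Surjective (ampliation A X))
    (h : ∀ o a b v, Ψ (Pi.single a (A o (v b))) = Pi.single a (B o (e v b)))
    {b z : N} (hb : b ≠ z) (w : F) : Ψ (Pi.single z w) b = 0 := by
  have hle : ⨆ o, LinearMap.range (A o) ≤
      LinearMap.ker (.proj b ∘ₗ Ψ ∘ₗ .single k (fun _ => F) z) := by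
    refine iSup_le fun o => ?_
    rintro _ ⟨x, rfl⟩
    simpa [hb] using congr_fun (h o z z fun _ => x) b
  rw [iSup_range_eq_top_of_surjective_ampliation hX] at hle
  exact hle (Submodule.mem_top (x := w))

theorem exists_linearEquiv_of_normalizedMaps [Nonempty N]
    (hA : Function.Bijective (ampliation A X)) (hB : Function.Bijective (ampliation B X))
    (Φ : TupleModule (normalizedMaps hA) ≃ₗ[FreeAlgebra k (κ × N × N)]
      TupleModule (normalizedMaps hB)) :
    ∃ (φ : E ≃ₗ[k] E') (ψ : F ≃ₗ[k] F'), ∀ o x, ψ (A o x) = B o (φ x) := by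
  obtain ⟨e, he⟩ := TupleModule.exists_intertwining Φ
  let Ψ : (N → F) ≃ₗ[k] (N → F') :=
    (LinearEquiv.ofBijective _ hA).symm ≪≫ₗ e ≪≫ₗ LinearEquiv.ofBijective _ hB
  have hΨ (o a b v) : Ψ (Pi.single a (A o (v b))) = Pi.single a (B o (e v b)) := by
    rw [← ampliation_normalizedMaps hA, ← ampliation_normalizedMaps hB, ← he]
    exact congr_arg (ampliation B X ∘ e) ((LinearEquiv.ofBijective _ hA).symm_apply_apply _)
  have hΨ' (o a b v) : Ψ.symm (Pi.single a (B o (v b))) = Pi.single a (A o (e.symm v b)) := by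
    rw [LinearEquiv.symm_apply_eq, hΨ, e.apply_symm_apply]
  let z := Classical.arbitrary N
  obtain ⟨φ, hφ⟩ := exists_linearEquiv_apply_single e (z := z)
    (fun b hb => apply_single_eq_zero_of_injective_ampliation hB.injective (e := e.toLinearMap)
      (Ψ := Ψ.toLinearMap) hΨ hb)
    (fun b hb => apply_single_eq_zero_of_injective_ampliation hA.injective
      (e := e.symm.toLinearMap) (Ψ := Ψ.symm.toLinearMap) hΨ' hb)
  obtain ⟨ψ, hψ⟩ := exists_linearEquiv_apply_single Ψ (z := z)
    (fun b hb => apply_single_eq_zero_of_surjective_ampliation hA.surjective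
      (e := e.toLinearMap) (Ψ := Ψ.toLinearMap) hΨ hb)
    (fun b hb => apply_single_eq_zero_of_surjective_ampliation hB.surjective
      (e := e.symm.toLinearMap) (Ψ := Ψ.symm.toLinearMap) hΨ' hb)
  refine ⟨φ, ψ, fun o x => Pi.single_injective (M := fun _ => F') z ?_⟩
  simpa [hφ, hψ] using hΨ o z z (Pi.single z x)

end Intertwining

section Composition

/-- The tuple of matrices over the index type `n × N` at which a Kronecker representation takes
the value of the pencil `H` at its normalized maps at `X`, up to the invertible value at `X`. -/
def compositePoint {k κ n N : Type*} [CommRing k] (H : Option (κ × N × N) → Matrix n n k)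
    (X : κ → Matrix N N k) (o : κ) : Matrix (n × N) (n × N) k :=
  .of fun p q => H none p.1 q.1 * X o p.2 q.2 + H (some (o, p.2, q.2)) p.1 q.1

variable {k κ n N E F : Type*} [CommRing k] [Fintype κ] [Fintype n] [Fintype N] [DecidableEq N]
  [AddCommGroup E] [Module k E] [AddCommGroup F] [Module k F] {A : κ → E →ₗ[k] F}
  {X : κ → Matrix N N k}

lemma ampliation_compositePoint_uncurry (H : Option (κ × N × N) → Matrix n n k)
    (hX : Function.Bijective (ampliation A X)) (w : n → N → E) :
    ampliation A (compositePoint H X) (Function.uncurry w) =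
      Function.uncurry (Pi.map (fun _ => ampliation A X)
        (ampliation (fun y : Option (κ × N × N) => y.elim 1 (normalizedMaps hX)) H w)) := by
  ext ⟨i, a⟩
  have hsome (j : n) :
      ∑ y, H (some y) i j • ampliation A X (normalizedMaps hX y (w j)) a =
        ∑ o, ∑ b, H (some (o, a, b)) i j • A o (w j b) := by
    simp only [Fintype.sum_prod_type, ampliation_normalizedMaps]
    refine Finset.sum_congr rfl fun o _ => ?_
    rw [Finset.sum_eq_single a (fun c _ hc => by simp [hc.symm]) (by simp)]
    simp
  have hright : ampliation A X
        (ampliation (fun y : Option (κ × N × N) => y.elim 1 (normalizedMaps hX)) H w i) a =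
      ∑ j, (H none i j • ∑ o, ∑ b, X o a b • A o (w j b) +
        ∑ o, ∑ b, H (some (o, a, b)) i j • A o (w j b)) := by
    rw [ampliation_apply (X := H), Finset.sum_comm]
    simp [Fintype.sum_option, Finset.sum_apply, hsome, ← ampliation_apply]
  refine Eq.trans ?_ hright.symm
  rw [ampliation_apply, Finset.sum_comm, Fintype.sum_prod_type]
  refine Finset.sum_congr rfl fun j _ => ?_
  simp only [compositePoint, of_apply, Function.uncurry, add_smul, mul_smul,
    Finset.sum_add_distrib, Finset.smul_sum]
  congr 1 <;> exact Finset.sum_comm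

lemma bijective_ampliation_compositePoint_iff {p : FreeAlgebra k (κ × N × N)} [DecidableEq n]
    {H : Option (κ × N × N) → Matrix n n k} (hH : HomotopyEquivalent (oneByOne p) (pencil H))
    (hX : Function.Bijective (ampliation A X)) :
    Function.Bijective (ampliation A (compositePoint H X)) ↔
      IsUnit (lift k (normalizedMaps hX) p) := by
  rw [isUnit_lift_iff_bijective_ampliation hH]
  have hE := (Equiv.curry n N E).symm.bijective
  have hF := (Equiv.curry n N F).symm.bijective
  have hcomp : ⇑(ampliation A (compositePoint H X)) ∘ Function.uncurry = Function.uncurry ∘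
      Pi.map (fun _ => ampliation A X) ∘
        ampliation (fun y : Option (κ × N × N) => y.elim 1 (normalizedMaps hX)) H :=
    funext (ampliation_compositePoint_uncurry H hX)
  rw [← Function.Bijective.of_comp_iff _ hE]
  exact hcomp ▸ (Function.Bijective.of_comp_iff' hF _).trans
    (Function.Bijective.of_comp_iff' (Function.Bijective.piMap fun _ => hX) _)

end Composition

section Separation

theorem exists_not_bijective_ampliation_and_bijective {k κ N τ : Type*} [Field k] [Fintype κ]
    [Fintype N] [Nonempty N] [Finite τ] {E F : τ → Type*}
    [∀ t, AddCommGroup (E t)] [∀ t, Module k (E t)] [∀ t, FiniteDimensional k (E t)]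
    [∀ t, Nontrivial (E t)] [∀ t, AddCommGroup (F t)] [∀ t, Module k (F t)]
    [∀ t, FiniteDimensional k (F t)] {A : ∀ t, κ → E t →ₗ[k] F t} (hA : ∀ t, IsStable (A t))
    {X : κ → Matrix N N k} (hX : ∀ t, Function.Bijective (ampliation (A t) X)) {t₀ : τ}
    (hne : ∀ t ≠ t₀, ¬ ∃ (φ : E t₀ ≃ₗ[k] E t) (ψ : F t₀ ≃ₗ[k] F t),
      ∀ o x, ψ (A t₀ o x) = A t o (φ x)) :
    ∃ (n : ℕ) (Y : κ → Matrix (Fin n × N) (Fin n × N) k),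
      ¬ Function.Bijective (ampliation (A t₀) Y) ∧
        ∀ t ≠ t₀, Function.Bijective (ampliation (A t) Y) := by
  classical
  have hsimple (t) := isSimpleModule_normalizedMaps (hA t) (hX t)
  obtain ⟨r, hr₀, hr⟩ := TupleModule.exists_lift_eq_one_and_eq_zero
    (fun t => normalizedMaps (hX t)) (t₀ := t₀) fun t ht =>
      ⟨fun Φ => hne t ht (exists_linearEquiv_of_normalizedMaps (hX t₀) (hX t) Φ)⟩
  obtain ⟨n, H, hH⟩ := exists_homotopyEquivalent_pencil (1 - r)
  refine ⟨n, compositePoint H X, ?_, fun t ht => ?_⟩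
  · rw [bijective_ampliation_compositePoint_iff hH (hX t₀), map_sub, map_one, hr₀, sub_self]
    exact not_isUnit_zero
  · rw [bijective_ampliation_compositePoint_iff hH (hX t), map_sub, map_one, hr t ht, sub_zero]
    exact isUnit_one

open scoped Matrix.Module in
lemma bijective_ampliation_mul_iff {k κ N E F : Type*} [CommRing k] [Fintype κ] [Fintype N]
    [DecidableEq N] [AddCommGroup E] [Module k E] [AddCommGroup F] [Module k F]
    (A : κ → E →ₗ[k] F) {M : Matrix N N k} (hM : IsUnit M) (X : κ → Matrix N N k) :
    Function.Bijective (ampliation A fun o => M * X o) ↔ Function.Bijective (ampliation A X) := by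
  have happly (X : κ → Matrix N N k) (v) : ampliation A X v = ∑ o, X o • (A o ∘ v) := by
    ext a
    simp [ampliation_apply, Finset.sum_apply]
  have hcomp : ⇑(ampliation A fun o => M * X o) =
      (fun w : N → F => M • w) ∘ ampliation A X := by
    funext v
    simp only [Function.comp_apply, happly, mul_smul, Finset.smul_sum]
  rw [hcomp, Function.Bijective.of_comp_iff' hM.smul_bijective]

end Separation

section PathWeight

variable {X S : Type*} {N : ℕ}

/-- The weight of the path `a → a + 1 → ⋯ → a + w.length` in the cyclic quiver on `ZMod N`, where
the arrow starting at `b` and labelled `x` has weight `y (x, b)`. -/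
def pathWeight [CommSemiring S] (y : X × ZMod N → S) : ZMod N → List X → S
  | _, [] => 1
  | a, x :: w => y (x, a) * pathWeight y (a + 1) w

/-- The weighted adjacency matrix of the arrows labelled `x` in the cyclic quiver on `ZMod N`. -/
def cyclicMatrix [CommSemiring S] (y : X × ZMod N → S) (x : X) : Matrix (ZMod N) (ZMod N) S :=
  .of fun a b => if b = a + 1 then y (x, a) else 0

lemma map_pathWeight {S' : Type*} [CommSemiring S] [CommSemiring S'] (φ : S →+* S')
    (y : X × ZMod N → S) (a : ZMod N) (w : List X) :
    φ (pathWeight y a w) = pathWeight (φ ∘ y) a w := by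
  induction w generalizing a with
  | nil => simp [pathWeight]
  | cons x w ih => simp [pathWeight, ih]

lemma prod_map_cyclicMatrix_apply [CommSemiring S] [NeZero N] (y : X × ZMod N → S) (w : List X)
    (a b : ZMod N) :
    (w.map (cyclicMatrix y)).prod a b = if b = a + w.length then pathWeight y a w else 0 := by
  induction w generalizing a with
  | nil => simp [pathWeight, Matrix.one_apply, eq_comm]
  | cons x w ih =>
    rw [List.map_cons, List.prod_cons, Matrix.mul_apply, Finset.sum_eq_single (a + 1)]
    · simp [ih, cyclicMatrix, pathWeight, add_assoc, add_comm (1 : ZMod N)]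
    · exact fun c _ hc => by simp [cyclicMatrix, hc]
    · simp

lemma pathWeight_indicator [CommSemiring S] [DecidableEq X] (a : ZMod N) {u v w : List X}
    (hN : (u ++ v).length ≤ N) (hw : w.length = v.length) :
    pathWeight (fun z => if (u ++ v)[(z.2 - a).val]? = some z.1 then (1 : S) else 0)
      (a + (u.length : ZMod N)) w = if w = v then 1 else 0 := by
  induction v generalizing u w with
  | nil => simp [List.length_eq_zero_iff.1 hw, pathWeight]
  | cons x v ih =>
    obtain ⟨x', w, rfl⟩ := List.exists_cons_of_length_eq_add_one hw
    have hval : ((u.length : ZMod N)).val = u.length := ZMod.val_cast_of_lt (by simp at hN; omega)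
    have hih := ih (u := u ++ [x]) (w := w) (by simpa using hN) (by simpa using hw)
    simp only [List.append_assoc, List.singleton_append, List.length_append, List.length_singleton,
      Nat.cast_add, Nat.cast_one, ← add_assoc] at hih
    rw [pathWeight, hih]
    simp [hval, eq_comm, ← ite_and, and_comm]

end PathWeight

section NonsingularValue

lemma exists_forall_sum_coeff_mul_pathWeight_ne_zero {R X : Type*} [CommRing R] [IsDomain R]
    [Infinite R] {f : FreeAlgebra R X} {w₀ : List X} (hw₀ : coeff f w₀ ≠ 0) {N : ℕ} [NeZero N]
    (hN : w₀.length ≤ N) :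
    ∃ y : X × ZMod N → R, ∀ a,
      ∑ w ∈ words f with w.length = w₀.length, coeff f w * pathWeight y a w ≠ 0 := by
  classical
  let F (a : ZMod N) : MvPolynomial (X × ZMod N) R :=
    ∑ w ∈ words f with w.length = w₀.length, .C (coeff f w) * pathWeight .X a w
  have heval (a y) : (F a).eval y =
      ∑ w ∈ words f with w.length = w₀.length, coeff f w * pathWeight y a w := by
    have hX : ⇑(MvPolynomial.eval y) ∘ MvPolynomial.X = y := funext fun z => by simp
    simp [F, map_pathWeight, hX]
  have hF (a) : F a ≠ 0 := fun hzero => by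
    have h := heval a fun z => if w₀[(z.2 - a).val]? = some z.1 then (1 : R) else 0
    rw [hzero, map_zero] at h
    refine hw₀ (h.trans ?_).symm
    have hweight (w : List X) (hw : w.length = w₀.length) :=
      pathWeight_indicator (S := R) (u := []) a (by simpa using hN) hw
    simp only [List.nil_append, List.length_nil, Nat.cast_zero, add_zero] at hweight
    rw [Finset.sum_eq_single w₀]
    · simp [hweight]
    · exact fun w hw hne => by simp [hweight w (Finset.mem_filter.1 hw).2, hne]
    · exact fun h => absurd (by simpa [mem_words] using hw₀) h
  obtain ⟨y, hy⟩ : ∃ y, (∏ a, F a).eval y ≠ 0 := by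
    by_contra! h
    exact Finset.prod_ne_zero_iff.2 (fun a _ => hF a) (MvPolynomial.funext (by simpa using h))
  rw [map_prod, Finset.prod_ne_zero_iff] at hy
  exact ⟨y, fun a => heval a y ▸ hy a (Finset.mem_univ a)⟩

lemma prod_map_smul {R S X : Type*} [CommSemiring R] [Semiring S] [Algebra R S] (s : R)
    (T : X → S) (w : List X) : (w.map (s • T)).prod = s ^ w.length • (w.map T).prod := by
  induction w with
  | nil => simp
  | cons x w ih => simp [ih, smul_smul, pow_succ]

variable {k X : Type*} [Field k] [Infinite k]

lemma exists_isUnit_sum_coeff_smul_prod {f : FreeAlgebra k X} {w₀ : List X}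
    (hw₀ : coeff f w₀ ≠ 0) :
    ∃ (N : ℕ) (_ : NeZero N) (T : X → Matrix (ZMod N) (ZMod N) k),
      IsUnit (∑ w ∈ words f with w.length = w₀.length, coeff f w • (w.map T).prod) := by
  obtain ⟨y, hy⟩ := exists_forall_sum_coeff_mul_pathWeight_ne_zero hw₀ (N := w₀.length + 1)
    (Nat.le_succ _)
  refine ⟨_, inferInstance, cyclicMatrix y, mulVec_injective_iff_isUnit.1 ?_⟩
  set d := fun a => ∑ w ∈ words f with w.length = w₀.length, coeff f w * pathWeight y a w
  have hmulVec (v a) : ((∑ w ∈ words f with w.length = w₀.length,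
      coeff f w • (w.map (cyclicMatrix y)).prod) *ᵥ v) a = d a * v (a + w₀.length) := by
    rw [mulVec, dotProduct, Finset.sum_eq_single (a + (w₀.length : ZMod _))]
    · simp only [Matrix.sum_apply, Matrix.smul_apply, prod_map_cyclicMatrix_apply, d]
      congr 1
      exact Finset.sum_congr rfl fun w hw => by simp [(Finset.mem_filter.1 hw).2]
    · intro b _ hb
      rw [Matrix.sum_apply, Finset.sum_eq_zero, zero_mul]
      exact fun w hw => by simp [prod_map_cyclicMatrix_apply, (Finset.mem_filter.1 hw).2, hb]
    · simp
  intro v v' h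
  funext b
  have := congr_fun h (b - w₀.length)
  rw [hmulVec, hmulVec, sub_add_cancel] at this
  exact mul_left_cancel₀ (hy _) this

lemma exists_ne_zero_isUnit_map_eval {n : Type*} [Fintype n] [DecidableEq n]
    {P : Matrix n n (Polynomial k)} (hP : IsUnit (P.map (Polynomial.eval 0))) :
    ∃ s ≠ 0, IsUnit (P.map (Polynomial.eval s)) := by
  have hdet (s) : P.det.eval s = (P.map (Polynomial.eval s)).det :=
    RingHom.map_det (Polynomial.evalRingHom s) P
  simp only [isUnit_iff_isUnit_det, isUnit_iff_ne_zero, ← hdet] at hP ⊢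
  have hne : Polynomial.X * P.det ≠ 0 :=
    mul_ne_zero Polynomial.X_ne_zero fun h => hP (by simp [h])
  by_contra! h
  refine hne (Polynomial.funext fun s => ?_)
  obtain rfl | hs := eq_or_ne s 0
  · simp
  · simp [h s hs]

theorem exists_isUnit_lift {f : FreeAlgebra k X} (hf : f ≠ 0) :
    ∃ (N : ℕ) (_ : NeZero N) (T : X → Matrix (ZMod N) (ZMod N) k), IsUnit (lift k T f) := by
  obtain ⟨w, hw, -⟩ := exists_coeff_ne_zero hf
  obtain ⟨w₀, hw₀, hmin⟩ := Finset.exists_min_image (words f) List.length ⟨w, mem_words.2 hw⟩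
  obtain ⟨N, _, T, hT⟩ := exists_isUnit_sum_coeff_smul_prod (mem_words.1 hw₀)
  let P : Matrix (ZMod N) (ZMod N) (Polynomial k) := ∑ w ∈ words f,
    (Polynomial.X ^ (w.length - w₀.length) : Polynomial k) • (coeff f w • (w.map T).prod).map .C
  have hP (s) : P.map (Polynomial.eval s) =
      ∑ w ∈ words f, s ^ (w.length - w₀.length) • (coeff f w • (w.map T).prod) := by
    ext i j
    simp [P, Matrix.sum_apply, Polynomial.eval_finsetSum]
  obtain ⟨s, hs, hunit⟩ : ∃ s ≠ 0, IsUnit (P.map (Polynomial.eval s)) := by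
    refine exists_ne_zero_isUnit_map_eval ?_
    convert hT using 1
    rw [hP, Finset.sum_filter]
    refine Finset.sum_congr rfl fun w hw => ?_
    rcases (hmin w hw).eq_or_lt with h | h
    · simp [h]
    · simp [h.ne', Nat.sub_ne_zero_of_lt h]
  refine ⟨N, inferInstance, s • T, ?_⟩
  have hlift : lift k (s • T) f = s ^ w₀.length • P.map (Polynomial.eval s) := by
    rw [lift_eq_sum_words, hP, Finset.smul_sum]
    refine Finset.sum_congr rfl fun w hw => ?_
    rw [prod_map_smul, smul_smul _ _ (coeff f w • _), ← pow_add, Nat.add_sub_of_le (hmin w hw),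
      smul_comm]
  rw [hlift]
  exact (isUnit_smul_iff (Units.mk0 _ (pow_ne_zero w₀.length hs)) _).2 hunit

end NonsingularValue

section Products

variable {k X n : Type*} [CommRing k] [Fintype n] [DecidableEq n]

lemma isUnit_lift_list_prod_iff (T : X → Matrix n n k) (l : List (FreeAlgebra k X)) :
    IsUnit (lift k T l.prod) ↔ ∀ p ∈ l, IsUnit (lift k T p) := by
  simp only [isUnit_iff_isUnit_det, map_list_prod]
  rw [← coe_detMonoidHom, map_list_prod, List.map_map, List.prod_isUnit_iff]
  simp

end Products

section StablePencils

variable {k : Type*} [Field k] {X : Type*}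

lemma homotopyEquivalent_pencil_of_linearEquiv [Fintype X] {m n : Type*} [Fintype m]
    [DecidableEq m] [Fintype n] [DecidableEq n] {A : Option X → Matrix m m k}
    {B : Option X → Matrix n n k} (φ ψ : (m → k) ≃ₗ[k] (n → k))
    (h : ∀ y v, ψ (toLin' (A y) v) = toLin' (B y) (φ v)) :
    HomotopyEquivalent (pencil A) (pencil B) := by
  have hB (y) : B y = LinearMap.toMatrix' ψ.toLinearMap * A y *
      LinearMap.toMatrix' φ.symm.toLinearMap := by
    refine toLin'.injective (LinearMap.ext fun v => ?_)
    have := h y (φ.symm v)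
    rw [LinearEquiv.apply_symm_apply] at this
    simp [toLin'_mul, ← this]
  rw [show B = _ from funext hB]
  refine (homotopyEquivalent_pencil_mul_mul (P' := LinearMap.toMatrix' ψ.symm.toLinearMap)
    (Q' := LinearMap.toMatrix' φ.toLinearMap) ?_ ?_ ?_ ?_ A).symm <;>
  rw [← LinearMap.toMatrix'_comp] <;> simp

/-- The coefficients of the constant `1 × 1` pencil `1`. Its value at `Y` is `Y none`, so adding it
to a family of pencils forces `Y none` to be invertible. -/
def constPencil (k X : Type*) [Field k] : Option X → Matrix (Fin 1) (Fin 1) k :=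
  fun y => y.elim 1 0

lemma isStable_constPencil : IsStable fun y => toLin' (constPencil k X y) := fun U _ => by
  have : IsSimpleModule k (Fin 1 → k) := isSimpleModule_iff_finrank_eq_one.2 (by simp)
  exact eq_bot_or_eq_top U

lemma pencil_constPencil [Fintype X] :
    pencil (constPencil k X) = oneByOne 1 := by
  ext i j
  simp [constPencil, pencil_apply, oneByOne_apply, Fintype.sum_option, Subsingleton.elim i j]

lemma isUnit_of_injective_ampliation_constPencil [Fintype X] {N : Type*} [Fintype N]
    [DecidableEq N] {Y : Option X → Matrix N N k}
    (hY : Function.Injective (ampliation (fun y => toLin' (constPencil k X y)) Y)) :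
    IsUnit (Y none) := by
  refine mulVec_injective_iff_isUnit.1 fun v w h => funext fun b => ?_
  have := @hY (fun b _ => v b) (fun b _ => w b) <| by
    ext a i
    obtain rfl : i = 0 := Subsingleton.elim _ _
    simpa [constPencil, ampliation_apply, Fintype.sum_option, mulVec, dotProduct]
      using congr_fun h a
  exact congr_fun (congr_fun this b) 0

lemma exists_not_bijective_and_bijective_of_isStable [Fintype X] {τ N : Type*} [Finite τ]
    [Fintype N] [DecidableEq N] [Nonempty N] {n : τ → ℕ} [∀ t, NeZero (n t)]
    {A : ∀ t, Option X → Matrix (Fin (n t)) (Fin (n t)) k}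
    (hA : ∀ t, IsStable fun y => toLin' (A t y)) {S : X → Matrix N N k}
    (hS : ∀ t, Function.Bijective
      (ampliation (fun y => toLin' (A t y)) fun y : Option X => y.elim 1 S))
    {t₀ : τ} (hunit : ¬ IsUnit (pencil (A t₀)))
    (hne : ∀ t ≠ t₀, ¬ HomotopyEquivalent (pencil (A t₀)) (pencil (A t))) :
    ∃ (m : ℕ) (T : X → Matrix (Fin m × N) (Fin m × N) k),
      ¬ Function.Bijective
        (ampliation (fun y => toLin' (A t₀ y)) fun y : Option X => y.elim 1 T) ∧
      ∀ t ≠ t₀, Function.Bijective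
        (ampliation (fun y => toLin' (A t y)) fun y : Option X => y.elim 1 T) := by
  let n' : Option τ → ℕ := fun t => t.elim 1 n
  let A' : ∀ t, Option X → Matrix (Fin (n' t)) (Fin (n' t)) k
    | none => constPencil k X
    | some t => A t
  have hn' : ∀ t, NeZero (n' t) := Option.forall.2 ⟨⟨one_ne_zero⟩, fun t => ‹∀ t, NeZero (n t)› t⟩
  have hA' : ∀ t, IsStable fun y => toLin' (A' t y) :=
    Option.forall.2 ⟨isStable_constPencil, hA⟩
  have hconst : HomotopyEquivalent (pencil (A' none)) (oneByOne (1 : FreeAlgebra k X)) :=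
    pencil_constPencil (k := k) (X := X) ▸ .refl _
  have hS' : ∀ t, Function.Bijective
      (ampliation (fun y => toLin' (A' t y)) fun y : Option X => y.elim 1 S) :=
    Option.forall.2 ⟨(isUnit_lift_matrix_iff_bijective_ampliation hconst.symm S).1 (by simp), hS⟩
  have hne' : ∀ t ≠ some t₀, ¬ HomotopyEquivalent (pencil (A' (some t₀))) (pencil (A' t)) :=
    Option.forall.2 ⟨fun _ h => hunit ((h.trans hconst).isUnit_iff.2 (by simp)),
      fun t ht => hne t fun h => ht (congrArg some h)⟩
  obtain ⟨m, Y, hY₀, hY⟩ := exists_not_bijective_ampliation_and_bijective hA' hS' (t₀ := some t₀)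
    fun t ht ⟨φ, ψ, hφψ⟩ => hne' t ht (homotopyEquivalent_pencil_of_linearEquiv φ ψ hφψ)
  have hnone : IsUnit (Y none) :=
    isUnit_of_injective_ampliation_constPencil (hY none (by simp)).injective
  have hYT : Y = fun y => Y none * y.elim 1 fun x => (Y none)⁻¹ * Y (some x) := by
    funext y
    cases y <;> simp [mul_nonsing_inv_cancel_left _ _ ((isUnit_iff_isUnit_det _).1 hnone)]
  refine ⟨m, fun x => (Y none)⁻¹ * Y (some x), ?_, fun t ht => ?_⟩
  · rwa [hYT, bijective_ampliation_mul_iff _ hnone] at hY₀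
  · have := hY (some t) (by simpa using ht)
    rwa [hYT, bijective_ampliation_mul_iff _ hnone] at this

theorem exists_not_isUnit_lift_and_isUnit_lift [Infinite k] [Finite X] {τ : Type*} [Finite τ]
    {h : τ → FreeAlgebra k X} (hh : ∀ t, Irreducible (h t)) {t₀ : τ}
    (hne : ∀ t ≠ t₀, ¬ HomotopyEquivalent (oneByOne (h t₀)) (oneByOne (h t))) :
    ∃ (N : Type) (_ : Fintype N) (_ : DecidableEq N) (T : X → Matrix N N k),
      ¬ IsUnit (lift k T (h t₀)) ∧ ∀ t ≠ t₀, IsUnit (lift k T (h t)) := by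
  have := Fintype.ofFinite X
  have := Fintype.ofFinite τ
  choose n A hA hAh using fun t => exists_isStable_homotopyEquivalent_pencil (hh t)
  have hn (t) : NeZero (n t) := ⟨fun h0 => (hh t).not_isUnit <| by
    have : IsEmpty (Fin (n t)) := h0 ▸ inferInstance
    exact isUnit_oneByOne.1 ((hAh t).isUnit_iff.2 (isUnit_of_subsingleton _))⟩
  obtain ⟨N, _, S, hS⟩ := exists_isUnit_lift (f := (Finset.univ.toList.map h).prod) <|
    List.prod_ne_zero <| by simpa using fun t => (hh t).ne_zero
  rw [isUnit_lift_list_prod_iff] at hS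
  obtain ⟨m, T, hT₀, hT⟩ := exists_not_bijective_and_bijective_of_isStable hA (t₀ := t₀)
    (fun t => (isUnit_lift_matrix_iff_bijective_ampliation (hAh t) S).1 (hS _ (by simp)))
    (fun hu => (hh t₀).not_isUnit (isUnit_oneByOne.1 ((hAh t₀).isUnit_iff.2 hu)))
    fun t ht he => hne t ht (((hAh t₀).trans he).trans (hAh t).symm)
  exact ⟨Fin m × ZMod N, inferInstance, inferInstance, T,
    mt (isUnit_lift_matrix_iff_bijective_ampliation (hAh t₀) T).1 hT₀,
    fun t ht => (isUnit_lift_matrix_iff_bijective_ampliation (hAh t) T).2 (hT t ht)⟩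

end StablePencils

section DirectSums

variable {k X : Type*} [CommRing k]

lemma isUnit_blockDiagonal'_iff {ι : Type*} [Fintype ι] [DecidableEq ι] {N : ι → Type*}
    [∀ i, Fintype (N i)] [∀ i, DecidableEq (N i)] {M : ∀ i, Matrix (N i) (N i) k} :
    IsUnit (blockDiagonal' M) ↔ ∀ i, IsUnit (M i) := by
  refine ⟨fun h i => ?_, fun h => (Pi.isUnit_iff.2 h).map (blockDiagonal'RingHom N k)⟩
  obtain ⟨B, hB, -⟩ := isUnit_iff_exists.1 h
  refine IsUnit.of_mul_eq_one (blockDiag' B i) (Matrix.ext fun a b => ?_)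
  have hab := congr_fun (congr_fun hB ⟨i, a⟩) ⟨i, b⟩
  rw [mul_apply, Fintype.sum_sigma, Finset.sum_eq_single i] at hab
  · simpa [mul_apply, blockDiag'_apply, one_apply] using hab
  · intro j _ hj
    simp [blockDiagonal'_apply_ne _ _ _ hj.symm]
  · simp

lemma lift_blockDiagonal' {ι : Type*} [Fintype ι] [DecidableEq ι] {N : ι → Type*}
    [∀ i, Fintype (N i)] [∀ i, DecidableEq (N i)] (T : ∀ i, X → Matrix (N i) (N i) k)
    (f : FreeAlgebra k X) :
    lift k (fun x => blockDiagonal' fun i => T i x) f =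
      blockDiagonal' fun i => lift k (T i) f := by
  induction f using FreeAlgebra.induction with
  | grade0 r =>
    simp only [AlgHom.commutes, algebraMap_eq_diagonal]
    exact (blockDiagonal'_diagonal fun i (_ : N i) => r).symm
  | grade1 x => simp only [lift_ι_apply]
  | mul a b ha hb => simp only [map_mul, ha, hb, blockDiagonal'_mul]
  | add a b ha hb =>
    simp only [map_add, ha, hb]
    exact (blockDiagonal'_add _ _).symm

lemma exists_fin_forall_isUnit_lift_iff {N : Type*} [Fintype N] [DecidableEq N]
    (T : X → Matrix N N k) :
    ∃ T' : X → Matrix (Fin (Fintype.card N)) (Fin (Fintype.card N)) k,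
      ∀ f, IsUnit (lift k T' f) ↔ IsUnit (lift k T f) := by
  let Θ := reindexAlgEquiv k k (Fintype.equivFin N)
  refine ⟨fun x => Θ (T x), fun f => ?_⟩
  have hΘ : lift k (fun x => Θ (T x)) = Θ.toAlgHom.comp (lift k T) := hom_ext (by ext; simp)
  rw [hΘ]
  exact MulEquiv.isUnit_map Θ

end DirectSums

section SingularPoints

variable {k X : Type*} [Field k]

lemma isUnit_lift_algebraMap_mul_list_prod_iff {n : Type*} [Fintype n] [DecidableEq n]
    (T : X → Matrix n n k) {u : k} (hu : u ≠ 0) (ps : List (FreeAlgebra k X)) :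
    IsUnit (lift k T (algebraMap k _ u * ps.prod)) ↔ ∀ p ∈ ps, IsUnit (lift k T p) := by
  rw [← Algebra.smul_def, map_smul, ← isUnit_lift_list_prod_iff]
  exact isUnit_smul_iff (Units.mk0 u hu) _

lemma det_lift_eq_zero_iff {n : Type*} [Fintype n] [DecidableEq n] (T : X → Matrix n n k)
    (f : FreeAlgebra k X) : (lift k T f).det = 0 ↔ ¬ IsUnit (lift k T f) := by
  rw [isUnit_iff_isUnit_det, isUnit_iff_ne_zero, not_not]

lemma exists_fin_isUnit_lift [Infinite k] {g : FreeAlgebra k X} (hg : g ≠ 0) :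
    ∃ n ≥ 1, ∃ T : X → Matrix (Fin n) (Fin n) k, IsUnit (lift k T g) := by
  obtain ⟨N, _, T, hT⟩ := exists_isUnit_lift hg
  obtain ⟨T', hT'⟩ := exists_fin_forall_isUnit_lift_iff T
  exact ⟨_, Fintype.card_pos, T', (hT' g).2 hT⟩

lemma exists_forall_isUnit_lift_imp [Infinite k] {ι : Type*} [Finite ι]
    {f : ι → FreeAlgebra k X} {g : FreeAlgebra k X} (hg : g ≠ 0)
    (H : ∀ n ≥ 1, ∀ T : X → Matrix (Fin n) (Fin n) k,
      (∀ j, ¬ IsUnit (lift k T (f j))) → ¬ IsUnit (lift k T g)) :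
    ∃ j, ∀ n ≥ 1, ∀ T : X → Matrix (Fin n) (Fin n) k,
      IsUnit (lift k T g) → IsUnit (lift k T (f j)) := by
  classical
  have := Fintype.ofFinite ι
  by_contra! hcon
  have hpoint (t : Option ι) : ∃ n ≥ 1, ∃ T : X → Matrix (Fin n) (Fin n) k,
      IsUnit (lift k T g) ∧ ∀ j ∈ t, ¬ IsUnit (lift k T (f j)) := by
    cases t with
    | none => simpa using exists_fin_isUnit_lift hg
    | some j => simpa using hcon j
  choose n hn T hgT hfT using hpoint
  obtain ⟨T', hT'⟩ := exists_fin_forall_isUnit_lift_iff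
    fun x => blockDiagonal' fun t => T t x
  simp only [lift_blockDiagonal', isUnit_blockDiagonal'_iff] at hT'
  have : Nonempty (Σ t, Fin (n t)) := ⟨none, 0, hn none⟩
  exact H _ Fintype.card_pos T' (fun j hj => hfT (some j) j rfl ((hT' _).1 hj _))
    ((hT' g).2 hgT)

end SingularPoints

section SharedFactors

variable {k : Type*} [Field k] {d : ℕ}

lemma isUnit_lift_iff_of_stablyAssociated {p q : FreeAlgebra k (Fin d)} (h : StablyAssociated p q)
    {A : Type*} [Ring A] [Algebra k A] (T : Fin d → A) :
    IsUnit (lift k T p) ↔ IsUnit (lift k T q) := by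
  have := (h.homotopyEquivalent.map (lift k T : FreeAlgebra k (Fin d) →+* A)).isUnit_iff
  rwa [map_oneByOne, map_oneByOne, isUnit_oneByOne, isUnit_oneByOne] at this

lemma exists_stablyAssociated_of_forall_isUnit_lift_imp [Infinite k] {p : FreeAlgebra k (Fin d)}
    (hp : Irreducible p) {qs : List (FreeAlgebra k (Fin d))} (hqs : ∀ q ∈ qs, Irreducible q)
    (H : ∀ n ≥ 1, ∀ T : Fin d → Matrix (Fin n) (Fin n) k,
      (∀ q ∈ qs, IsUnit (lift k T q)) → IsUnit (lift k T p)) :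
    ∃ q ∈ qs, StablyAssociated p q := by
  by_contra! hne
  have hne' (q) (hq : q ∈ qs) : ¬ HomotopyEquivalent (oneByOne p) (oneByOne q) := fun h =>
    hne q hq (stablyAssociated_of_homotopyEquivalent hp.ne_zero (hqs q hq).ne_zero h)
  have : Finite {q // q ∈ p :: qs} := (List.finite_toSet _).to_subtype
  obtain ⟨N, _, _, T, hpT, hqT⟩ := exists_not_isUnit_lift_and_isUnit_lift
    (h := fun t : {q // q ∈ p :: qs} => (t : FreeAlgebra k (Fin d)))
    (fun t => List.forall_mem_cons.2 ⟨hp, hqs⟩ t t.2) (t₀ := ⟨p, by simp⟩)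
    fun t ht => hne' t ((List.mem_cons.1 t.2).resolve_left fun h => ht (Subtype.ext h))
  have : Nonempty N := not_isEmpty_iff.1 fun _ => hpT (isUnit_of_subsingleton _)
  obtain ⟨T', hT'⟩ := exists_fin_forall_isUnit_lift_iff T
  refine hpT ((hT' p).1 (H _ Fintype.card_pos T' fun q hq => (hT' q).2 ?_))
  refine hqT ⟨q, List.mem_cons_of_mem p hq⟩ fun h => hne' q hq ?_
  rw [show q = p from congrArg Subtype.val h]
  exact .refl _

end SharedFactors

end DetNullstellensatz

open DetNullstellensatz FreeAlgebra in
theorem determinantal_nullstellensatz_general {k : Type*} [Field k] [Infinite k] {d : ℕ}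
    {ι : Type*} [Finite ι] {f : ι → FreeAlgebra k (Fin d)} {g : FreeAlgebra k (Fin d)}
    (hg : g ≠ 0) :
    (∀ n : ℕ, 1 ≤ n → ∀ X : Fin d → Matrix (Fin n) (Fin n) k,
        (∀ j, (ncEval X (f j)).det = 0) → (ncEval X g).det = 0) ↔
      ∃ j, ∃ (u u' : k) (ps qs : List (FreeAlgebra k (Fin d))),
        u ≠ 0 ∧ u' ≠ 0 ∧
        (∀ p ∈ ps, Irreducible p) ∧ (∀ q ∈ qs, Irreducible q) ∧
        f j = algebraMap k (FreeAlgebra k (Fin d)) u * ps.prod ∧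
        g = algebraMap k (FreeAlgebra k (Fin d)) u' * qs.prod ∧
        ∀ p ∈ ps, ∃ q ∈ qs, StablyAssociated p q := by
  simp only [ncEval, det_lift_eq_zero_iff]
  constructor
  · intro H
    obtain ⟨j, hj⟩ := exists_forall_isUnit_lift_imp hg H
    obtain ⟨n, hn, T, hgT⟩ := exists_fin_isUnit_lift hg
    have : NeZero n := ⟨Nat.one_le_iff_ne_zero.1 hn⟩
    have hf : f j ≠ 0 := fun h0 => not_isUnit_zero (map_zero (lift k T) ▸ h0 ▸ hj n hn T hgT)
    obtain ⟨u, ps, hu, hps, hfj⟩ := exists_irreducible_factorization (f j) hf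
    obtain ⟨u', qs, hu', hqs, hgq⟩ := exists_irreducible_factorization g hg
    refine ⟨j, u, u', ps, qs, hu, hu', hps, hqs, hfj, hgq, fun p hp =>
      exists_stablyAssociated_of_forall_isUnit_lift_imp (hps p hp) hqs fun n hn T hT => ?_⟩
    have hfT := hj n hn T (hgq ▸ (isUnit_lift_algebraMap_mul_list_prod_iff T hu' qs).2 hT)
    exact (isUnit_lift_algebraMap_mul_list_prod_iff T hu ps).1 (hfj ▸ hfT) p hp
  · rintro ⟨j, u, u', ps, qs, hu, hu', -, -, hfj, hgq, hpq⟩ n - T hT hgT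
    rw [hgq, isUnit_lift_algebraMap_mul_list_prod_iff T hu'] at hgT
    refine hT j ?_
    rw [hfj, isUnit_lift_algebraMap_mul_list_prod_iff T hu]
    intro p hp
    obtain ⟨q, hq, h⟩ := hpq p hp
    exact (isUnit_lift_iff_of_stablyAssociated h T).2 (hgT q hq)

/-- Helton–Klep–Volčič determinantal Nullstellensatz: `g` is singular wherever all
`f_j` are singular iff, for some `j`, every irreducible factor of `f_j` is stably
associated to an irreducible factor of `g`. -/
theorem determinantal_nullstellensatz
    (k : Type*) [Field k] [IsAlgClosed k] [CharZero k]
    (d ℓ : ℕ) (hd : 1 ≤ d)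
    (f : Fin ℓ → FreeAlgebra k (Fin d)) (g : FreeAlgebra k (Fin d))
    (hf : ∀ j, f j ≠ 0) (hg : g ≠ 0) :
    (∀ (n : ℕ), 1 ≤ n → ∀ X : Fin d → Matrix (Fin n) (Fin n) k,
        (∀ j, (ncEval X (f j)).det = 0) → (ncEval X g).det = 0) ↔
      (∃ j : Fin ℓ, ∃ (u u' : k) (ps qs : List (FreeAlgebra k (Fin d))),
        u ≠ 0 ∧ u' ≠ 0 ∧
        (∀ p ∈ ps, Irreducible p) ∧ (∀ q ∈ qs, Irreducible q) ∧
        f j = algebraMap k (FreeAlgebra k (Fin d)) u * ps.prod ∧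
        g = algebraMap k (FreeAlgebra k (Fin d)) u' * qs.prod ∧
        ∀ p ∈ ps, ∃ q ∈ qs, StablyAssociated p q) :=
  determinantal_nullstellensatz_general hg
end

section
/- Let f_1,…,f_ℓ, g ∈ k⟨x_1,…,x_d⟩ be nonzero. If for every n ≥ 1 and every X ∈ M_n(k)^d the conditions det f_1(X) = … = det f_ℓ(X) = 0 imply det g(X) = 0, then there exists an index j ∈ {1,…,ℓ} such that for every n ≥ 1 and every X ∈ M_n(k)^d, det f_j(X) = 0 implies det g(X) = 0. -/
/-!
Through the regular representation, evaluations in any nonzero finite-dimensional algebra `A` may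
replace evaluations in matrices: a polynomial takes an invertible value at a tuple of `A` exactly
when its value at the corresponding tuple of matrices has nonzero determinant. If no `f j` works,
there are tuples `X j` with `f j` singular and `g` invertible at `X j`; together with one point
where `g` is invertible they form a tuple in a product of matrix algebras at which every `f j` is
singular and `g` is invertible.

A point where `g ≠ 0` is invertible comes from weighted cyclic shifts. Scaling the generators by a
variable `z` isolates the lowest homogeneous component of `g`, whose value at weighted shifts with
indeterminate weights is a diagonal matrix times a permutation matrix. Suitable weights in `{0, 1}`
single out the contribution of one word to a diagonal entry, so no diagonal entry vanishes. The
Nullstellensatz then specializes the indeterminates to elements of a finite extension of `k`.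
-/

open Matrix

theorem map_freeAlgebraLift {R V A B : Type*} [CommSemiring R] [Semiring A] [Algebra R A]
    [Semiring B] [Algebra R B] (φ : A →ₐ[R] B) (Z : V → A) (f : FreeAlgebra R V) :
    φ (FreeAlgebra.lift R Z f) = FreeAlgebra.lift R (fun i => φ (Z i)) f := by
  have hcomp : φ.comp (FreeAlgebra.lift R Z) = FreeAlgebra.lift R (fun i => φ (Z i)) := by
    ext i
    simp
  exact DFunLike.congr_fun hcomp f

theorem isUnit_algebraNorm_iff {R A : Type*} [CommRing R] [Ring A] [Algebra R A]
    [Module.Free R A] [Module.Finite R A] {a : A} :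
    IsUnit (Algebra.norm R a) ↔ IsUnit a := by
  rw [Algebra.norm_apply, ← LinearMap.isUnit_iff_isUnit_det, Algebra.lmul_isUnit_iff]

theorem exists_isUnit_det_ncEval_iff {k A : Type*} [CommRing k] [Ring A] [Nontrivial A]
    [Algebra k A] [Module.Free k A] [Module.Finite k A] {d : ℕ} (Z : Fin d → A) :
    ∃ n : ℕ, 1 ≤ n ∧ ∃ Y : Fin d → Matrix (Fin n) (Fin n) k,
      ∀ f, IsUnit (ncEval Y f).det ↔ IsUnit (FreeAlgebra.lift k Z f) := by
  have : Nontrivial k := Module.nontrivial k A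
  let b := Module.finBasis k A
  have : Nonempty (Fin (Module.finrank k A)) := b.index_nonempty
  refine ⟨Module.finrank k A, Fin.pos_iff_nonempty.mpr this,
    fun i => Algebra.leftMulMatrix b (Z i), fun f => ?_⟩
  rw [ncEval, ← map_freeAlgebraLift, ← Algebra.norm_eq_matrix_det, isUnit_algebraNorm_iff]

theorem exists_isMaximal_notMem_finite_quotient (k : Type*) {B : Type*} [Field k] [CommRing B]
    [IsReduced B] [Algebra k B] [Algebra.FiniteType k B] {b : B} (hb : b ≠ 0) :
    ∃ I : Ideal B, I.IsMaximal ∧ b ∉ I ∧ Module.Finite k (B ⧸ I) := by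
  have : IsJacobsonRing B := isJacobsonRing_of_finiteType (A := k)
  have hbot : (⊥ : Ideal B).jacobson = ⊥ := IsJacobsonRing.out' _ Ideal.isRadical_bot
  have hbJ : b ∉ (⊥ : Ideal B).jacobson := by rwa [hbot]
  obtain ⟨I, ⟨-, hI⟩, hbI⟩ : ∃ I : Ideal B, (⊥ ≤ I ∧ I.IsMaximal) ∧ b ∉ I := by
    simpa [Ideal.jacobson, Submodule.mem_sInf] using hbJ
  let _ := Ideal.Quotient.field I
  exact ⟨I, hI, hbI, finite_of_finite_type_of_isJacobsonRing k (B ⧸ I)⟩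

theorem exists_det_ncEval_ne_zero_of_finiteType {k B ι : Type*} [Field k] [CommRing B] [IsReduced B]
    [Algebra k B] [Algebra.FiniteType k B] [Fintype ι] [DecidableEq ι] [Nonempty ι] {d : ℕ}
    {X : Fin d → Matrix ι ι B} {g : FreeAlgebra k (Fin d)}
    (hX : (FreeAlgebra.lift k X g).det ≠ 0) :
    ∃ n : ℕ, 1 ≤ n ∧ ∃ Y : Fin d → Matrix (Fin n) (Fin n) k, (ncEval Y g).det ≠ 0 := by
  obtain ⟨I, hI, hXI, hfin⟩ := exists_isMaximal_notMem_finite_quotient k hX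
  let φ : Matrix ι ι B →ₐ[k] Matrix ι ι (B ⧸ I) := (Ideal.Quotient.mkₐ k I).mapMatrix
  obtain ⟨n, hn, Y, hY⟩ := exists_isUnit_det_ncEval_iff (k := k) (fun i => φ (X i))
  refine ⟨n, hn, Y, ((hY g).mpr ?_).ne_zero⟩
  let _ := Ideal.Quotient.field I
  rw [← map_freeAlgebraLift, Matrix.isUnit_iff_isUnit_det, isUnit_iff_ne_zero, ← AlgHom.map_det]
  rwa [Ideal.Quotient.mkₐ_eq_mk, Ne, Ideal.Quotient.eq_zero_iff_mem]

section WordExpansion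

variable {k V A : Type*} [CommSemiring k] [Semiring A] [Algebra k A]

/-- The coefficients of a noncommutative polynomial in the basis of words. -/
noncomputable def wordCoeff (g : FreeAlgebra k V) : FreeMonoid V →₀ k :=
  (FreeAlgebra.equivMonoidAlgebraFreeMonoid g).coeff

theorem wordCoeff_ne_zero {g : FreeAlgebra k V} (hg : g ≠ 0) : wordCoeff g ≠ 0 := by
  simpa [wordCoeff] using hg

theorem lift_eq_sum_wordCoeff (X : V → A) (g : FreeAlgebra k V) :
    FreeAlgebra.lift k X g =
      ∑ w ∈ (wordCoeff g).support, wordCoeff g w • FreeMonoid.lift X w := by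
  let e := FreeAlgebra.equivMonoidAlgebraFreeMonoid (R := k) (X := V)
  have hcomp : FreeAlgebra.lift k X =
      (MonoidAlgebra.lift k A (FreeMonoid V) (FreeMonoid.lift X)).comp e.toAlgHom := by
    ext i
    simp [e, FreeAlgebra.equivMonoidAlgebraFreeMonoid]
  rw [hcomp]
  exact MonoidAlgebra.lift_apply _ _

/-- The value at `X` of the homogeneous component of degree `m` of `g`. -/
noncomputable def componentEval (X : V → A) (m : ℕ) (g : FreeAlgebra k V) : A :=
  ∑ w ∈ (wordCoeff g).support with w.length = m, wordCoeff g w • FreeMonoid.lift X w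

theorem freeMonoidLift_smul {R : Type*} [CommSemiring R] [Algebra R A] (c : R) (X : V → A)
    (w : FreeMonoid V) :
    FreeMonoid.lift (fun i => c • X i) w = c ^ w.length • FreeMonoid.lift X w := by
  induction w using FreeMonoid.inductionOn' with
  | one => simp
  | of_mul i w ih =>
    rw [map_mul, map_mul, FreeMonoid.lift_eval_of, FreeMonoid.lift_eval_of, ih, smul_mul_smul_comm,
      FreeMonoid.length_mul, FreeMonoid.length_of, add_comm, pow_succ']

end WordExpansion

section LowestComponent

open Polynomial

variable {k V R ι : Type*} [CommSemiring k] [CommRing R] [Algebra k R] [Fintype ι] [DecidableEq ι]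

theorem exists_lift_X_smul_eq_X_pow_smul (Z : V → Matrix ι ι R) {g : FreeAlgebra k V} {m : ℕ}
    (hm : ∀ w ∈ (wordCoeff g).support, m ≤ w.length) :
    ∃ G : Matrix ι ι R[X],
      FreeAlgebra.lift k (fun i => (X : R[X]) • (Z i).map C) g = (X : R[X]) ^ m • G ∧
        G.map (eval 0) = componentEval Z m g := by
  refine ⟨∑ w ∈ (wordCoeff g).support,
    (X : R[X]) ^ (w.length - m) • wordCoeff g w • (FreeMonoid.lift Z w).map C, ?_, ?_⟩
  · rw [lift_eq_sum_wordCoeff, Finset.smul_sum]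
    refine Finset.sum_congr rfl fun w hw => ?_
    have hC : FreeMonoid.lift (fun i => (Z i).map C) w = (FreeMonoid.lift Z w).map C :=
      (FreeMonoid.hom_map_lift (C.mapMatrix : Matrix ι ι R →+* _).toMonoidHom Z w).symm
    rw [freeMonoidLift_smul, hC, smul_smul, ← pow_add, Nat.add_sub_cancel' (hm w hw), smul_comm]
  · ext r c
    simp only [componentEval, Matrix.map_apply, Matrix.sum_apply, Matrix.smul_apply, smul_eq_mul,
      eval_finsetSum, eval_mul, eval_pow, eval_X, eval_smul, eval_C, Finset.sum_filter]
    refine Finset.sum_congr rfl fun w hw => ?_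
    split_ifs with hlen
    · rw [hlen, Nat.sub_self, pow_zero, one_mul]
    · have hpos : w.length - m ≠ 0 := by
        have := hm w hw
        lia
      rw [zero_pow hpos, zero_mul]

theorem det_lift_X_smul_ne_zero (Z : V → Matrix ι ι R) {g : FreeAlgebra k V} {m : ℕ}
    (hm : ∀ w ∈ (wordCoeff g).support, m ≤ w.length) (hdet : (componentEval Z m g).det ≠ 0) :
    (FreeAlgebra.lift k (fun i => (X : R[X]) • (Z i).map C) g).det ≠ 0 := by
  obtain ⟨G, hfactor, hG⟩ := exists_lift_X_smul_eq_X_pow_smul Z hm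
  have hGdet : G.det ≠ 0 := by
    intro h
    have heval : eval 0 G.det = (G.map (eval 0)).det := RingHom.map_det (evalRingHom 0) G
    exact hdet (by rw [← hG, ← heval, h, eval_zero])
  rw [hfactor, det_smul, ← pow_mul]
  exact (monic_X_pow _).mul_right_ne_zero hGdet

end LowestComponent

section WeightedPermutation

variable {V M R ι : Type*} [CommMonoid M] [CommSemiring R]

/-- The product of the weights met when the letters of `w` are read along the orbit of `r` under
`σ`, where reading the letter `i` at the point `s` has weight `a i s`. -/
def pathWeight (σ : Equiv.Perm ι) (a : V → ι → M) (w : FreeMonoid V) (r : ι) : M :=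
  ∏ j : Fin w.toList.length, a (w.toList.get j) ((σ ^ (j : ℕ)) r)

theorem pathWeight_of_mul (σ : Equiv.Perm ι) (a : V → ι → M) (i : V) (w : FreeMonoid V) (r : ι) :
    pathWeight σ a (FreeMonoid.of i * w) r = a i r * pathWeight σ a w (σ r) :=
  Fin.prod_univ_succ _

theorem map_pathWeight {N F : Type*} [CommMonoid N] [FunLike F M N] [MonoidHomClass F M N] (φ : F)
    (σ : Equiv.Perm ι) (a : V → ι → M) (w : FreeMonoid V) (r : ι) :
    φ (pathWeight σ a w r) = pathWeight σ (fun i s => φ (a i s)) w r :=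
  map_prod φ _ _

theorem permMatrix_mul_diagonal [Fintype ι] [DecidableEq ι] (σ : Equiv.Perm ι) (b : ι → R) :
    σ.permMatrix R * diagonal b = diagonal (b ∘ σ) * σ.permMatrix R := by
  ext r c
  rw [mul_diagonal, diagonal_mul, Equiv.Perm.permMatrix, PEquiv.toMatrix_toPEquiv_apply]
  obtain rfl | hc := eq_or_ne c (σ r)
  · rw [Pi.single_eq_same, one_mul, mul_one, Function.comp_apply]
  · rw [Pi.single_eq_of_ne hc, zero_mul, mul_zero]

theorem lift_diagonal_mul_permMatrix [Fintype ι] [DecidableEq ι] (σ : Equiv.Perm ι)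
    (a : V → ι → R) (w : FreeMonoid V) :
    FreeMonoid.lift (fun i => diagonal (a i) * σ.permMatrix R) w =
      diagonal (pathWeight σ a w) * σ.permMatrix R ^ w.length := by
  induction w using FreeMonoid.inductionOn' with
  | one =>
    have hone : pathWeight σ a 1 = 1 := funext fun r => Fin.prod_univ_zero _
    simp [hone]
  | of_mul i w ih =>
    have hdiag : diagonal (a i) * diagonal (pathWeight σ a w ∘ σ) =
        diagonal (pathWeight σ a (FreeMonoid.of i * w)) := by
      rw [diagonal_mul_diagonal]
      exact congrArg diagonal (funext fun r => (pathWeight_of_mul σ a i w r).symm)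
    rw [map_mul, FreeMonoid.lift_eval_of, ih, ← hdiag, FreeMonoid.length_mul,
      FreeMonoid.length_of, add_comm, pow_succ', mul_assoc, ← mul_assoc (σ.permMatrix R),
      permMatrix_mul_diagonal]
    simp only [mul_assoc]

theorem componentEval_diagonal_mul_permMatrix {k : Type*} [CommSemiring k] [Algebra k R] [Fintype ι]
    [DecidableEq ι] (σ : Equiv.Perm ι) (a : V → ι → R) (m : ℕ) (g : FreeAlgebra k V) :
    componentEval (fun i => diagonal (a i) * σ.permMatrix R) m g =
      diagonal (∑ w ∈ (wordCoeff g).support with w.length = m,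
        wordCoeff g w • pathWeight σ a w) * σ.permMatrix R ^ m := by
  rw [componentEval, ← diagonalAddMonoidHom_apply, map_sum, Finset.sum_mul]
  refine Finset.sum_congr rfl fun w hw => ?_
  rw [lift_diagonal_mul_permMatrix, (Finset.mem_filter.mp hw).2, diagonalAddMonoidHom_apply,
    diagonal_smul, smul_mul_assoc]

open Classical in
theorem pathWeight_indicator (σ : Equiv.Perm ι) {w₀ w : FreeMonoid V} {r : ι}
    (hr : Set.InjOn (fun j : ℕ => (σ ^ j) r) (Set.Iio w₀.length)) (hw : w.length = w₀.length) :
    pathWeight σ (fun i s => if ∃ j < w₀.length, (σ ^ j) r = s ∧ w₀.toList[j]? = some i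
      then (1 : R) else 0) w r = if w = w₀ then 1 else 0 := by
  have hiff : ∀ j : Fin w.toList.length,
      (∃ j' < w₀.length, (σ ^ j') r = (σ ^ (j : ℕ)) r ∧ w₀.toList[j']? = some (w.toList.get j)) ↔
        w₀.toList[(j : ℕ)]? = w.toList[(j : ℕ)]? := by
    intro j
    have hj : (j : ℕ) < w₀.length := hw ▸ j.isLt
    rw [List.get_eq_getElem, ← List.getElem?_eq_getElem j.isLt]
    constructor
    · rintro ⟨j', hj', hrj, hget⟩
      have hjj : j' = j := hr hj' hj hrj
      rwa [hjj] at hget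
    · exact fun h => ⟨j, hj, rfl, h⟩
  simp only [pathWeight, hiff, Finset.prod_ite_zero, Finset.prod_const_one]
  refine if_congr ⟨fun h => ?_, fun h => ?_⟩ rfl rfl
  · refine FreeMonoid.toList.injective (List.ext_getElem? fun j => ?_)
    rcases lt_or_ge j w.length with hj | hj
    · exact (h ⟨j, hj⟩ (Finset.mem_univ _)).symm
    · rw [List.getElem?_eq_none hj, List.getElem?_eq_none (hw.symm.trans_le hj)]
  · subst h
    exact fun _ _ => rfl

end WeightedPermutation

theorem genericWeights_ne_zero {k V ι : Type*} [CommSemiring k] (σ : Equiv.Perm ι)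
    {g : FreeAlgebra k V} {w₀ : FreeMonoid V} (hw₀ : w₀ ∈ (wordCoeff g).support) {r : ι}
    (hr : Set.InjOn (fun j : ℕ => (σ ^ j) r) (Set.Iio w₀.length)) :
    ∑ w ∈ (wordCoeff g).support with w.length = w₀.length,
      wordCoeff g w • pathWeight σ (fun i s => (MvPolynomial.X (i, s) : MvPolynomial (V × ι) k)) w r
        ≠ 0 := by
  classical
  let b : V × ι → k := fun q =>
    if ∃ j < w₀.length, (σ ^ j) r = q.2 ∧ w₀.toList[j]? = some q.1 then 1 else 0
  let a (i : V) (s : ι) : MvPolynomial (V × ι) k := MvPolynomial.X (i, s)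
  have heval : ∀ w, w.length = w₀.length →
      MvPolynomial.aeval b (wordCoeff g w • pathWeight σ a w r) =
        if w = w₀ then wordCoeff g w₀ else 0 := by
    intro w hw
    rw [map_smul, map_pathWeight]
    simp only [MvPolynomial.aeval_X, a, b]
    rw [pathWeight_indicator σ hr hw]
    split_ifs with h <;> simp [h]
  intro hzero
  apply Finsupp.mem_support_iff.mp hw₀
  calc wordCoeff g w₀
      = ∑ w ∈ (wordCoeff g).support with w.length = w₀.length,
          if w = w₀ then wordCoeff g w₀ else 0 := by
        have hmem : w₀ ∈ (wordCoeff g).support.filter (·.length = w₀.length) :=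
          Finset.mem_filter.mpr ⟨hw₀, rfl⟩
        rw [Finset.sum_ite_eq', if_pos hmem]
    _ = MvPolynomial.aeval b (∑ w ∈ (wordCoeff g).support with w.length = w₀.length,
          wordCoeff g w • pathWeight σ a w r) := by
        rw [map_sum]
        exact Finset.sum_congr rfl fun w hw => (heval w (Finset.mem_filter.mp hw).2).symm
    _ = 0 := by rw [hzero, map_zero]

theorem injOn_addRight_one_pow {R : Type*} [AddGroupWithOne R] (p : ℕ) [CharP R p] (r : R) :
    Set.InjOn (fun j : ℕ => ((Equiv.addRight 1 : Equiv.Perm R) ^ j) r) (Set.Iio p) := by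
  have happly (j : ℕ) : ((Equiv.addRight 1 : Equiv.Perm R) ^ j) r = r + j := by
    rw [← Equiv.Perm.iterate_eq_pow, Equiv.coe_addRight, add_right_iterate, nsmul_one]
  simp only [happly]
  exact (add_right_injective r).comp_injOn (CharP.natCast_injOn_Iio R p)

theorem exists_det_ncEval_ne_zero {k : Type*} [Field k] {d : ℕ} {g : FreeAlgebra k (Fin d)}
    (hg : g ≠ 0) :
    ∃ n : ℕ, 1 ≤ n ∧ ∃ Y : Fin d → Matrix (Fin n) (Fin n) k, (ncEval Y g).det ≠ 0 := by
  obtain ⟨w₀, hw₀, hmin⟩ := Finset.exists_min_image (wordCoeff g).support FreeMonoid.length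
    (Finsupp.support_nonempty_iff.mpr (wordCoeff_ne_zero hg))
  let σ : Equiv.Perm (ZMod (w₀.length + 1)) := Equiv.addRight 1
  have hσ (r : ZMod (w₀.length + 1)) : Set.InjOn (fun j : ℕ => (σ ^ j) r) (Set.Iio w₀.length) :=
    (injOn_addRight_one_pow (w₀.length + 1) r).mono (Set.Iio_subset_Iio (Nat.le_succ _))
  let a (i : Fin d) (s : ZMod (w₀.length + 1)) :
      MvPolynomial (Fin d × ZMod (w₀.length + 1)) k := MvPolynomial.X (i, s)
  refine exists_det_ncEval_ne_zero_of_finiteType (det_lift_X_smul_ne_zero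
    (fun i => diagonal (a i) * σ.permMatrix _) hmin ?_)
  rw [componentEval_diagonal_mul_permMatrix, det_mul, det_diagonal, det_pow, det_permutation]
  refine mul_ne_zero (Finset.prod_ne_zero_iff.mpr fun r _ => ?_) ?_
  · rw [Finset.sum_apply]
    exact genericWeights_ne_zero σ hw₀ (hσ r)
  · exact pow_ne_zero _ ((Equiv.Perm.sign σ).isUnit.map (Int.castRingHom _)).ne_zero

theorem determinantal_zeros_reduction_general {k ι : Type*} [Field k] [Finite ι] {d : ℕ}
    (f : ι → FreeAlgebra k (Fin d)) {g : FreeAlgebra k (Fin d)} (hg : g ≠ 0)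
    (h : ∀ n : ℕ, 1 ≤ n → ∀ X : Fin d → Matrix (Fin n) (Fin n) k,
      (∀ j, (ncEval X (f j)).det = 0) → (ncEval X g).det = 0) :
    ∃ j, ∀ n : ℕ, 1 ≤ n → ∀ X : Fin d → Matrix (Fin n) (Fin n) k,
      (ncEval X (f j)).det = 0 → (ncEval X g).det = 0 := by
  by_contra! hcon
  choose n _ X hfX hgX using hcon
  obtain ⟨n₀, hn₀, X₀, hgX₀⟩ := exists_det_ncEval_ne_zero hg
  have : Nonempty (Fin n₀) := ⟨0, hn₀⟩
  let A := Matrix (Fin n₀) (Fin n₀) k × ∀ j, Matrix (Fin (n j)) (Fin (n j)) k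
  let Z : Fin d → A := fun i => (X₀ i, fun j => X j i)
  have hfst (q) : (FreeAlgebra.lift k Z q).1 = ncEval X₀ q :=
    map_freeAlgebraLift (AlgHom.fst k _ _) Z q
  have hsnd (j q) : (FreeAlgebra.lift k Z q).2 j = ncEval (X j) q :=
    map_freeAlgebraLift ((Pi.evalAlgHom k _ j).comp (AlgHom.snd k _ _)) Z q
  obtain ⟨N, hN, Y, hY⟩ := exists_isUnit_det_ncEval_iff (k := k) Z
  have hunit : ∀ q, (ncEval Y q).det ≠ 0 ↔
      (ncEval X₀ q).det ≠ 0 ∧ ∀ j, (ncEval (X j) q).det ≠ 0 := fun q => by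
    rw [← isUnit_iff_ne_zero, hY, Prod.isUnit_iff, Pi.isUnit_iff]
    simp only [hfst, hsnd, Matrix.isUnit_iff_isUnit_det, isUnit_iff_ne_zero]
  refine (hunit g).mpr ⟨hgX₀, hgX⟩ (h N hN Y fun j => ?_)
  by_contra hj
  exact ((hunit (f j)).mp hj).2 j (hfX j)

/-- If `g` is singular wherever all of `f_1, …, f_ℓ` are simultaneously singular,
then `g` is singular wherever a single `f_j` is singular, for some `j`. -/
theorem determinantal_zeros_reduction
    (k : Type*) [Field k] [IsAlgClosed k] [CharZero k]
    (d ℓ : ℕ) (hd : 1 ≤ d)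
    (f : Fin ℓ → FreeAlgebra k (Fin d)) (g : FreeAlgebra k (Fin d))
    (hf : ∀ j, f j ≠ 0) (hg : g ≠ 0)
    (h : ∀ (n : ℕ), 1 ≤ n → ∀ X : Fin d → Matrix (Fin n) (Fin n) k,
        (∀ j, (ncEval X (f j)).det = 0) → (ncEval X g).det = 0) :
    ∃ j : Fin ℓ, ∀ (n : ℕ), 1 ≤ n → ∀ X : Fin d → Matrix (Fin n) (Fin n) k,
        (ncEval X (f j)).det = 0 → (ncEval X g).det = 0 :=
  determinantal_zeros_reduction_general f hg h
end

section
/- Let f, g ∈ k⟨x_1,…,x_d⟩ be stably associated. Then for every n ≥ 1 and every X ∈ M_n(k)^d, the kernels of f(X) and g(X) have the same dimension; in particular, f(X) is singular if and only if g(X) is singular. -/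
/-!
Evaluating at `X` entry by entry is a homomorphism from `2 × 2` matrices over the free algebra to
`2n × 2n` matrices over `k`. It preserves invertibility and sends `diag(f, 1)` to the block-diagonal
matrix `diag(f(X), 1)`, so `diag(f(X), 1)` and `diag(g(X), 1)` differ by invertible factors on both
sides. Such factors change the kernel only by an isomorphism and the determinant only by a unit, and
the identity block contributes to neither.
-/

open Matrix

section MatrixKernel

variable {R m n o : Type*} [CommSemiring R] [Fintype n]

section UnitFactors

variable [Fintype m] [DecidableEq m] [DecidableEq n]

theorem ker_mulVecLin_units_mul_mul_units (P : (Matrix m m R)ˣ) (M : Matrix m n R)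
    (Q : (Matrix n n R)ˣ) :
    (P.val * M * Q.val).mulVecLin.ker =
      M.mulVecLin.ker.comap (toLin'OfInv Q.inv_mul Q.mul_inv).toLinearMap := by
  have factorization : (P.val * M * Q.val).mulVecLin =
      (toLin'OfInv P.inv_mul P.mul_inv).toLinearMap ∘ₗ
        M.mulVecLin ∘ₗ (toLin'OfInv Q.inv_mul Q.mul_inv).toLinearMap := by
    rw [Matrix.mul_assoc, mulVecLin_mul, mulVecLin_mul]
    rfl
  rw [factorization, LinearEquiv.ker_comp, LinearMap.ker_comp]

/-- The isomorphism `ker (P * M * Q) ≃ ker M`, `v ↦ Q *ᵥ v`, for invertible `P` and `Q`. -/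
def kerUnitsMulMulUnitsEquiv (P : (Matrix m m R)ˣ) (M : Matrix m n R) (Q : (Matrix n n R)ˣ) :
    (P.val * M * Q.val).mulVecLin.ker ≃ₗ[R] M.mulVecLin.ker :=
  LinearEquiv.ofEq _ _ (ker_mulVecLin_units_mul_mul_units P M Q) ≪≫ₗ
    (toLin'OfInv Q.inv_mul Q.mul_inv).ofSubmodule' M.mulVecLin.ker

end UnitFactors

section BlockDiagonal

variable [Fintype o] [DecidableEq o]

theorem blockDiagonal_mulVec_apply (M : o → Matrix m n R) (v : n × o → R) (i : m) (k : o) :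
    (blockDiagonal M *ᵥ v) (i, k) = (M k *ᵥ fun j => v (j, k)) i := by
  simp only [mulVec, dotProduct, blockDiagonal_apply, Fintype.sum_prod_type, ite_mul, zero_mul,
    Finset.sum_ite_eq, Finset.mem_univ, if_true]

theorem blockDiagonal_mulVec_eq_zero_iff {M : o → Matrix m n R} {v : n × o → R} :
    blockDiagonal M *ᵥ v = 0 ↔ ∀ k, (M k *ᵥ fun j => v (j, k)) = 0 := by
  simp only [funext_iff, Prod.forall, blockDiagonal_mulVec_apply, Pi.zero_apply]
  exact forall_comm

/-- The kernel of a block-diagonal matrix is the product of the kernels of its blocks. -/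
def kerBlockDiagonalEquiv (M : o → Matrix m n R) :
    (blockDiagonal M).mulVecLin.ker ≃ₗ[R] ∀ k, (M k).mulVecLin.ker where
  toFun v k := ⟨fun j => v.val (j, k), blockDiagonal_mulVec_eq_zero_iff.mp v.property k⟩
  invFun w := ⟨fun jk => (w jk.2).val jk.1,
    blockDiagonal_mulVec_eq_zero_iff.mpr fun k => (w k).property⟩
  map_add' _ _ := rfl
  map_smul' _ _ := rfl

/-- `kerBlockDiagonalEquiv` for two blocks, with the product written as a binary one. -/
def kerBlockDiagonalFinTwoEquiv (M : Fin 2 → Matrix m n R) :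
    (blockDiagonal M).mulVecLin.ker ≃ₗ[R] (M 0).mulVecLin.ker × (M 1).mulVecLin.ker :=
  kerBlockDiagonalEquiv M ≪≫ₗ LinearEquiv.piFinTwo R fun k => (M k).mulVecLin.ker

/-- Deleting an identity block does not change the kernel of a block-diagonal matrix. -/
def kerBlockDiagonalOneEquiv [DecidableEq n] (A : Matrix n n R) :
    (blockDiagonal ![A, 1]).mulVecLin.ker ≃ₗ[R] A.mulVecLin.ker :=
  haveI : Unique (1 : Matrix n n R).mulVecLin.ker :=
    (LinearEquiv.ofEq _ ⊥ (by rw [mulVecLin_one, LinearMap.ker_id])).toEquiv.unique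
  have split : (blockDiagonal ![A, 1]).mulVecLin.ker ≃ₗ[R]
      A.mulVecLin.ker × (1 : Matrix n n R).mulVecLin.ker := kerBlockDiagonalFinTwoEquiv ![A, 1]
  split ≪≫ₗ LinearEquiv.prodUnique

end BlockDiagonal

end MatrixKernel

section Determinant

variable {R n : Type*} [CommRing R] [Fintype n] [DecidableEq n]

theorem det_blockDiagonal_one (A : Matrix n n R) : (blockDiagonal ![A, 1]).det = A.det := by
  rw [det_blockDiagonal, Fin.prod_univ_two, cons_val_zero, cons_val_one, cons_val_zero, det_one,
    mul_one]

theorem associated_det_units_mul_mul_units (P Q : (Matrix n n R)ˣ) (M : Matrix n n R) :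
    Associated (P.val * M * Q.val).det M.det := by
  rw [det_mul, det_mul]
  exact (associated_mul_unit_left _ _ (Q.isUnit.map detMonoidHom)).trans
    (associated_unit_mul_left _ _ (P.isUnit.map detMonoidHom))

end Determinant

section Evaluation

variable {k o : Type*} [CommSemiring k] [Fintype o] [DecidableEq o] {d n : ℕ}

/-- Entrywise evaluation at `X` of matrices over the free algebra, the resulting matrix of
matrices being flattened. The outer index `o` is put second, which is the indexing convention of
`Matrix.blockDiagonal`. -/
noncomputable def ncEvalMatrix (X : Fin d → Matrix (Fin n) (Fin n) k) :
    Matrix o o (FreeAlgebra k (Fin d)) →ₐ[k] Matrix (Fin n × o) (Fin n × o) k :=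
  ((compAlgEquiv o (Fin n) k k).trans
    (reindexAlgEquiv k k (Equiv.prodComm o (Fin n)))).toAlgHom.comp (FreeAlgebra.lift k X).mapMatrix

theorem ncEvalMatrix_apply (X : Fin d → Matrix (Fin n) (Fin n) k)
    (A : Matrix o o (FreeAlgebra k (Fin d))) (i j : Fin n) (a b : o) :
    ncEvalMatrix X A (i, a) (j, b) = ncEval X (A a b) i j :=
  rfl

theorem ncEvalMatrix_diagonal (X : Fin d → Matrix (Fin n) (Fin n) k)
    (f : o → FreeAlgebra k (Fin d)) :
    ncEvalMatrix X (diagonal f) = blockDiagonal fun a => ncEval X (f a) := by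
  ext ⟨i, a⟩ ⟨j, b⟩
  rw [ncEvalMatrix_apply, blockDiagonal_apply, diagonal_apply]
  split_ifs
  · rfl
  · rw [ncEval, map_zero, Matrix.zero_apply]

theorem ncEvalMatrix_diagonal_one (X : Fin d → Matrix (Fin n) (Fin n) k)
    (f : FreeAlgebra k (Fin d)) :
    ncEvalMatrix X (diagonal ![f, 1]) = blockDiagonal ![ncEval X f, 1] := by
  rw [ncEvalMatrix_diagonal]
  congr 1
  ext a : 1
  fin_cases a
  · rfl
  · exact map_one (FreeAlgebra.lift k X)

theorem StablyAssociated.exists_units_blockDiagonal_ncEval {f g : FreeAlgebra k (Fin d)}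
    (hfg : StablyAssociated f g) (X : Fin d → Matrix (Fin n) (Fin n) k) :
    ∃ P Q : (Matrix (Fin n × Fin 2) (Fin n × Fin 2) k)ˣ,
      blockDiagonal ![ncEval X f, 1] = P.val * blockDiagonal ![ncEval X g, 1] * Q.val := by
  obtain ⟨P, Q, hP, hQ, h⟩ := hfg
  refine ⟨(hP.map (ncEvalMatrix X)).unit, (hQ.map (ncEvalMatrix X)).unit, ?_⟩
  simp only [IsUnit.unit_spec, ← ncEvalMatrix_diagonal_one, ← map_mul, h]

end Evaluation

theorem stablyAssociated_ker_dim_eq_general {k : Type*} [CommRing k] {d n : ℕ}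
    {f g : FreeAlgebra k (Fin d)} (hfg : StablyAssociated f g)
    (X : Fin d → Matrix (Fin n) (Fin n) k) :
    Nonempty ((ncEval X f).mulVecLin.ker ≃ₗ[k] (ncEval X g).mulVecLin.ker) ∧
      Associated (ncEval X f).det (ncEval X g).det := by
  obtain ⟨P, Q, h⟩ := hfg.exists_units_blockDiagonal_ncEval X
  constructor
  · exact ⟨(kerBlockDiagonalOneEquiv _).symm ≪≫ₗ LinearEquiv.ofEq _ _ (by rw [h]) ≪≫ₗ
      kerUnitsMulMulUnitsEquiv P _ Q ≪≫ₗ kerBlockDiagonalOneEquiv _⟩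
  · rw [← det_blockDiagonal_one, h, ← det_blockDiagonal_one (ncEval X g)]
    exact associated_det_units_mul_mul_units P Q _

/-- Stably associated noncommutative polynomials have values with kernels of equal
dimension at every matrix tuple; in particular their values are simultaneously
singular. -/
theorem stablyAssociated_ker_dim_eq
    (k : Type*) [Field k] [IsAlgClosed k] [CharZero k]
    (d : ℕ) (hd : 1 ≤ d) (f g : FreeAlgebra k (Fin d))
    (hfg : StablyAssociated f g) :
    ∀ (n : ℕ), 1 ≤ n → ∀ X : Fin d → Matrix (Fin n) (Fin n) k,
      Module.finrank k (LinearMap.ker (ncEval X f).mulVecLin) =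
        Module.finrank k (LinearMap.ker (ncEval X g).mulVecLin) ∧
      ((ncEval X f).det = 0 ↔ (ncEval X g).det = 0) := by
  intro n _ X
  obtain ⟨⟨e⟩, hdet⟩ := stablyAssociated_ker_dim_eq_general hfg X
  exact ⟨e.finrank_eq, hdet.eq_zero_iff⟩
end

section
/- Let f_1,…,f_ℓ, g ∈ k⟨x_1,…,x_d⟩. Then the following are equivalent: (i) for every n ≥ 1 and every X ∈ M_n(k)^d, if tr f_j(X) = 0 for all j = 1,…,ℓ then tr g(X) = 0; (ii) either 1 or g can be written as a k-linear combination of f_1,…,f_ℓ and finitely many commutators [p, q] = pq − qp with p, q ∈ k⟨x_1,…,x_d⟩. -/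
/-- `h` is a linear combination of `f_1, …, f_ℓ` and finitely many commutators. -/
def IsCombOfAndCommutators {k : Type*} [CommRing k] {d ℓ : ℕ}
    (f : Fin ℓ → FreeAlgebra k (Fin d)) (h : FreeAlgebra k (Fin d)) : Prop :=
  ∃ (c : Fin ℓ → k) (L : List (FreeAlgebra k (Fin d) × FreeAlgebra k (Fin d))),
    h = (∑ j, c j • f j) + (L.map fun pq => pq.1 * pq.2 - pq.2 * pq.1).sum

/-!
If neither `1` nor `g` lies in the span `S` of the `f j` and the commutators, some linear
functional `ψ` vanishes on `S` and is nonzero at both `1` and `g`. It is tracial, so on monomials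
it is a function of cyclic words, and it suffices to find matrices `X` whose trace functional agrees
with a nonzero multiple of `ψ` on all words up to a given length.

The words are treated by increasing length. For a word `w` of length `n`, consider a directed cycle
with `n` edges spelling `w`, one of them of weight `b w`. Adding the matrices of these cycles as
diagonal blocks does not change the trace of any nonempty word shorter than `n`, since closed walks
on the cycles have length divisible by `n`, and changes the trace of a word of length `n` by the sum
of `b` over its `n` rotations. As `n` is invertible, `b` can be chosen to prescribe the traces of
all words of length `n` at once. The size of the matrices does not depend on the function
prescribed, so `ψ` can be rescaled beforehand to have the size as its value at `1`.
-/

open Matrix Module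

/-- A map on a multiplicative structure is tracial if it does not distinguish `p * q` from `q * p`.
It is used for functionals on an algebra and for functions on words (which it makes functions on
cyclic words). -/
def IsTracial {M A : Type*} [Mul M] (φ : M → A) : Prop :=
  ∀ p q, φ (p * q) = φ (q * p)

section Words

variable {α R : Type*}

/-- The word with letters `u 0, …, u (n - 1)`. -/
def wordOfFn {n : ℕ} (u : Fin n → α) : FreeMonoid α :=
  FreeMonoid.ofList (List.ofFn u)

lemma wordOfFn_get (v : FreeMonoid α) : wordOfFn v.toList.get = v :=
  List.ofFn_get _

lemma exists_wordOfFn_eq {n : ℕ} {v : FreeMonoid α} (hv : v.length = n) :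
    ∃ u : Fin n → α, wordOfFn u = v := by
  subst hv
  exact ⟨_, wordOfFn_get v⟩

lemma wordOfFn_succ {n : ℕ} (u : Fin (n + 1) → α) :
    wordOfFn u = FreeMonoid.of (u 0) * wordOfFn (fun j => u j.succ) := by
  simp [wordOfFn, List.ofFn_succ, FreeMonoid.ofList_cons]

lemma IsTracial.wordOfFn_add_left {χ : FreeMonoid α → R} (hχ : IsTracial χ) {n : ℕ}
    (p : Fin n) (u : Fin n → α) :
    χ (wordOfFn fun j => u (p + j)) = χ (wordOfFn u) := by
  have rotation : List.ofFn (fun j => u (p + j)) = (List.ofFn u).rotate p :=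
    List.ext_getElem (by simp) fun j _ _ => by simp [List.getElem_rotate, Fin.add_def, add_comm]
  rw [wordOfFn, rotation, List.rotate_eq_drop_append_take (by simp [p.is_lt.le]),
    FreeMonoid.ofList_append, hχ, ← FreeMonoid.ofList_append, List.take_append_drop, wordOfFn]

end Words

section Transition

variable {ι α R : Type*} [DecidableEq ι]

/-- The matrices, one for each letter, of the labelled weighted graph with a single edge
`p → σ p` out of each vertex `p`, carrying the letter `a` with weight `c p a`. -/
def transitionMatrix [Zero R] (σ : ι → ι) (c : ι → α → R) (a : α) : Matrix ι ι R :=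
  of fun p q => if q = σ p then c p a else 0

variable [Fintype ι] [CommSemiring R]

lemma lift_transitionMatrix_wordOfFn_apply (σ : ι → ι) (c : ι → α → R) {n : ℕ} (u : Fin n → α)
    (p q : ι) :
    FreeMonoid.lift (transitionMatrix σ c) (wordOfFn u) p q =
      if q = σ^[n] p then ∏ j : Fin n, c (σ^[j] p) (u j) else 0 := by
  induction n generalizing p with
  | zero => simp [wordOfFn, one_apply, eq_comm]
  | succ n ih =>
    rw [wordOfFn_succ, map_mul, FreeMonoid.lift_eval_of, mul_apply,
      Finset.sum_eq_single (σ p) (fun x _ hx => by simp [transitionMatrix, hx]) (by simp)]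
    simp [transitionMatrix, ih, Fin.prod_univ_succ]

lemma trace_lift_transitionMatrix_wordOfFn (σ : ι → ι) (c : ι → α → R) {n : ℕ} (u : Fin n → α) :
    (FreeMonoid.lift (transitionMatrix σ c) (wordOfFn u)).trace =
      ∑ p, if σ^[n] p = p then ∏ j : Fin n, c (σ^[j] p) (u j) else 0 := by
  simp [trace, lift_transitionMatrix_wordOfFn_apply, eq_comm]

end Transition

section Cycles

variable {α R : Type*} [DecidableEq α] {n : ℕ} [NeZero n]

/-- The matrices of the disjoint union, over all words `w` of length `n`, of directed cycles with
`n` edges spelling `w`; the edge leaving the vertex `(w, 0)` has weight `b w`, the other edges have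
weight `1`. -/
def cycleMatrix [Zero R] [One R] (b : (Fin n → α) → R) :
    α → Matrix ((Fin n → α) × Fin n) ((Fin n → α) × Fin n) R :=
  transitionMatrix (fun x => (x.1, x.2 + 1)) fun x a =>
    if x.1 x.2 = a then (if x.2 = 0 then b x.1 else 1) else 0

lemma iterate_cycle_step {W : Type*} (w : W) (p : Fin n) (r : ℕ) :
    (fun x : W × Fin n => (x.1, x.2 + 1))^[r] (w, p) = (w, p + Fin.ofNat n r) := by
  induction r with
  | zero => simp
  | succ r ih =>
    rw [Function.iterate_succ_apply', ih]
    ext <;> simp [Fin.val_add, add_assoc]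

variable [Fintype α] [CommSemiring R]

lemma trace_lift_cycleMatrix_of_length_lt (b : (Fin n → α) → R) {v : FreeMonoid α}
    (hv : 0 < v.length) (hvn : v.length < n) :
    (FreeMonoid.lift (cycleMatrix b) v).trace = 0 := by
  rw [cycleMatrix, ← wordOfFn_get v, trace_lift_transitionMatrix_wordOfFn]
  refine Finset.sum_eq_zero fun x _ => if_neg fun hx => ?_
  rw [iterate_cycle_step] at hx
  have hdvd : n ∣ v.toList.length := by simpa using congrArg Prod.snd hx
  exact Nat.not_dvd_of_pos_of_lt hv hvn hdvd

lemma trace_lift_cycleMatrix_wordOfFn (b : (Fin n → α) → R) (u : Fin n → α) :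
    (FreeMonoid.lift (cycleMatrix b) (wordOfFn u)).trace = ∑ p, b fun j => u (p + j) := by
  have weight (w : Fin n → α) (p : Fin n) :
      (∏ j, if w (p + j) = u j then (if p + j = 0 then b w else 1) else 0) =
        if w = fun j => u (-p + j) then b w else 0 := by
    have spells : (∀ j, w (p + j) = u j) ↔ w = fun j => u (-p + j) :=
      ⟨fun h => funext fun j => by simp [← h], fun h j => by simp [h]⟩
    have prod_eq : (∏ j, if p + j = 0 then b w else 1) = b w :=
      (Equiv.prod_comp (Equiv.addLeft p) fun x => if x = 0 then b w else 1).trans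
        (Fintype.prod_ite_eq' 0 fun _ => b w)
    rw [Fintype.prod_ite_zero, prod_eq]
    simp only [spells]
  rw [cycleMatrix, trace_lift_transitionMatrix_wordOfFn, Fintype.sum_prod_type_right]
  simp only [iterate_cycle_step, Fin.ofNat_self, add_zero, ↓reduceIte, Fin.ofNat_eq_cast,
    Fin.cast_val_eq_self, weight, Finset.sum_ite_eq', Finset.mem_univ]
  exact Equiv.sum_comp (Equiv.neg (Fin n)) fun p => b fun j => u (p + j)

end Cycles

section Realization

variable {α ι κ R : Type*} [CommSemiring R]
  [Fintype ι] [DecidableEq ι] [Fintype κ] [DecidableEq κ]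

variable (α ι R) in
/-- Traces are prescribable up to length `D` if every tracial function on words is, on the
nonempty words of length at most `D`, the trace of a tuple of `ι × ι` matrices. The size `ι` does
not depend on the function, and the empty word is excluded because its trace is the size. -/
def TracesPrescribable (D : ℕ) : Prop :=
  ∀ χ : FreeMonoid α → R, IsTracial χ → ∃ X : α → Matrix ι ι R, ∀ v : FreeMonoid α,
    0 < v.length → v.length ≤ D → (FreeMonoid.lift X v).trace = χ v

lemma isTracial_trace_lift (X : α → Matrix ι ι R) :
    IsTracial fun v => (FreeMonoid.lift X v).trace :=
  fun p q => by simp only [map_mul]; exact trace_mul_comm _ _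

lemma trace_lift_fromBlocks (X : α → Matrix ι ι R) (Y : α → Matrix κ κ R) (v : FreeMonoid α) :
    (FreeMonoid.lift (fun a => fromBlocks (X a) 0 0 (Y a)) v).trace =
      (FreeMonoid.lift X v).trace + (FreeMonoid.lift Y v).trace := by
  have blocks : FreeMonoid.lift (fun a => fromBlocks (X a) 0 0 (Y a)) v =
      fromBlocks (FreeMonoid.lift X v) 0 0 (FreeMonoid.lift Y v) := by
    induction v using FreeMonoid.inductionOn' with
    | one => simp
    | of_mul a v ih => simp [ih, fromBlocks_multiply]
  simp [blocks, trace]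

lemma exists_cycleMatrix_trace_eq [DecidableEq α] [Fintype α] [Algebra ℚ R] {n : ℕ} [NeZero n]
    {χ : FreeMonoid α → R} (hχ : IsTracial χ) :
    ∃ b : (Fin n → α) → R, ∀ v : FreeMonoid α, v.length = n →
      (FreeMonoid.lift (cycleMatrix b) v).trace = χ v := by
  refine ⟨fun w => (n : ℚ)⁻¹ • χ (wordOfFn w), fun v hv => ?_⟩
  obtain ⟨u, rfl⟩ := exists_wordOfFn_eq hv
  simp only [trace_lift_cycleMatrix_wordOfFn, hχ.wordOfFn_add_left]
  rw [Finset.sum_const, Finset.card_fin, ← Nat.cast_smul_eq_nsmul ℚ,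
    smul_inv_smul₀ (NeZero.ne _)]

namespace TracesPrescribable

variable (α ι R) in
lemma zero : TracesPrescribable α ι R 0 :=
  fun _ _ => ⟨0, fun _ hv hv' => absurd hv' hv.not_ge⟩

lemma reindex {D : ℕ} (e : ι ≃ κ) (h : TracesPrescribable α ι R D) :
    TracesPrescribable α κ R D := by
  intro χ hχ
  obtain ⟨X, hX⟩ := h χ hχ
  refine ⟨fun a => reindexAlgEquiv R R e (X a), fun v hv hvD => ?_⟩
  have lift_reindex : FreeMonoid.lift (fun a => reindexAlgEquiv R R e (X a)) v =
      reindexAlgEquiv R R e (FreeMonoid.lift X v) :=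
    (FreeMonoid.hom_map_lift (reindexAlgEquiv R R e : Matrix ι ι R →* Matrix κ κ R) X v).symm
  rw [lift_reindex, ← hX v hv hvD]
  exact e.symm.sum_comp fun i => FreeMonoid.lift X v i i

lemma succ {R : Type*} [CommRing R] [DecidableEq α] [Fintype α] [Algebra ℚ R] {D : ℕ}
    (h : TracesPrescribable α ι R D) :
    TracesPrescribable α (ι ⊕ (Fin (D + 1) → α) × Fin (D + 1)) R (D + 1) := by
  intro χ hχ
  obtain ⟨X, hX⟩ := h χ hχ
  obtain ⟨b, hb⟩ := exists_cycleMatrix_trace_eq (n := D + 1)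
    (χ := fun v => χ v - (FreeMonoid.lift X v).trace)
    fun p q => by simp only [hχ p q, isTracial_trace_lift X p q]
  refine ⟨fun a => fromBlocks (X a) 0 0 (cycleMatrix b a), fun v hv hvD => ?_⟩
  rw [trace_lift_fromBlocks]
  rcases hvD.lt_or_eq with hlt | heq
  · rw [hX v hv (Nat.le_of_lt_succ hlt), trace_lift_cycleMatrix_of_length_lt b hv hlt, add_zero]
  · rw [hb v heq, add_sub_cancel]

end TracesPrescribable

theorem exists_tracesPrescribable (α R : Type*) [Finite α] [CommRing R] [Algebra ℚ R] (D : ℕ) :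
    ∃ n, 1 ≤ n ∧ TracesPrescribable α (Fin n) R D := by
  classical
  have := Fintype.ofFinite α
  induction D with
  | zero => exact ⟨1, le_rfl, .zero α (Fin 1) R⟩
  | succ D ih =>
    obtain ⟨n, hn, h⟩ := ih
    exact ⟨_, hn.trans (by simp), h.succ.reindex (Fintype.equivFin _)⟩

end Realization

section FreeAlgebra

variable {α k : Type*}

lemma basisFreeMonoid_apply [CommSemiring k] (v : FreeMonoid α) :
    FreeAlgebra.basisFreeMonoid k α v = FreeMonoid.lift (FreeAlgebra.ι k) v := by
  simp [FreeAlgebra.basisFreeMonoid, FreeAlgebra.equivMonoidAlgebraFreeMonoid]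

lemma lift_basisFreeMonoid [CommSemiring k] {A : Type*} [Semiring A] [Algebra k A] (X : α → A)
    (v : FreeMonoid α) :
    FreeAlgebra.lift k X (FreeAlgebra.basisFreeMonoid k α v) = FreeMonoid.lift X v := by
  rw [basisFreeMonoid_apply]
  simpa [Function.comp_def] using
    FreeMonoid.hom_map_lift (FreeAlgebra.lift k X : FreeAlgebra k α →* A) (FreeAlgebra.ι k) v

lemma IsTracial.comp_basisFreeMonoid [CommSemiring k] {A : Type*} {ψ : FreeAlgebra k α → A}
    (hψ : IsTracial ψ) : IsTracial fun v => ψ (FreeAlgebra.basisFreeMonoid k α v) :=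
  fun p q => by simp only [basisFreeMonoid_apply, map_mul, hψ (FreeMonoid.lift _ p)]

lemma exists_subset_span_length_le [CommSemiring k] {s : Set (FreeAlgebra k α)} (hs : s.Finite) :
    ∃ D, s ⊆ Submodule.span k
      (FreeAlgebra.basisFreeMonoid k α '' {v : FreeMonoid α | v.length ≤ D}) := by
  let b := FreeAlgebra.basisFreeMonoid k α
  obtain ⟨D, hD⟩ := ((hs.biUnion fun a _ => (b.repr a).support.finite_toSet).image
    FreeMonoid.length).bddAbove
  exact ⟨D, fun a ha => b.mem_span_image.2 fun v hv =>
    hD (Set.mem_image_of_mem _ (Set.mem_biUnion ha hv))⟩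

theorem exists_trace_lift_eq_mul [Field k] [CharZero k] [Finite α] {s : Set (FreeAlgebra k α)}
    (hs : s.Finite) {ψ : Dual k (FreeAlgebra k α)} (hψ : IsTracial ψ) (hψ_one : ψ 1 ≠ 0) :
    ∃ n, 1 ≤ n ∧ ∃ X : α → Matrix (Fin n) (Fin n) k, ∃ c : k, c ≠ 0 ∧
      ∀ a ∈ s, (FreeAlgebra.lift k X a).trace = c * ψ a := by
  obtain ⟨D, hD⟩ := exists_subset_span_length_le hs
  obtain ⟨n, hn, prescribable⟩ := exists_tracesPrescribable α k D
  have hn' : (n : k) ≠ 0 := Nat.cast_ne_zero.2 (Nat.one_le_iff_ne_zero.1 hn)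
  let c : k := n / ψ 1
  obtain ⟨X, hX⟩ := prescribable (fun v => c * ψ (FreeAlgebra.basisFreeMonoid k α v))
    fun p q => congrArg (c * ·) (hψ.comp_basisFreeMonoid p q)
  have eqOn_words : Set.EqOn (traceLinearMap (Fin n) k k ∘ₗ (FreeAlgebra.lift k X).toLinearMap)
      ⇑(c • ψ) (FreeAlgebra.basisFreeMonoid k α '' {v | v.length ≤ D}) := by
    rintro _ ⟨v, hv, rfl⟩
    rcases v.length.eq_zero_or_pos with hv0 | hv0
    · rw [FreeMonoid.length_eq_zero.1 hv0]
      simp [basisFreeMonoid_apply, c, hψ_one]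
    · simpa [lift_basisFreeMonoid] using hX v hv0 hv
  exact ⟨n, hn, X, c, div_ne_zero hn' hψ_one,
    fun a ha => (LinearMap.eqOn_span' eqOn_words (hD ha) :)⟩

end FreeAlgebra

section Commutators

variable (k A : Type*) [CommSemiring k] [Ring A] [Algebra k A]

/-- The submodule `[A, A]` spanned by the commutators of an algebra `A`. -/
def commutatorSpan : Submodule k A :=
  Submodule.span k (Set.range fun pq : A × A => pq.1 * pq.2 - pq.2 * pq.1)

variable {k A}

lemma commutatorSpan_le_ker_iff {M : Type*} [AddCommGroup M] [Module k M] {φ : A →ₗ[k] M} :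
    commutatorSpan k A ≤ LinearMap.ker φ ↔ IsTracial φ := by
  simp [commutatorSpan, Submodule.span_le, Set.range_subset_iff, IsTracial, sub_eq_zero]

lemma mem_commutatorSpan_iff_exists_list {x : A} :
    x ∈ commutatorSpan k A ↔
      ∃ L : List (A × A), x = (L.map fun pq => pq.1 * pq.2 - pq.2 * pq.1).sum := by
  refine ⟨fun hx => ?_, ?_⟩
  · induction hx using Submodule.span_induction with
    | mem x hx =>
      obtain ⟨pq, rfl⟩ := hx
      exact ⟨[pq], by simp⟩
    | zero => exact ⟨[], by simp⟩
    | add x y _ _ hx hy =>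
      obtain ⟨⟨L, rfl⟩, L', rfl⟩ := hx, hy
      exact ⟨L ++ L', by simp⟩
    | smul c x _ hx =>
      obtain ⟨L, rfl⟩ := hx
      exact ⟨L.map fun pq => (c • pq.1, pq.2),
        by simp [List.smul_sum, Function.comp_def, smul_sub]⟩
  · rintro ⟨L, rfl⟩
    refine list_sum_mem fun x hx => ?_
    obtain ⟨pq, -, rfl⟩ := List.mem_map.1 hx
    exact Submodule.subset_span ⟨pq, rfl⟩

lemma isCombOfAndCommutators_iff_mem {k : Type*} [CommRing k] {d ℓ : ℕ}
    {f : Fin ℓ → FreeAlgebra k (Fin d)} {h : FreeAlgebra k (Fin d)} :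
    IsCombOfAndCommutators f h ↔
      h ∈ Submodule.span k (Set.range f) ⊔ commutatorSpan k (FreeAlgebra k (Fin d)) := by
  simp only [IsCombOfAndCommutators, Submodule.mem_sup, Submodule.mem_span_range_iff_exists_fun,
    mem_commutatorSpan_iff_exists_list]
  constructor
  · rintro ⟨c, L, rfl⟩
    exact ⟨_, ⟨c, rfl⟩, _, ⟨L, rfl⟩, rfl⟩
  · rintro ⟨_, ⟨c, rfl⟩, _, ⟨L, rfl⟩, rfl⟩
    exact ⟨c, L, rfl⟩

end Commutators

lemma exists_dual_le_ker_forall_apply_ne_zero {k V ι : Type*} [Field k] [Infinite k]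
    [AddCommGroup V] [Module k V] [Finite ι] (S : Submodule k V) {v : ι → V} (hv : ∀ i, v i ∉ S) :
    ∃ ψ : Dual k V, S ≤ LinearMap.ker ψ ∧ ∀ i, ψ (v i) ≠ 0 := by
  obtain ⟨φ, hφ⟩ := exists_dual_forall_apply_ne_zero (K := k) (fun i => S.mkQ (v i))
    fun i => by simpa using hv i
  exact ⟨φ ∘ₗ S.mkQ, fun x hx => by simp [(Submodule.Quotient.mk_eq_zero S).2 hx], hφ⟩

lemma IsCombOfAndCommutators.trace_ncEval_eq_zero {k : Type*} [CommRing k] {d ℓ n : ℕ}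
    {f : Fin ℓ → FreeAlgebra k (Fin d)} {h : FreeAlgebra k (Fin d)}
    (hh : IsCombOfAndCommutators f h) {X : Fin d → Matrix (Fin n) (Fin n) k}
    (hX : ∀ j, (ncEval X (f j)).trace = 0) : (ncEval X h).trace = 0 := by
  let τ : Dual k (FreeAlgebra k (Fin d)) :=
    traceLinearMap (Fin n) k k ∘ₗ (FreeAlgebra.lift k X).toLinearMap
  have tracial : IsTracial τ := fun p q => by simpa [τ] using trace_mul_comm _ _
  have span_le_ker : Submodule.span k (Set.range f) ≤ LinearMap.ker τ :=
    Submodule.span_le.2 (Set.range_subset_iff.2 hX)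
  exact sup_le span_le_ker (commutatorSpan_le_ker_iff.2 tracial)
    (isCombOfAndCommutators_iff_mem.1 hh)

theorem tracial_nullstellensatz_general
    (k : Type*) [Field k] [CharZero k] (d ℓ : ℕ)
    (f : Fin ℓ → FreeAlgebra k (Fin d)) (g : FreeAlgebra k (Fin d)) :
    (∀ (n : ℕ), 1 ≤ n → ∀ X : Fin d → Matrix (Fin n) (Fin n) k,
        (∀ j, (ncEval X (f j)).trace = 0) → (ncEval X g).trace = 0) ↔
      (IsCombOfAndCommutators f (1 : FreeAlgebra k (Fin d)) ∨
        IsCombOfAndCommutators f g) := by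
  constructor
  · intro H
    by_contra! hcomb
    simp only [isCombOfAndCommutators_iff_mem] at hcomb
    obtain ⟨ψ, hker, hψ⟩ := exists_dual_le_ker_forall_apply_ne_zero _ (v := ![1, g])
      (Fin.forall_fin_two.2 hcomb)
    obtain ⟨hψ_one, hψ_g⟩ := Fin.forall_fin_two.1 hψ
    obtain ⟨hspan, hcommutator⟩ := sup_le_iff.1 hker
    obtain ⟨n, hn, X, c, hc, hX⟩ := exists_trace_lift_eq_mul ((Set.finite_range f).insert g)
      (commutatorSpan_le_ker_iff.1 hcommutator) hψ_one
    have trace_f (j : Fin ℓ) : (ncEval X (f j)).trace = 0 := by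
      have hψ_f : ψ (f j) = 0 := hspan (Submodule.subset_span ⟨j, rfl⟩)
      rw [ncEval, hX _ (.inr ⟨j, rfl⟩), hψ_f, mul_zero]
    have trace_g : (ncEval X g).trace ≠ 0 := by
      rw [ncEval, hX g (.inl rfl)]
      exact mul_ne_zero hc hψ_g
    exact trace_g (H n hn X trace_f)
  · rintro (h_one | h_g) n hn X hX
    · have trace_one_eq_zero : (n : k) = 0 := by simpa [ncEval] using h_one.trace_ncEval_eq_zero hX
      exact absurd (Nat.cast_eq_zero.1 trace_one_eq_zero) (Nat.one_le_iff_ne_zero.1 hn)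
    · exact h_g.trace_ncEval_eq_zero hX

/-- Klep–Špenko tracial Nullstellensatz: `tr g(X) = 0` whenever
`tr f_1(X) = ⋯ = tr f_ℓ(X) = 0` if and only if `1` or `g` is a linear
combination of `f_1, …, f_ℓ` and commutators. -/
theorem tracial_nullstellensatz
    (k : Type*) [Field k] [IsAlgClosed k] [CharZero k]
    (d ℓ : ℕ) (hd : 1 ≤ d)
    (f : Fin ℓ → FreeAlgebra k (Fin d)) (g : FreeAlgebra k (Fin d)) :
    (∀ (n : ℕ), 1 ≤ n → ∀ X : Fin d → Matrix (Fin n) (Fin n) k,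
        (∀ j, (ncEval X (f j)).trace = 0) → (ncEval X g).trace = 0) ↔
      (IsCombOfAndCommutators f (1 : FreeAlgebra k (Fin d)) ∨
        IsCombOfAndCommutators f g) :=
  tracial_nullstellensatz_general k d ℓ f g
end

section
/- Let f ∈ k⟨x_1,…,x_d⟩. Then tr f(X) = 0 for every n ≥ 1 and every X ∈ M_n(k)^d if and only if f is a finite sum of commutators, i.e. f = Σ_i [p_i, q_i] with p_i, q_i ∈ k⟨x_1,…,x_d⟩, where [p, q] = pq − qp. -/
/-!
Modulo commutators a word may be rotated, so every `f` is congruent to a combination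
`g = ∑ g(C) C` of cyclic words `C`, and it remains to see that `g = 0` as soon as all traces of `g`
vanish. The zero matrix gives `g(nil) = 0`. If `g ≠ 0`, take a cyclic word `C` of *maximal* length
in the support of `g`, write its letters around an oriented cycle, and let `X_i` be the adjacency
matrix of the edges labelled `i`. A nonempty word shorter than `C` labels no closed walk, and a word
of the same length labels one only if it is a rotation of `C`. Hence `tr g(X) = N g(C)`, where `N`
is the positive number of rotations fixing `C`, and `g(C) = 0` after all.
-/

section Commutators

variable (R A : Type*) [CommSemiring R] [Ring A] [Algebra R A]

/-- The submodule `[A, A]` of an associative algebra `A`: the linear span of the commutators, not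
the two-sided ideal they generate. -/
def commutatorSubmodule : Submodule R A :=
  Submodule.span R (Set.range fun pq : A × A => pq.1 * pq.2 - pq.2 * pq.1)

variable {R A}

lemma commutator_mem_commutatorSubmodule (p q : A) :
    p * q - q * p ∈ commutatorSubmodule R A :=
  Submodule.subset_span ⟨(p, q), rfl⟩

lemma mem_commutatorSubmodule_iff_exists_list {x : A} :
    x ∈ commutatorSubmodule R A ↔
      ∃ L : List (A × A), x = (L.map fun pq => pq.1 * pq.2 - pq.2 * pq.1).sum := by
  constructor
  · intro hx
    induction hx using Submodule.span_induction with
    | mem x hx =>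
      obtain ⟨pq, rfl⟩ := hx
      exact ⟨[pq], by simp⟩
    | zero => exact ⟨[], rfl⟩
    | add x y _ _ hx hy =>
      obtain ⟨L, rfl⟩ := hx
      obtain ⟨M, rfl⟩ := hy
      exact ⟨L ++ M, by simp⟩
    | smul c x _ hx =>
      obtain ⟨L, rfl⟩ := hx
      refine ⟨L.map fun pq => (c • pq.1, pq.2), ?_⟩
      simp [List.smul_sum, Function.comp_def, smul_sub]
  · rintro ⟨L, rfl⟩
    refine list_sum_mem fun x hx => ?_
    obtain ⟨pq, -, rfl⟩ := List.mem_map.1 hx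
    exact commutator_mem_commutatorSubmodule pq.1 pq.2

lemma commutatorSubmodule_le_ker {M : Type*} [AddCommGroup M] [Module R M] {τ : A →ₗ[R] M}
    (hτ : ∀ p q, τ (p * q) = τ (q * p)) : commutatorSubmodule R A ≤ LinearMap.ker τ := by
  refine Submodule.span_le.2 ?_
  rintro _ ⟨⟨p, q⟩, rfl⟩
  simp [hτ p q]

end Commutators

lemma trace_map_eq_zero_of_mem_commutatorSubmodule {R A ι : Type*} [CommRing R] [Ring A]
    [Algebra R A] [Fintype ι] [DecidableEq ι] (φ : A →ₐ[R] Matrix ι ι R) {x : A}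
    (hx : x ∈ commutatorSubmodule R A) : (φ x).trace = 0 :=
  commutatorSubmodule_le_ker (τ := Matrix.traceLinearMap ι R R ∘ₗ φ.toLinearMap)
    (fun p q => by simp [Matrix.trace_mul_comm (φ p)]) hx

section CyclicWords

variable (R : Type*) [CommSemiring R] {α : Type*}

/-- The monomial of the free algebra with the given list of letters. -/
noncomputable def freeMonomial (W : List α) : FreeAlgebra R α :=
  (W.map (FreeAlgebra.ι R)).prod

/-- The linear combination of words attached to a combination of cyclic words, each cyclic word
being read from an arbitrarily chosen starting letter; different choices give results that agree
modulo commutators. -/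
noncomputable def ofCyclicWords : (Cycle α →₀ R) →ₗ[R] FreeAlgebra R α :=
  Finsupp.linearCombination R fun C => freeMonomial R C.out

variable {R}

lemma lift_freeMonomial {A : Type*} [Semiring A] [Algebra R A] (X : α → A) (W : List α) :
    FreeAlgebra.lift R X (freeMonomial R W) = (W.map X).prod := by
  simp [freeMonomial, map_list_prod, Function.comp_def]

lemma span_range_freeMonomial :
    Submodule.span R (Set.range (freeMonomial R (α := α))) = ⊤ := by
  have freeMonomial_eq : freeMonomial R (α := α) =
      FreeMonoid.lift (FreeAlgebra.ι R) ∘ FreeMonoid.ofList := by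
    ext W
    simp [freeMonomial, FreeMonoid.lift_apply]
  have range_eq_closure : Set.range (freeMonomial R (α := α)) =
      Submonoid.closure (Set.range (FreeAlgebra.ι R : α → FreeAlgebra R α)) := by
    rw [freeMonomial_eq, FreeMonoid.ofList.surjective.range_comp, ← MonoidHom.coe_mrange,
      FreeMonoid.mrange_lift]
  rw [range_eq_closure, ← Algebra.adjoin_eq_span, FreeAlgebra.adjoin_range_ι,
    Algebra.top_toSubmodule]

lemma trace_lift_ofCyclicWords {ι : Type*} [Fintype ι] [DecidableEq ι] (X : α → Matrix ι ι R)
    (g : Cycle α →₀ R) :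
    (FreeAlgebra.lift R X (ofCyclicWords R g)).trace =
      ∑ C ∈ g.support, g C * ((C.out.map X).prod).trace := by
  simp [ofCyclicWords, Finsupp.linearCombination_apply, Finsupp.sum, lift_freeMonomial,
    Matrix.trace_sum]

lemma coe_cycle_out (C : Cycle α) : (C.out : Cycle α) = C :=
  Quotient.out_eq C

end CyclicWords

section CyclicReduction

variable {R α : Type*} [CommRing R]

lemma freeMonomial_sub_mem_commutatorSubmodule {V W : List α} (h : V ~r W) :
    freeMonomial R V - freeMonomial R W ∈ commutatorSubmodule R (FreeAlgebra R α) := by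
  obtain ⟨n, hn, rfl⟩ := List.isRotated_iff_mod.1 h
  have eq_commutator : freeMonomial R V - freeMonomial R (V.rotate n) =
      freeMonomial R (V.take n) * freeMonomial R (V.drop n) -
        freeMonomial R (V.drop n) * freeMonomial R (V.take n) := by
    rw [List.rotate_eq_drop_append_take hn]
    simp only [freeMonomial, ← List.prod_append, ← List.map_append, List.take_append_drop]
  rw [eq_commutator]
  exact commutator_mem_commutatorSubmodule _ _

lemma exists_sub_ofCyclicWords_mem_commutatorSubmodule (f : FreeAlgebra R α) :
    ∃ g : Cycle α →₀ R, f - ofCyclicWords R g ∈ commutatorSubmodule R (FreeAlgebra R α) := by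
  have hf : f ∈ Submodule.span R (Set.range (freeMonomial R (α := α))) := by
    simp [span_range_freeMonomial]
  induction hf using Submodule.span_induction with
  | mem f hf =>
    obtain ⟨W, rfl⟩ := hf
    have isRotated_out : W ~r (W : Cycle α).out := Cycle.coe_eq_coe.1 (coe_cycle_out _).symm
    refine ⟨Finsupp.single (W : Cycle α) 1, ?_⟩
    simpa [ofCyclicWords] using freeMonomial_sub_mem_commutatorSubmodule isRotated_out
  | zero => exact ⟨0, by simp⟩
  | add f₁ f₂ _ _ h₁ h₂ =>
    obtain ⟨g₁, h₁⟩ := h₁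
    obtain ⟨g₂, h₂⟩ := h₂
    exact ⟨g₁ + g₂, by simpa [add_sub_add_comm] using add_mem h₁ h₂⟩
  | smul c f _ h =>
    obtain ⟨g, h⟩ := h
    exact ⟨c • g, by simpa [smul_sub] using Submodule.smul_mem _ c h⟩

end CyclicReduction

section LabelledCycle

/-- The adjacency matrix of the edges labelled `i` in the directed graph on `ι` which has, for each
vertex `a`, a single outgoing edge `a → σ a`, labelled `ℓ a`. -/
def labelledEdgeMatrix (R : Type*) [Zero R] [One R] {ι α : Type*} [DecidableEq ι] [DecidableEq α]
    (σ : ι → ι) (ℓ : ι → α) (i : α) : Matrix ι ι R :=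
  Matrix.of fun a b => if σ a = b ∧ ℓ a = i then 1 else 0

lemma prod_map_labelledEdgeMatrix_apply {R ι α : Type*} [Semiring R] [Fintype ι] [DecidableEq ι]
    [DecidableEq α] (σ : ι → ι) (ℓ : ι → α) (W : List α) (a b : ι) :
    (W.map (labelledEdgeMatrix R σ ℓ)).prod a b =
      if σ^[W.length] a = b ∧ (List.iterate σ a W.length).map ℓ = W then 1 else 0 := by
  induction W generalizing a with
  | nil => simp [Matrix.one_apply]
  | cons i W ih =>
    rw [List.map_cons, List.prod_cons, Matrix.mul_apply, Finset.sum_eq_single (σ a)]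
    · simp [labelledEdgeMatrix, ih, ← ite_and, and_comm, and_assoc]
    · intro c _ hc
      simp [labelledEdgeMatrix, hc.symm]
    · simp

lemma coe_finRotate_iterate {n : ℕ} (a : Fin n) (k : ℕ) :
    ((finRotate n)^[k] a : ℕ) = (a + k) % n := by
  have := a.neZero
  induction k with
  | zero => simp [Nat.mod_eq_of_lt a.2]
  | succ k ih =>
    rw [Function.iterate_succ_apply', finRotate_apply, Fin.val_add, ih]
    simp [add_assoc]

lemma finRotate_iterate_eq_self_iff {n : ℕ} (a : Fin n) (k : ℕ) :
    (finRotate n)^[k] a = a ↔ n ∣ k := by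
  rw [Fin.ext_iff, coe_finRotate_iterate]
  nth_rw 2 [← Nat.mod_eq_of_lt a.2]
  exact Nat.add_modEq_left_iff

lemma map_get_iterate_finRotate {α : Type*} (V : List α) (a : Fin V.length) :
    (List.iterate (finRotate V.length) a V.length).map V.get = V.rotate a := by
  refine List.ext_getElem (by simp) fun j _ _ => ?_
  simp [List.getElem_rotate, coe_finRotate_iterate, add_comm]

lemma trace_prod_map_labelledEdgeMatrix_finRotate {R α : Type*} [Semiring R] [DecidableEq α]
    {V W : List α} (h_pos : 0 < W.length) (h_le : W.length ≤ V.length) :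
    ((W.map (labelledEdgeMatrix R (finRotate V.length) V.get)).prod).trace =
      (Finset.univ.filter fun a : Fin V.length => V.rotate a = W).card := by
  have dvd_iff : V.length ∣ W.length ↔ W.length = V.length :=
    ⟨fun h => h_le.antisymm (Nat.le_of_dvd h_pos h), fun h => h ▸ dvd_rfl⟩
  have closed_walk_iff (a : Fin V.length) :
      ((finRotate V.length)^[W.length] a = a ∧
        (List.iterate (finRotate V.length) a W.length).map V.get = W) ↔ V.rotate a = W := by
    rw [finRotate_iterate_eq_self_iff, dvd_iff, ← map_get_iterate_finRotate]
    constructor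
    · rintro ⟨h_len, h_word⟩
      rwa [h_len] at h_word
    · intro h_word
      have h_len : W.length = V.length := by simp [← h_word]
      exact ⟨h_len, by rwa [h_len]⟩
  simp [Matrix.trace, prod_map_labelledEdgeMatrix_apply, closed_walk_iff]

end LabelledCycle

section Independence

variable {R α : Type*} [CommSemiring R] {g : Cycle α →₀ R}

lemma apply_nil_eq_zero_of_trace_eq_zero
    (h : (FreeAlgebra.lift R (0 : α → Matrix (Fin 1) (Fin 1) R) (ofCyclicWords R g)).trace = 0) :
    g Cycle.nil = 0 := by
  have out_nil : (Cycle.nil : Cycle α).out = [] := by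
    rw [← Cycle.coe_eq_nil, coe_cycle_out]
  rw [trace_lift_ofCyclicWords, Finset.sum_eq_single Cycle.nil] at h
  · simpa [out_nil] using h
  · intro C _ hC
    have out_ne_nil : C.out ≠ [] := by rwa [Ne, ← Cycle.coe_eq_nil, coe_cycle_out]
    simp [Pi.zero_def, out_ne_nil]
  · simp +contextual

lemma trace_lift_ofCyclicWords_of_forall_length_le [DecidableEq α] {C : Cycle α}
    (hC : C ∈ g.support) (length_pos : ∀ D ∈ g.support, 0 < D.out.length)
    (length_le : ∀ D ∈ g.support, D.out.length ≤ C.out.length) :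
    (FreeAlgebra.lift R (labelledEdgeMatrix R (finRotate C.out.length) C.out.get)
      (ofCyclicWords R g)).trace =
        (Finset.univ.filter fun a : Fin C.out.length => C.out.rotate a = C.out).card • g C := by
  rw [trace_lift_ofCyclicWords, Finset.sum_eq_single_of_mem C hC]
  · rw [trace_prod_map_labelledEdgeMatrix_finRotate (length_pos C hC) le_rfl, nsmul_eq_mul,
      Nat.cast_comm]
  · intro D hD hDC
    have rotate_ne (a : Fin C.out.length) : C.out.rotate a ≠ D.out := fun h_rot => hDC <| by
      rw [← coe_cycle_out D, ← coe_cycle_out C, Cycle.coe_eq_coe]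
      exact List.IsRotated.symm ⟨a, h_rot⟩
    simp [trace_prod_map_labelledEdgeMatrix_finRotate (length_pos D hD) (length_le D hD),
      rotate_ne]

lemma eq_zero_of_forall_trace_eq_zero [IsAddTorsionFree R]
    (h : ∀ n : ℕ, 1 ≤ n → ∀ X : α → Matrix (Fin n) (Fin n) R,
      (FreeAlgebra.lift R X (ofCyclicWords R g)).trace = 0) :
    g = 0 := by
  classical
  have length_pos (D : Cycle α) (hD : D ∈ g.support) : 0 < D.out.length := by
    rw [List.length_pos_iff, Ne, ← Cycle.coe_eq_nil, coe_cycle_out]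
    rintro rfl
    exact Finsupp.mem_support_iff.1 hD (apply_nil_eq_zero_of_trace_eq_zero (h 1 le_rfl 0))
  by_contra hg
  obtain ⟨C, hC, length_le⟩ :=
    g.support.exists_max_image (fun D => D.out.length) (Finsupp.support_nonempty_iff.2 hg)
  have card_smul_eq_zero :=
    (trace_lift_ofCyclicWords_of_forall_length_le hC length_pos length_le).symm.trans
      (h _ (length_pos C hC) _)
  have card_ne_zero :
      (Finset.univ.filter fun a : Fin C.out.length => C.out.rotate a = C.out).card ≠ 0 :=
    Finset.card_ne_zero_of_mem (a := ⟨0, length_pos C hC⟩) (by simp)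
  exact Finsupp.mem_support_iff.1 hC ((smul_eq_zero.1 card_smul_eq_zero).resolve_left card_ne_zero)

end Independence

theorem trace_zero_iff_sum_commutators_general {R : Type*} [CommRing R] [IsAddTorsionFree R]
    {α : Type*} (f : FreeAlgebra R α) :
    (∀ n : ℕ, 1 ≤ n → ∀ X : α → Matrix (Fin n) (Fin n) R,
        (FreeAlgebra.lift R X f).trace = 0) ↔
      ∃ L : List (FreeAlgebra R α × FreeAlgebra R α),
        f = (L.map fun pq => pq.1 * pq.2 - pq.2 * pq.1).sum := by
  rw [← mem_commutatorSubmodule_iff_exists_list (R := R)]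
  refine ⟨fun h => ?_, fun hf n _ X => trace_map_eq_zero_of_mem_commutatorSubmodule _ hf⟩
  obtain ⟨g, hg⟩ := exists_sub_ofCyclicWords_mem_commutatorSubmodule f
  have trace_g (n : ℕ) (hn : 1 ≤ n) (X : α → Matrix (Fin n) (Fin n) R) :
      (FreeAlgebra.lift R X (ofCyclicWords R g)).trace = 0 := by
    simpa [h n hn X] using
      trace_map_eq_zero_of_mem_commutatorSubmodule (FreeAlgebra.lift R X) hg
  simpa [eq_zero_of_forall_trace_eq_zero trace_g] using hg

/-- A noncommutative polynomial has trace zero at every matrix tuple of every size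
if and only if it is a finite sum of commutators. -/
theorem trace_zero_iff_sum_commutators
    (k : Type*) [Field k] [IsAlgClosed k] [CharZero k]
    (d : ℕ) (hd : 1 ≤ d) (f : FreeAlgebra k (Fin d)) :
    (∀ (n : ℕ), 1 ≤ n → ∀ X : Fin d → Matrix (Fin n) (Fin n) k,
        (ncEval X f).trace = 0) ↔
      ∃ L : List (FreeAlgebra k (Fin d) × FreeAlgebra k (Fin d)),
        f = (L.map fun pq => pq.1 * pq.2 - pq.2 * pq.1).sum :=
  trace_zero_iff_sum_commutators_general f
end

section
/- Let f_1,…,f_ℓ ∈ k⟨x_1,…,x_d⟩. Then f_1,…,f_ℓ are linearly dependent over k if and only if for every n ≥ 1, every X ∈ M_n(k)^d and every vector v ∈ k^n, the vectors f_1(X)v,…,f_ℓ(X)v are linearly dependent in k^n. -/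
/-!
The substance is that linearly independent `f j` admit a matrix point `X` and a vector `v` with
linearly independent `f j (X) v`. Left multiplication by a variable sends a word outside a
suffix-closed set `W` to a word outside `W`, so it descends to an operator on the span of `W`.
Evaluated at these operators, a polynomial maps the truncation of `1` to its own truncation,
and truncation loses nothing on the `f j` once `W` contains all words occurring in them.
Such a `W` may be taken finite, and the operators are then matrices.
-/

open FreeAlgebra Module
open scoped Matrix

section Evaluation

variable {R α M : Type*} [CommSemiring R] [AddCommMonoid M] [Module R M]

theorem map_mul_eq_lift_apply {T : α → End R M} {P : FreeAlgebra R α →ₗ[R] M}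
    (hP : ∀ i a, P (ι R i * a) = T i (P a)) (a b : FreeAlgebra R α) :
    P (a * b) = lift R T a (P b) := by
  induction a using FreeAlgebra.induction generalizing b with
  | grade0 r => simp only [← Algebra.smul_def, map_smul, AlgHom.commutes, algebraMap_end_apply]
  | grade1 i => rw [hP, lift_ι_apply]
  | mul a₁ a₂ ih₁ ih₂ => rw [mul_assoc, ih₁, ih₂, map_mul, End.mul_apply]
  | add a₁ a₂ ih₁ ih₂ => rw [add_mul, map_add, ih₁, ih₂, map_add, LinearMap.add_apply]

variable {n : Type*} [Fintype n] [DecidableEq n]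

theorem lift_toMatrix_mulVec_equivFun (b : Basis n R M) (T : α → End R M)
    (a : FreeAlgebra R α) (m : M) :
    lift R (fun i => LinearMap.toMatrixAlgEquiv b (T i)) a *ᵥ b.equivFun m =
      b.equivFun (lift R T a m) := by
  have lift_comm : lift R (fun i => LinearMap.toMatrixAlgEquiv b (T i)) =
      (LinearMap.toMatrixAlgEquiv b).toAlgHom.comp (lift R T) := by
    ext1
    funext i
    simp
  rw [lift_comm]
  exact LinearMap.toMatrix_mulVec_repr b b (lift R T a) m

theorem linearIndependent_of_lift_mulVec {κ : Type*} {f : κ → FreeAlgebra R α}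
    (X : α → Matrix n n R) (v : n → R)
    (h : LinearIndependent R fun j => lift R X (f j) *ᵥ v) : LinearIndependent R f :=
  .of_comp ((Matrix.mulVecBilin R R).flip v ∘ₗ (lift R X).toLinearMap) h

end Evaluation

section SuffixClosed

variable {α : Type*}

/-- Suffix-closed sets of words, the index sets of the truncations of the free algebra. Removing
one letter at a time suffices. -/
def IsSuffixClosed (W : Set (FreeMonoid α)) : Prop :=
  ∀ ⦃i w⦄, FreeMonoid.of i * w ∈ W → w ∈ W

theorem exists_finite_isSuffixClosed_superset {S : Set (FreeMonoid α)} (hS : S.Finite) :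
    ∃ W, S ⊆ W ∧ W.Finite ∧ IsSuffixClosed W := by
  refine ⟨⋃ s ∈ S, {w | w.toList <:+ s.toList},
    fun s hs => Set.mem_biUnion hs List.suffix_rfl, hS.biUnion fun s _ => ?_, fun i w hw => ?_⟩
  · simp only [← List.mem_tails]
    exact (List.finite_toSet s.toList.tails).preimage FreeMonoid.toList.injective.injOn
  · obtain ⟨s, hs, hsuffix⟩ := Set.mem_iUnion₂.1 hw
    exact Set.mem_biUnion hs ((List.suffix_cons i w.toList).trans hsuffix)

end SuffixClosed

section Truncation

variable {R α : Type*} [CommSemiring R]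

theorem ι_mul_basisFreeMonoid (i : α) (w : FreeMonoid α) :
    ι R i * basisFreeMonoid R α w = basisFreeMonoid R α (FreeMonoid.of i * w) := by
  simp [basisFreeMonoid, equivMonoidAlgebraFreeMonoid]

variable (R) in
/-- Truncation of a noncommutative polynomial to the words in `W`, discarding all other
monomials. -/
noncomputable def truncation (W : Set (FreeMonoid α)) : FreeAlgebra R α →ₗ[R] W →₀ R :=
  Finsupp.lsubtypeDomain W ∘ₗ (basisFreeMonoid R α).repr.toLinearMap

variable (R) in
/-- The compression to the span of the words in `W` of left multiplication by the variable `i`: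
regard an element of the span as a polynomial, multiply, truncate. -/
noncomputable def truncatedMulLeft (W : Set (FreeMonoid α)) (i : α) : End R (W →₀ R) :=
  truncation R W ∘ₗ LinearMap.mulLeft R (ι R i) ∘ₗ
    Finsupp.linearCombination R fun w : W => basisFreeMonoid R α w

variable {W : Set (FreeMonoid α)}

theorem truncation_basisFreeMonoid_of_mem {w : FreeMonoid α} (hw : w ∈ W) :
    truncation R W (basisFreeMonoid R α w) = Finsupp.single ⟨w, hw⟩ 1 := by
  classical
  ext u
  simp [truncation, Finsupp.lsubtypeDomain_apply, Finsupp.single_apply, Subtype.ext_iff]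

theorem truncation_basisFreeMonoid_of_notMem {w : FreeMonoid α} (hw : w ∉ W) :
    truncation R W (basisFreeMonoid R α w) = 0 := by
  ext u
  simp [truncation, Finsupp.lsubtypeDomain_apply, ne_of_mem_of_not_mem u.2 hw]

theorem truncation_ι_mul (hW : IsSuffixClosed W) (i : α) (a : FreeAlgebra R α) :
    truncation R W (ι R i * a) = truncatedMulLeft R W i (truncation R W a) := by
  suffices truncation R W ∘ₗ LinearMap.mulLeft R (ι R i) =
      truncatedMulLeft R W i ∘ₗ truncation R W from LinearMap.congr_fun this a
  refine (basisFreeMonoid R α).ext fun w => ?_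
  by_cases hw : w ∈ W
  · simp [truncatedMulLeft, truncation_basisFreeMonoid_of_mem hw]
  · have hiw : FreeMonoid.of i * w ∉ W := fun h => hw (hW h)
    simp [ι_mul_basisFreeMonoid, truncation_basisFreeMonoid_of_notMem, hw, hiw]

theorem lift_truncatedMulLeft_truncation_one (hW : IsSuffixClosed W) (a : FreeAlgebra R α) :
    lift R (truncatedMulLeft R W) a (truncation R W 1) = truncation R W a := by
  rw [← map_mul_eq_lift_apply (truncation_ι_mul hW), mul_one]

theorem injOn_truncation (W : Set (FreeMonoid α)) :
    Set.InjOn (truncation R W)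
      ((Finsupp.supported R R W).comap (basisFreeMonoid R α).repr.toLinearMap) :=
  fun _ ha _ hb hab => (basisFreeMonoid R α).repr.injective <|
    (Finsupp.subtypeDomain_eq_iff (fun _ hw => ha hw) (fun _ hw => hb hw)).1 hab

theorem linearIndependent_truncation {κ : Type*} {f : κ → FreeAlgebra R α}
    (hf : LinearIndependent R f)
    (hW : ∀ j, ↑((basisFreeMonoid R α).repr (f j)).support ⊆ W) :
    LinearIndependent R fun j => truncation R W (f j) :=
  hf.map_injOn (truncation R W) <| (injOn_truncation W).mono <|
    Submodule.span_le.2 <| Set.range_subset_iff.2 hW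

end Truncation

theorem exists_matrix_linearIndependent_lift_mulVec {R α κ : Type*} [CommSemiring R] [Finite κ]
    {f : κ → FreeAlgebra R α} (hf : LinearIndependent R f) :
    ∃ (n : ℕ) (_ : 1 ≤ n) (X : α → Matrix (Fin n) (Fin n) R) (v : Fin n → R),
      LinearIndependent R fun j => lift R X (f j) *ᵥ v := by
  obtain ⟨W, hSW, hWfin, hW⟩ := exists_finite_isSuffixClosed_superset <|
    (Set.finite_iUnion fun j => ((basisFreeMonoid R α).repr (f j)).support.finite_toSet).insert 1
  obtain ⟨hW_one, hfW⟩ := Set.insert_subset_iff.1 hSW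
  let _ : Fintype W := hWfin.fintype
  have : Nonempty W := ⟨⟨1, hW_one⟩⟩
  let b : Basis (Fin (Fintype.card W)) R (W →₀ R) :=
    Finsupp.basisSingleOne.reindex (Fintype.equivFin W)
  refine ⟨Fintype.card W, Fintype.card_pos,
    fun i => LinearMap.toMatrixAlgEquiv b (truncatedMulLeft R W i),
    b.equivFun (truncation R W 1), ?_⟩
  simp only [lift_toMatrix_mulVec_equivFun, lift_truncatedMulLeft_truncation_one hW]
  exact (linearIndependent_truncation hf (Set.iUnion_subset_iff.1 hfW)).map_injOn
    b.equivFun.toLinearMap b.equivFun.injective.injOn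

theorem local_global_linear_dependence_general {R α κ : Type*} [CommSemiring R] [Finite κ]
    (f : κ → FreeAlgebra R α) :
    ¬ LinearIndependent R f ↔
      ∀ n : ℕ, 1 ≤ n → ∀ (X : α → Matrix (Fin n) (Fin n) R) (v : Fin n → R),
        ¬ LinearIndependent R fun j => lift R X (f j) *ᵥ v := by
  refine ⟨fun hf n _ X v h => hf (linearIndependent_of_lift_mulVec X v h), fun h hf => ?_⟩
  obtain ⟨n, hn, X, v, hXv⟩ := exists_matrix_linearIndependent_lift_mulVec hf
  exact h n hn X v hXv

/-- Brešar–Klep local-global principle for linear dependence: `f_1, …, f_ℓ` are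
linearly dependent over `k` if and only if the vectors `f_1(X)v, …, f_ℓ(X)v` are
linearly dependent for every matrix tuple `X` and every vector `v`. -/
theorem local_global_linear_dependence
    (k : Type*) [Field k] [IsAlgClosed k] [CharZero k]
    (d ℓ : ℕ) (hd : 1 ≤ d) (f : Fin ℓ → FreeAlgebra k (Fin d)) :
    ¬ LinearIndependent k f ↔
      (∀ (n : ℕ), 1 ≤ n → ∀ X : Fin d → Matrix (Fin n) (Fin n) k,
        ∀ v : Fin n → k,
        ¬ LinearIndependent k (fun j => (ncEval X (f j)).mulVec v)) := by
  exact local_global_linear_dependence_general f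
end
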